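/- Lemma 2.3 (Angenent-type zero number lemma): Let v be a classical (smooth) solution, not identically zero, of the one-dimensional parabolic equation v_t = a(x,t) v_xx + b(x,t) v_x + c(x,t) v on [α,β] × (t0,t1), where a, b, c are smooth and bounded, a(x,t) ≥ λ for some constant λ > 0, and the boundary condition holds: at each endpoint x ∈ {α, β}, either v(x,t) = 0 for all t ∈ (t0,t1) or v(x,t) ≠ 0 for all t ∈ (t0,t1). Then Z(v(·,t)) := #{x ∈ [α,β] : v(x,t) = 0} is finite and monotone non-increasing in t on (t0,t1). Moreover, if v(x0,t*) = 0 and ∂_x v(x0,t*) = 0 at some interior point x0 ∈ (α,β) and t* ∈ (t0,t1), then Z(v(·,t)) < Z(v(·,s)) for all t0 < s < t* < t < t1. -/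

import Mathlib

open Set Filter

/-!
Near a zero `p` of finite order `k` in `x`, the equation forces `v` to agree, to leading parabolic
order, with a multiple of the heat polynomial `h_k(x - p.1, a(p) (t - p.2))`. For negative times
`h_k` changes sign, and at least twice if `k ≥ 2`, so zeros persist and multiple zeros split
backward in time. For positive times all coefficients of `h_k` are nonnegative, so that, according
to the parity of `k`, `v` or `∂ₓ v` does not vanish near `p` for later times and at most one zero
is left. Compactness turns these local statements into finiteness, monotonicity and the strict
drop.

Zeros have finite order by backward uniqueness. If `v` is flat at `p`, multiply it by a factor that
makes it vanish on the boundary and consider its mass weighted by a backward heat kernel with pole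
at `p`. Its frequency function is almost monotone, so a nonzero mass decays at most polynomially
as the pole is approached, while flatness makes it decay faster than any power. Hence `v`
vanishes just before `p`, and a connectedness argument in `t`, with the maximum principle
giving uniqueness forward in time, yields `v = 0`.
-/

namespace ZeroNumber

open scoped ContDiff Topology

section DirectionalDerivative

variable {E : Type*} [NormedAddCommGroup E] [NormedSpace ℝ E]

/-- A set on which smooth functions have well-defined and commuting derivatives up to the
boundary. -/
structure IsSmoothRegion (Q : Set E) : Prop where
  uniqueDiffOn : UniqueDiffOn ℝ Q
  subset_closure_interior : Q ⊆ closure (interior Q)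

/-- The derivative of `f` in the direction `e`, taken within `Q` so that it is one-sided on the
boundary of `Q`. -/
noncomputable def dirDeriv (Q : Set E) (e : E) (f : E → ℝ) (p : E) : ℝ :=
  fderivWithin ℝ f Q p e

variable {Q : Set E} {e e' p : E} {f g : E → ℝ}

theorem differentiableWithinAt_of_contDiffOn (hf : ContDiffOn ℝ ∞ f Q) (hp : p ∈ Q) :
    DifferentiableWithinAt ℝ f Q p :=
  hf.differentiableOn (by simp) p hp

theorem dirDeriv_congr (h : EqOn f g Q) : EqOn (dirDeriv Q e f) (dirDeriv Q e g) Q :=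
  fun p hp => by simp only [dirDeriv, fderivWithin_congr h (h hp)]

theorem dirDeriv_const (k : ℝ) : dirDeriv Q e (fun _ => k) = 0 := by
  ext p
  simp [dirDeriv]

namespace IsSmoothRegion

variable (hQ : IsSmoothRegion Q)
include hQ

theorem contDiffOn_dirDeriv (hf : ContDiffOn ℝ ∞ f Q) : ContDiffOn ℝ ∞ (dirDeriv Q e f) Q :=
  (hf.fderivWithin hQ.uniqueDiffOn le_rfl).clm_apply contDiffOn_const

theorem dirDeriv_add (hf : ContDiffOn ℝ ∞ f Q) (hg : ContDiffOn ℝ ∞ g Q) :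
    EqOn (dirDeriv Q e (f + g)) (dirDeriv Q e f + dirDeriv Q e g) Q := fun p hp => by
  simp [dirDeriv, fderivWithin_add (hQ.uniqueDiffOn p hp)
    (differentiableWithinAt_of_contDiffOn hf hp) (differentiableWithinAt_of_contDiffOn hg hp)]

theorem dirDeriv_sub (hf : ContDiffOn ℝ ∞ f Q) (hg : ContDiffOn ℝ ∞ g Q) :
    EqOn (dirDeriv Q e (f - g)) (dirDeriv Q e f - dirDeriv Q e g) Q := fun p hp => by
  simp [dirDeriv, fderivWithin_sub (hQ.uniqueDiffOn p hp)
    (differentiableWithinAt_of_contDiffOn hf hp) (differentiableWithinAt_of_contDiffOn hg hp)]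

theorem dirDeriv_mul (hf : ContDiffOn ℝ ∞ f Q) (hg : ContDiffOn ℝ ∞ g Q) :
    EqOn (dirDeriv Q e (f * g)) (f * dirDeriv Q e g + dirDeriv Q e f * g) Q := fun p hp => by
  simp [dirDeriv, fderivWithin_mul (hQ.uniqueDiffOn p hp)
    (differentiableWithinAt_of_contDiffOn hf hp) (differentiableWithinAt_of_contDiffOn hg hp),
    mul_comm]

theorem dirDeriv_const_mul (k : ℝ) (hf : ContDiffOn ℝ ∞ f Q) :
    EqOn (dirDeriv Q e ((fun _ => k) * f)) ((fun _ => k) * dirDeriv Q e f) Q := fun p hp => by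
  simp [hQ.dirDeriv_mul contDiffOn_const hf hp, dirDeriv_const]

theorem dirDeriv_comm (hf : ContDiffOn ℝ ∞ f Q) :
    EqOn (dirDeriv Q e (dirDeriv Q e' f)) (dirDeriv Q e' (dirDeriv Q e f)) Q := by
  intro p hp
  have hsymm : IsSymmSndFDerivWithinAt ℝ f Q p :=
    (hf p hp).isSymmSndFDerivWithinAt
      (by rw [minSmoothness_of_isRCLikeNormedField]; exact WithTop.coe_le_coe.2 le_top)
      hQ.uniqueDiffOn (hQ.subset_closure_interior hp) hp
  have hdiff : DifferentiableWithinAt ℝ (fderivWithin ℝ f Q) Q p :=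
    (hf.fderivWithin hQ.uniqueDiffOn (m := ∞) le_rfl).differentiableOn (by simp) p hp
  have second (d d' : E) :
      dirDeriv Q d (dirDeriv Q d' f) p = fderivWithin ℝ (fderivWithin ℝ f Q) Q p d d' := by
    change fderivWithin ℝ (fun q => fderivWithin ℝ f Q q d') Q p d = _
    simp [fderivWithin_clm_apply (hQ.uniqueDiffOn p hp) hdiff (differentiableWithinAt_const d')]
  rw [second, second]
  exact hsymm e e'

end IsSmoothRegion

end DirectionalDerivative

section VanishingOrder

/-- The space derivative `∂ₓ` within `Q`. -/
noncomputable abbrev dX (Q : Set (ℝ × ℝ)) : (ℝ × ℝ → ℝ) → ℝ × ℝ → ℝ := dirDeriv Q (1, 0)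

/-- The time derivative `∂ₜ` within `Q`. -/
noncomputable abbrev dT (Q : Set (ℝ × ℝ)) : (ℝ × ℝ → ℝ) → ℝ × ℝ → ℝ := dirDeriv Q (0, 1)

variable {Q : Set (ℝ × ℝ)} {p : ℝ × ℝ} {m : ℕ} {f g : ℝ × ℝ → ℝ}

/-- `f` vanishes at `p` to parabolic order `m`: all derivatives `∂ₓⁱ ∂ₜʲ f` with `i + 2 j < m`
vanish at `p`. A time derivative counts twice; the subtraction truncates, so that for `m = 0` the
condition on `∂ₜ f` is empty. -/
def VanishesToOrder (Q : Set (ℝ × ℝ)) (p : ℝ × ℝ) : ℕ → (ℝ × ℝ → ℝ) → Prop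
  | 0, _ => True
  | m + 1, f => f p = 0 ∧ VanishesToOrder Q p m (dX Q f) ∧ VanishesToOrder Q p (m - 1) (dT Q f)

theorem vanishesToOrder_zero : VanishesToOrder Q p 0 f := by
  rw [VanishesToOrder]; trivial

theorem vanishesToOrder_succ_iff : VanishesToOrder Q p (m + 1) f ↔
    f p = 0 ∧ VanishesToOrder Q p m (dX Q f) ∧ VanishesToOrder Q p (m - 1) (dT Q f) := by
  rw [VanishesToOrder]

namespace VanishesToOrder

theorem dX_pred (hf : VanishesToOrder Q p m f) : VanishesToOrder Q p (m - 1) (dX Q f) := by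
  cases m with
  | zero => exact vanishesToOrder_zero
  | succ m => exact (vanishesToOrder_succ_iff.1 hf).2.1

theorem congr (hp : p ∈ Q) (h : EqOn f g Q) (hf : VanishesToOrder Q p m f) :
    VanishesToOrder Q p m g := by
  induction m using Nat.strong_induction_on generalizing f g with
  | _ m ih =>
    cases m with
    | zero => exact vanishesToOrder_zero
    | succ m =>
      obtain ⟨h0, hX, hT⟩ := vanishesToOrder_succ_iff.1 hf
      exact vanishesToOrder_succ_iff.2 ⟨h hp ▸ h0, ih m (by omega) (dirDeriv_congr h) hX,
        ih (m - 1) (by omega) (dirDeriv_congr h) hT⟩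

theorem pred (hf : VanishesToOrder Q p m f) : VanishesToOrder Q p (m - 1) f := by
  induction m using Nat.strong_induction_on generalizing f with
  | _ m ih =>
    match m with
    | 0 | 1 => exact vanishesToOrder_zero
    | m + 2 =>
      obtain ⟨h0, hX, hT⟩ := vanishesToOrder_succ_iff.1 hf
      exact vanishesToOrder_succ_iff.2 ⟨h0, ih (m + 1) (by omega) hX, ih m (by omega) hT⟩

variable (hQ : IsSmoothRegion Q) (hp : p ∈ Q)
include hQ hp

theorem add (sf : ContDiffOn ℝ ∞ f Q) (sg : ContDiffOn ℝ ∞ g Q) (hf : VanishesToOrder Q p m f)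
    (hg : VanishesToOrder Q p m g) : VanishesToOrder Q p m (f + g) := by
  induction m using Nat.strong_induction_on generalizing f g with
  | _ m ih =>
    cases m with
    | zero => exact vanishesToOrder_zero
    | succ m =>
      obtain ⟨hf0, hfX, hfT⟩ := vanishesToOrder_succ_iff.1 hf
      obtain ⟨hg0, hgX, hgT⟩ := vanishesToOrder_succ_iff.1 hg
      refine vanishesToOrder_succ_iff.2 ⟨by simp [hf0, hg0], ?_, ?_⟩
      · exact (ih m (by omega) (hQ.contDiffOn_dirDeriv sf) (hQ.contDiffOn_dirDeriv sg)
          hfX hgX).congr hp (hQ.dirDeriv_add sf sg).symm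
      · exact (ih (m - 1) (by omega) (hQ.contDiffOn_dirDeriv sf) (hQ.contDiffOn_dirDeriv sg)
          hfT hgT).congr hp (hQ.dirDeriv_add sf sg).symm

theorem dirDeriv_mul {e : ℝ × ℝ} (sf : ContDiffOn ℝ ∞ f Q) (sg : ContDiffOn ℝ ∞ g Q)
    (h₁ : VanishesToOrder Q p m (f * dirDeriv Q e g))
    (h₂ : VanishesToOrder Q p m (dirDeriv Q e f * g)) :
    VanishesToOrder Q p m (dirDeriv Q e (f * g)) :=
  (add hQ hp (sf.mul (hQ.contDiffOn_dirDeriv sg)) ((hQ.contDiffOn_dirDeriv sf).mul sg)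
    h₁ h₂).congr hp (hQ.dirDeriv_mul sf sg).symm

theorem mul_left (sf : ContDiffOn ℝ ∞ f Q) (sg : ContDiffOn ℝ ∞ g Q)
    (hg : VanishesToOrder Q p m g) : VanishesToOrder Q p m (f * g) := by
  induction m using Nat.strong_induction_on generalizing f g with
  | _ m ih =>
    cases m with
    | zero => exact vanishesToOrder_zero
    | succ m =>
      obtain ⟨h0, hX, hT⟩ := vanishesToOrder_succ_iff.1 hg
      refine vanishesToOrder_succ_iff.2 ⟨by simp [h0], ?_, ?_⟩
      · exact dirDeriv_mul hQ hp sf sg (ih m (by omega) sf (hQ.contDiffOn_dirDeriv sg) hX)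
          (ih m (by omega) (hQ.contDiffOn_dirDeriv sf) sg hg.pred)
      · exact dirDeriv_mul hQ hp sf sg (ih (m - 1) (by omega) sf (hQ.contDiffOn_dirDeriv sg) hT)
          (ih (m - 1) (by omega) (hQ.contDiffOn_dirDeriv sf) sg hg.pred.pred)

theorem mul_of_eq_zero (sf : ContDiffOn ℝ ∞ f Q) (sg : ContDiffOn ℝ ∞ g Q) (hf : f p = 0)
    (hg : VanishesToOrder Q p (m - 1) g) : VanishesToOrder Q p m (f * g) := by
  induction m using Nat.strong_induction_on generalizing f g with
  | _ m ih =>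
    match m, hg with
    | 0, _ => exact vanishesToOrder_zero
    | 1, _ =>
      refine (vanishesToOrder_succ_iff (m := 0)).2 ⟨?_, vanishesToOrder_zero, vanishesToOrder_zero⟩
      simp [hf]
    | m + 2, hg =>
      obtain ⟨-, hX, hT⟩ := vanishesToOrder_succ_iff.1 hg
      refine vanishesToOrder_succ_iff.2 ⟨by simp [hf], ?_, ?_⟩
      · exact dirDeriv_mul hQ hp sf sg
          (ih (m + 1) (by omega) sf (hQ.contDiffOn_dirDeriv sg) hf hX)
          (mul_left hQ hp (hQ.contDiffOn_dirDeriv sf) sg hg)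
      · exact dirDeriv_mul hQ hp sf sg
          (ih m (by omega) sf (hQ.contDiffOn_dirDeriv sg) hf hT)
          (mul_left hQ hp (hQ.contDiffOn_dirDeriv sf) sg hg.pred)

theorem succ_of_heat {u : ℝ × ℝ → ℝ} (κ : ℝ) (su : ContDiffOn ℝ ∞ u Q) (sg : ContDiffOn ℝ ∞ g Q)
    (heat : EqOn (dT Q u) ((fun _ => κ) * dX Q (dX Q u) + g) Q)
    (hu : VanishesToOrder Q p m u) (hg : VanishesToOrder Q p (m - 1) g)
    (h0 : (dX Q)^[m] u p = 0) : VanishesToOrder Q p (m + 1) u := by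
  induction m generalizing u g with
  | zero => exact vanishesToOrder_succ_iff.2 ⟨h0, vanishesToOrder_zero, vanishesToOrder_zero⟩
  | succ m ih =>
    have suX : ContDiffOn ℝ ∞ (dX Q u) Q := hQ.contDiffOn_dirDeriv su
    have suXX : ContDiffOn ℝ ∞ (dX Q (dX Q u)) Q := hQ.contDiffOn_dirDeriv suX
    have heatX : EqOn (dT Q (dX Q u)) ((fun _ => κ) * dX Q (dX Q (dX Q u)) + dX Q g) Q :=
      (hQ.dirDeriv_comm su).trans <| (dirDeriv_congr heat).trans <|
        (hQ.dirDeriv_add (contDiffOn_const.mul suXX) sg).trans fun q hq =>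
          congrArg (· + dX Q g q) (hQ.dirDeriv_const_mul κ suXX hq)
    obtain ⟨hu0, huX, -⟩ := vanishesToOrder_succ_iff.1 hu
    have hX : VanishesToOrder Q p (m + 1) (dX Q u) :=
      ih suX (hQ.contDiffOn_dirDeriv sg) heatX huX hg.dX_pred h0
    refine vanishesToOrder_succ_iff.2 ⟨hu0, hX, ?_⟩
    exact (add hQ hp (contDiffOn_const.mul suXX) sg
      (mul_left hQ hp contDiffOn_const suXX hX.dX_pred) hg).congr hp heat.symm

end VanishesToOrder

end VanishingOrder

section ParabolicEquation

/-- `v` is a classical solution, smooth up to the boundary, of the linear parabolic equation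
`∂ₜ v = a ∂ₓₓ v + b ∂ₓ v + c v` on `Q`. -/
structure IsParabolicSolution (Q : Set (ℝ × ℝ)) (a b c v : ℝ × ℝ → ℝ) : Prop where
  contDiffOn_a : ContDiffOn ℝ ∞ a Q
  contDiffOn_b : ContDiffOn ℝ ∞ b Q
  contDiffOn_c : ContDiffOn ℝ ∞ c Q
  contDiffOn : ContDiffOn ℝ ∞ v Q
  pos : ∀ q ∈ Q, 0 < a q
  eqn : EqOn (dT Q v) (a * dX Q (dX Q v) + b * dX Q v + c * v) Q

/-- What is left of the equation `∂ₜ v = a ∂ₓₓ v + b ∂ₓ v + c v` when it is read as a heat equation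
`∂ₜ v = κ ∂ₓₓ v + g` with constant diffusion `κ`. -/
noncomputable def heatForcing (Q : Set (ℝ × ℝ)) (κ : ℝ) (a b c v : ℝ × ℝ → ℝ) : ℝ × ℝ → ℝ :=
  (a - fun _ => κ) * dX Q (dX Q v) + (b * dX Q v + c * v)

namespace IsParabolicSolution

variable {Q : Set (ℝ × ℝ)} {a b c v : ℝ × ℝ → ℝ} {p : ℝ × ℝ} {m : ℕ}
  (h : IsParabolicSolution Q a b c v)
include h

theorem heat_eqn (κ : ℝ) :
    EqOn (dT Q v) ((fun _ => κ) * dX Q (dX Q v) + heatForcing Q κ a b c v) Q := by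
  intro q hq
  rw [h.eqn hq]
  simp only [heatForcing, Pi.add_apply, Pi.sub_apply, Pi.mul_apply]
  ring

variable (hQ : IsSmoothRegion Q)
include hQ

theorem contDiffOn_heatForcing (κ : ℝ) : ContDiffOn ℝ ∞ (heatForcing Q κ a b c v) Q :=
  have hX := hQ.contDiffOn_dirDeriv (e := (1, 0)) h.contDiffOn
  ((h.contDiffOn_a.sub contDiffOn_const).mul (hQ.contDiffOn_dirDeriv hX)).add
    ((h.contDiffOn_b.mul hX).add (h.contDiffOn_c.mul h.contDiffOn))

variable (hp : p ∈ Q)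
include hp

theorem vanishesToOrder_heatForcing (hv : VanishesToOrder Q p m v) :
    VanishesToOrder Q p (m - 1) (heatForcing Q (a p) a b c v) := by
  have sX := hQ.contDiffOn_dirDeriv (e := (1, 0)) h.contDiffOn
  have sXX := hQ.contDiffOn_dirDeriv (e := (1, 0)) sX
  have sa := h.contDiffOn_a.sub (contDiffOn_const (c := a p))
  have diffusion : VanishesToOrder Q p (m - 1) ((a - fun _ => a p) * dX Q (dX Q v)) :=
    .mul_of_eq_zero hQ hp sa sXX (by simp) hv.dX_pred.dX_pred
  have drift : VanishesToOrder Q p (m - 1) (b * dX Q v) :=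
    .mul_left hQ hp h.contDiffOn_b sX hv.dX_pred
  have potential : VanishesToOrder Q p (m - 1) (c * v) :=
    .mul_left hQ hp h.contDiffOn_c h.contDiffOn hv.pred
  exact diffusion.add hQ hp (sa.mul sXX)
    ((h.contDiffOn_b.mul sX).add (h.contDiffOn_c.mul h.contDiffOn))
    (drift.add hQ hp (h.contDiffOn_b.mul sX) (h.contDiffOn_c.mul h.contDiffOn) potential)

theorem vanishesToOrder (hX : ∀ i < m, (dX Q)^[i] v p = 0) : VanishesToOrder Q p m v := by
  induction m with
  | zero => exact vanishesToOrder_zero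
  | succ m ih =>
    have hm := ih fun i hi => hX i (by omega)
    exact hm.succ_of_heat hQ hp (a p) h.contDiffOn (h.contDiffOn_heatForcing hQ _) (h.heat_eqn _)
      (h.vanishesToOrder_heatForcing hQ hp hm) (hX m (by omega))

end IsParabolicSolution

end ParabolicEquation

/-- The space-time strip `[x₁, x₂] × (t₀, t₁)`. -/
abbrev strip (x₁ x₂ t₀ t₁ : ℝ) : Set (ℝ × ℝ) := Icc x₁ x₂ ×ˢ Ioo t₀ t₁

section Strip

variable {x₁ x₂ t₀ t₁ x t d : ℝ} {f : ℝ × ℝ → ℝ}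

theorem isSmoothRegion_strip (h₁₂ : x₁ < x₂) : IsSmoothRegion (strip x₁ x₂ t₀ t₁) where
  uniqueDiffOn := (uniqueDiffOn_Icc h₁₂).prod isOpen_Ioo.uniqueDiffOn
  subset_closure_interior := by
    rw [interior_prod_eq, closure_prod_eq, interior_Icc, closure_Ioo h₁₂.ne, isOpen_Ioo.interior_eq]
    exact prod_mono le_rfl subset_closure

variable (sf : ContDiffOn ℝ ∞ f (strip x₁ x₂ t₀ t₁)) (ht : t ∈ Ioo t₀ t₁)
include sf ht

theorem hasDerivWithinAt_dX (hx : x ∈ Icc x₁ x₂) :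
    HasDerivWithinAt (fun y => f (y, t)) (dX (strip x₁ x₂ t₀ t₁) f (x, t)) (Icc x₁ x₂) x :=
  (differentiableWithinAt_of_contDiffOn sf ⟨hx, ht⟩).hasFDerivWithinAt.comp_hasDerivWithinAt
    (f := fun y => (y, t)) x ((hasDerivWithinAt_id x _).prodMk (hasDerivWithinAt_const x _ t))
    fun _ hy => ⟨hy, ht⟩

theorem hasDerivAt_dX (hx : x ∈ Ioo x₁ x₂) :
    HasDerivAt (fun y => f (y, t)) (dX (strip x₁ x₂ t₀ t₁) f (x, t)) x :=
  (hasDerivWithinAt_dX sf ht (Ioo_subset_Icc_self hx)).hasDerivAt (Icc_mem_nhds hx.1 hx.2)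

theorem hasDerivAt_dT (hx : x ∈ Icc x₁ x₂) :
    HasDerivAt (fun s => f (x, s)) (dT (strip x₁ x₂ t₀ t₁) f (x, t)) t :=
  ((differentiableWithinAt_of_contDiffOn sf ⟨hx, ht⟩).hasFDerivWithinAt.comp_hasDerivWithinAt
    (f := fun s => (x, s)) t ((hasDerivWithinAt_const t _ x).prodMk (hasDerivWithinAt_id t _))
    fun _ hs => ⟨hx, hs⟩).hasDerivAt (Ioo_mem_nhds ht.1 ht.2)

theorem dX_eq_of_hasDerivAt (h₁₂ : x₁ < x₂) (hx : x ∈ Icc x₁ x₂)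
    (h : HasDerivAt (fun y => f (y, t)) d x) : dX (strip x₁ x₂ t₀ t₁) f (x, t) = d :=
  (uniqueDiffOn_Icc h₁₂ x hx).eq_deriv _ (hasDerivWithinAt_dX sf ht hx) h.hasDerivWithinAt

theorem dT_eq_of_hasDerivAt (hx : x ∈ Icc x₁ x₂) (h : HasDerivAt (fun s => f (x, s)) d t) :
    dT (strip x₁ x₂ t₀ t₁) f (x, t) = d :=
  (hasDerivAt_dT sf ht hx).unique h

end Strip

section ParabolicDistance

open Asymptotics

/-- The parabolic distance, in which time scales like the square of space. -/
noncomputable def parabolicDist (p q : ℝ × ℝ) : ℝ := |q.1 - p.1| + √|q.2 - p.2|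

theorem parabolicDist_nonneg (p q : ℝ × ℝ) : 0 ≤ parabolicDist p q := by
  unfold parabolicDist; positivity

theorem abs_fst_sub_le_parabolicDist (p q : ℝ × ℝ) : |q.1 - p.1| ≤ parabolicDist p q :=
  le_add_of_nonneg_right (Real.sqrt_nonneg _)

theorem abs_snd_sub_le_parabolicDist_sq (p q : ℝ × ℝ) : |q.2 - p.2| ≤ parabolicDist p q ^ 2 := by
  rw [← Real.sqrt_le_left (parabolicDist_nonneg p q)]
  exact le_add_of_nonneg_left (abs_nonneg _)

theorem parabolicDist_mono {p q r : ℝ × ℝ} (h₁ : |q.1 - p.1| ≤ |r.1 - p.1|)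
    (h₂ : |q.2 - p.2| ≤ |r.2 - p.2|) : parabolicDist p q ≤ parabolicDist p r :=
  add_le_add h₁ (Real.sqrt_le_sqrt h₂)

theorem tendsto_parabolicDist (p : ℝ × ℝ) : Tendsto (parabolicDist p) (𝓝 p) (𝓝 0) := by
  have : Continuous (parabolicDist p) := by unfold parabolicDist; fun_prop
  simpa [parabolicDist] using this.tendsto p

variable {x₁ x₂ t₀ t₁ : ℝ} {p : ℝ × ℝ} {m n : ℕ} {f : ℝ × ℝ → ℝ}

local notation "Q" => strip x₁ x₂ t₀ t₁

theorem parabolicDist_pow_isBigO (hmn : m ≤ n) (s : Set (ℝ × ℝ)) :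
    (parabolicDist p · ^ n) =O[𝓝[s] p] (parabolicDist p · ^ m) := by
  refine .of_bound 1 ?_
  filter_upwards [((tendsto_parabolicDist p).mono_left nhdsWithin_le_nhds).eventually_le_const
    zero_lt_one] with q hq
  have h0 := parabolicDist_nonneg p q
  simpa [abs_of_nonneg h0] using pow_le_pow_of_le_one h0 hq hmn

theorem isBigO_sub_of_dX (hp : p ∈ Q) (sf : ContDiffOn ℝ ∞ f Q)
    (h : dX Q f =O[𝓝[Q] p] (parabolicDist p · ^ m)) :
    (fun q => f q - f (p.1, q.2)) =O[𝓝[Q] p] (parabolicDist p · ^ (m + 1)) := by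
  obtain ⟨C, hC0, hC⟩ := h.exists_nonneg
  obtain ⟨r, hr, hball⟩ := Metric.mem_nhdsWithin_iff.1 hC.bound
  refine .of_bound C ?_
  filter_upwards [inter_mem_nhdsWithin Q (Metric.ball_mem_nhds p hr)] with q ⟨hq, hqr⟩
  have hseg : uIcc p.1 q.1 ⊆ Icc x₁ x₂ := uIcc_subset_Icc hp.1 hq.1
  rw [Metric.mem_ball, Prod.dist_eq, max_lt_iff] at hqr
  have bound : ∀ y ∈ uIcc p.1 q.1, ‖dX Q f (y, q.2)‖ ≤ C * parabolicDist p q ^ m := by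
    intro y hy
    have hyq : |y - p.1| ≤ |q.1 - p.1| := abs_sub_left_of_mem_uIcc hy
    have hyr : dist (y, q.2) p < r := max_lt (hyq.trans_lt hqr.1) hqr.2
    have := hball ⟨Metric.mem_ball.2 hyr, hseg hy, hq.2⟩
    rw [mem_ofPred_eq, Real.norm_of_nonneg (pow_nonneg (parabolicDist_nonneg _ _) _)] at this
    refine this.trans ?_
    gcongr
    exacts [parabolicDist_nonneg _ _, parabolicDist_mono hyq le_rfl]
  have hd := parabolicDist_nonneg p q
  calc ‖f q - f (p.1, q.2)‖ ≤ C * parabolicDist p q ^ m * |q.1 - p.1| :=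
        (convex_uIcc p.1 q.1).norm_image_sub_le_of_norm_hasDerivWithin_le
          (f := fun y => f (y, q.2)) (fun y hy => (hasDerivWithinAt_dX sf hq.2 (hseg hy)).mono hseg)
          bound left_mem_uIcc right_mem_uIcc
    _ ≤ C * parabolicDist p q ^ m * parabolicDist p q := by
        gcongr; exact abs_fst_sub_le_parabolicDist p q
    _ = C * ‖parabolicDist p q ^ (m + 1)‖ := by
        rw [Real.norm_of_nonneg (pow_nonneg hd _), pow_succ, mul_assoc]

theorem isBigO_sub_of_dT (hp : p ∈ Q) (sf : ContDiffOn ℝ ∞ f Q)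
    (h : dT Q f =O[𝓝[Q] p] (parabolicDist p · ^ m)) :
    (fun q => f (p.1, q.2) - f p) =O[𝓝[Q] p] (parabolicDist p · ^ (m + 2)) := by
  obtain ⟨C, hC0, hC⟩ := h.exists_nonneg
  obtain ⟨r, hr, hball⟩ := Metric.mem_nhdsWithin_iff.1 hC.bound
  refine .of_bound C ?_
  filter_upwards [inter_mem_nhdsWithin Q (Metric.ball_mem_nhds p hr)] with q ⟨hq, hqr⟩
  have hseg : uIcc p.2 q.2 ⊆ Ioo t₀ t₁ := ordConnected_Ioo.uIcc_subset hp.2 hq.2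
  rw [Metric.mem_ball, Prod.dist_eq, max_lt_iff] at hqr
  have bound : ∀ s ∈ uIcc p.2 q.2, ‖dT Q f (p.1, s)‖ ≤ C * parabolicDist p q ^ m := by
    intro s hs
    have hsq : |s - p.2| ≤ |q.2 - p.2| := abs_sub_left_of_mem_uIcc hs
    have hsr : dist (p.1, s) p < r := max_lt (by rwa [dist_self]) (hsq.trans_lt hqr.2)
    have := hball ⟨Metric.mem_ball.2 hsr, hp.1, hseg hs⟩
    rw [mem_ofPred_eq, Real.norm_of_nonneg (pow_nonneg (parabolicDist_nonneg _ _) _)] at this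
    refine this.trans ?_
    gcongr
    exacts [parabolicDist_nonneg _ _, parabolicDist_mono (by simp) hsq]
  have hd := parabolicDist_nonneg p q
  calc ‖f (p.1, q.2) - f p‖ ≤ C * parabolicDist p q ^ m * |q.2 - p.2| :=
        (convex_uIcc p.2 q.2).norm_image_sub_le_of_norm_hasDerivWithin_le
          (f := fun s => f (p.1, s))
          (fun s hs => (hasDerivAt_dT sf (hseg hs) hp.1).hasDerivWithinAt)
          bound left_mem_uIcc right_mem_uIcc
    _ ≤ C * parabolicDist p q ^ m * parabolicDist p q ^ 2 := by
        gcongr; exact abs_snd_sub_le_parabolicDist_sq p q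
    _ = C * ‖parabolicDist p q ^ (m + 2)‖ := by
        rw [Real.norm_of_nonneg (pow_nonneg hd _), pow_add, mul_assoc]

theorem VanishesToOrder.isBigO (h₁₂ : x₁ < x₂) (hp : p ∈ Q) (sf : ContDiffOn ℝ ∞ f Q)
    (hf : VanishesToOrder Q p m f) : f =O[𝓝[Q] p] (parabolicDist p · ^ m) := by
  have hQ := isSmoothRegion_strip (t₀ := t₀) (t₁ := t₁) h₁₂
  induction m using Nat.strong_induction_on generalizing f with
  | _ m ih =>
    cases m with
    | zero => simpa using (sf.continuousOn p hp).isBigO_one ℝ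
    | succ m =>
      obtain ⟨h0, hX, hT⟩ := vanishesToOrder_succ_iff.1 hf
      have space := isBigO_sub_of_dX hp sf (ih m (by omega) (hQ.contDiffOn_dirDeriv sf) hX)
      have time := isBigO_sub_of_dT hp sf (ih (m - 1) (by omega) (hQ.contDiffOn_dirDeriv sf) hT)
      refine (space.add (time.trans (parabolicDist_pow_isBigO (by omega) _))).congr_left fun q => ?_
      rw [sub_add_sub_cancel, h0, sub_zero]

end ParabolicDistance

/-- The heat polynomials `h_k(x, s)`, solutions of `∂ₛ h = ∂ₓₓ h` homogeneous of parabolic degree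
`k` and normalized by `∂ₓ h_(k+1) = h_k`. -/
noncomputable def heatPoly : ℕ → ℝ → ℝ → ℝ
  | 0, _, _ => 1
  | 1, x, _ => x
  | k + 2, x, s => (x * heatPoly (k + 1) x s + 2 * s * heatPoly k x s) / (k + 2)

section HeatPoly

theorem heatPoly_recurrence (k : ℕ) (x s : ℝ) :
    (k + 2) * heatPoly (k + 2) x s = x * heatPoly (k + 1) x s + 2 * s * heatPoly k x s := by
  rw [heatPoly]; field_simp

theorem hasDerivAt_heatPoly_fst (k : ℕ) (x s : ℝ) :
    HasDerivAt (fun y => heatPoly (k + 1) y s) (heatPoly k x s) x := by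
  induction k using Nat.strong_induction_on with
  | _ k ih =>
    match k with
    | 0 => exact hasDerivAt_id x
    | 1 =>
      have h := ((hasDerivAt_id x).mul (ih 0 (by omega))).add_const (2 * s) |>.div_const 2
      simpa [heatPoly, Pi.mul_def] using h
    | k + 2 =>
      have h := (((hasDerivAt_id x).mul (ih (k + 1) (by omega))).add
        ((ih k (by omega)).const_mul (2 * s))).div_const (((k + 1 : ℕ) : ℝ) + 2)
      refine h.congr_deriv ?_
      have := heatPoly_recurrence k x s
      simp only [id]
      push_cast
      field_simp
      linarith

theorem hasDerivAt_heatPoly_snd (k : ℕ) (x s : ℝ) :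
    HasDerivAt (fun u => heatPoly (k + 2) x u) (heatPoly k x s) s := by
  induction k using Nat.strong_induction_on with
  | _ k ih =>
    match k with
    | 0 =>
      have h := (((hasDerivAt_id s).const_mul 2).const_add (x * x)).div_const 2
      simpa [heatPoly] using h
    | 1 =>
      have h := (((ih 0 (by omega)).const_mul x).add
        (((hasDerivAt_id s).const_mul 2).mul_const x)).div_const (((1 : ℕ) : ℝ) + 2)
      refine h.congr_deriv ?_
      simp only [heatPoly]
      push_cast
      field_simp
    | k + 2 =>
      have h := (((ih (k + 1) (by omega)).const_mul x).add
        (((hasDerivAt_id s).const_mul 2).mul (ih k (by omega)))).div_const (((k + 2 : ℕ) : ℝ) + 2)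
      refine h.congr_deriv ?_
      have := heatPoly_recurrence k x s
      simp only [id]
      push_cast
      field_simp
      linarith

theorem contDiff_heatPoly (k : ℕ) : ContDiff ℝ ∞ fun q : ℝ × ℝ => heatPoly k q.1 q.2 := by
  induction k using Nat.strong_induction_on with
  | _ k ih =>
    match k with
    | 0 => exact contDiff_const
    | 1 => exact contDiff_fst
    | k + 2 =>
      exact ((contDiff_fst.mul (ih (k + 1) (by omega))).add
        ((contDiff_const.mul contDiff_snd).mul (ih k (by omega)))).div_const _

theorem heatPoly_scale (k : ℕ) (r x s : ℝ) :
    heatPoly k (r * x) (r ^ 2 * s) = r ^ k * heatPoly k x s := by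
  induction k using Nat.strong_induction_on with
  | _ k ih =>
    match k with
    | 0 => simp [heatPoly]
    | 1 => simp [heatPoly]
    | k + 2 =>
      rw [heatPoly, ih (k + 1) (by omega), ih k (by omega), heatPoly]
      ring

theorem heatPoly_succ_zero_zero (k : ℕ) : heatPoly (k + 1) 0 0 = 0 := by
  simpa using heatPoly_scale (k + 1) 0 0 0

theorem heatPoly_neg (k : ℕ) (x s : ℝ) : heatPoly k (-x) s = (-1) ^ k * heatPoly k x s := by
  simpa using heatPoly_scale k (-1) x s

section Positivity

open scoped Nat

variable {x s : ℝ} (hx : 0 ≤ x) (hs : 0 ≤ s)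
include hx hs

theorem pow_le_factorial_mul_heatPoly (k : ℕ) : x ^ k ≤ k ! * heatPoly k x s := by
  induction k using Nat.strong_induction_on with
  | _ k ih =>
    match k with
    | 0 => simp [heatPoly]
    | 1 => simp [heatPoly]
    | k + 2 =>
      have hk : 0 ≤ heatPoly k x s :=
        nonneg_of_mul_nonneg_right ((pow_nonneg hx k).trans (ih k (by omega))) (by positivity)
      calc x ^ (k + 2) = x * x ^ (k + 1) := by ring
        _ ≤ x * ((k + 1)! * heatPoly (k + 1) x s) := by gcongr; exact ih (k + 1) (by omega)
        _ ≤ (k + 1)! * (x * heatPoly (k + 1) x s + 2 * s * heatPoly k x s) := by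
            have : 0 ≤ (k + 1)! * (2 * s * heatPoly k x s) := by positivity
            linarith
        _ = (k + 2)! * heatPoly (k + 2) x s := by
            rw [← heatPoly_recurrence, Nat.factorial_succ (k + 1)]; push_cast; ring

theorem heatPoly_nonneg (k : ℕ) : 0 ≤ heatPoly k x s :=
  nonneg_of_mul_nonneg_right
    ((pow_nonneg hx k).trans (pow_le_factorial_mul_heatPoly hx hs k)) (by positivity)

theorem pow_le_factorial_mul_heatPoly_two_mul (m : ℕ) :
    s ^ m ≤ m ! * heatPoly (2 * m) x s := by
  induction m with
  | zero => simp [heatPoly]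
  | succ m ih =>
    have h := heatPoly_recurrence (2 * m) x s
    have hx' : 0 ≤ x * heatPoly (2 * m + 1) x s := mul_nonneg hx (heatPoly_nonneg hx hs _)
    calc s ^ (m + 1) ≤ m ! * (s * heatPoly (2 * m) x s) := by rw [pow_succ]; nlinarith
      _ ≤ m ! * ((m + 1) * heatPoly (2 * m + 2) x s) := by
          push_cast at h
          exact mul_le_mul_of_nonneg_left (by linarith) (by positivity)
      _ = (m + 1)! * heatPoly (2 * (m + 1)) x s := by
          rw [Nat.factorial_succ, mul_add_one 2 m]; push_cast; ring

end Positivity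

theorem tendsto_atTop_of_le_deriv {f f' : ℝ → ℝ} {a δ : ℝ} (hf : ∀ x, HasDerivAt f (f' x) x)
    (hδ : 0 < δ) (h : ∀ x, a ≤ x → δ ≤ f' x) : Tendsto f atTop atTop := by
  have hlin : Tendsto (fun x => f a + δ * (x - a)) atTop atTop :=
    tendsto_atTop_add_const_left _ _ <|
      (tendsto_atTop_add_const_right _ (-a) tendsto_id).const_mul_atTop hδ
  refine tendsto_atTop_mono' _ ?_ hlin
  filter_upwards [eventually_ge_atTop a] with x hx
  have := (convex_Ici a).mul_sub_le_image_sub_of_le_deriv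
    (fun y _ => (hf y).continuousAt.continuousWithinAt)
    (fun y _ => (hf y).differentiableAt.differentiableWithinAt)
    (fun y hy => (hf y).deriv ▸ h y (interior_subset hy)) a self_mem_Ici x hx hx
  linarith

theorem strictMonoOn_heatPoly_succ {k : ℕ} {s y : ℝ} (h : ∀ z, y < z → 0 < heatPoly k z s) :
    StrictMonoOn (fun z => heatPoly (k + 1) z s) (Ici y) := by
  refine strictMonoOn_of_deriv_pos (convex_Ici y)
    (fun z _ => (hasDerivAt_heatPoly_fst k z s).continuousAt.continuousWithinAt) fun z hz => ?_
  rw [interior_Ici] at hz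
  rw [(hasDerivAt_heatPoly_fst k z s).deriv]
  exact h z hz

theorem tendsto_heatPoly_atTop {k : ℕ} {s y : ℝ} (h : ∀ z, y < z → 0 < heatPoly k z s)
    (h' : ∀ z, y < z → 0 < heatPoly (k + 1) z s) :
    Tendsto (fun z => heatPoly (k + 2) z s) atTop atTop := by
  refine tendsto_atTop_of_le_deriv (a := y + 1) (fun z => hasDerivAt_heatPoly_fst (k + 1) z s)
    (h' (y + 1) (by linarith)) fun z hz => ?_
  exact (strictMonoOn_heatPoly_succ h).monotoneOn (mem_Ici.2 (by linarith))
    (mem_Ici.2 (by linarith)) hz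

theorem heatPoly_add_two_neg_of_root {k : ℕ} {y : ℝ} (h : heatPoly (k + 1) y (-1) = 0)
    (hk : 0 < heatPoly k y (-1)) : heatPoly (k + 2) y (-1) < 0 := by
  have hrec := heatPoly_recurrence k y (-1)
  rw [h] at hrec
  by_contra! hcon
  have : 0 ≤ (k + 2) * heatPoly (k + 2) y (-1) := by positivity
  linarith

theorem exists_largest_root_heatPoly (k : ℕ) : ∃ y : ℝ, 0 ≤ y ∧ heatPoly (k + 1) y (-1) = 0 ∧
    (∀ z, y ≤ z → 0 < heatPoly k z (-1)) ∧ ∀ z, y < z → 0 < heatPoly (k + 1) z (-1) := by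
  induction k with
  | zero => exact ⟨0, le_rfl, rfl, fun _ _ => one_pos, fun z hz => hz⟩
  | succ k ih =>
    obtain ⟨y, hy0, hy, hk, hk1⟩ := ih
    have hlim := tendsto_heatPoly_atTop (fun z hz => hk z hz.le) hk1
    have hmono := strictMonoOn_heatPoly_succ hk1
    obtain ⟨Z, hZ, hyZ⟩ := ((hlim.eventually_gt_atTop 0).and (eventually_ge_atTop y)).exists
    have hcont : Continuous fun z => heatPoly (k + 2) z (-1) :=
      continuous_iff_continuousAt.2 fun z => (hasDerivAt_heatPoly_fst (k + 1) z (-1)).continuousAt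
    obtain ⟨w, hw, hw0⟩ := intermediate_value_Ioo hyZ hcont.continuousOn
      ⟨heatPoly_add_two_neg_of_root hy (hk y le_rfl), hZ⟩
    refine ⟨w, hy0.trans hw.1.le, hw0, fun z hz => hk1 z (hw.1.trans_le hz), fun z hz => ?_⟩
    rw [← hw0]
    exact hmono (mem_Ici.2 hw.1.le) (mem_Ici.2 (hw.1.trans hz).le) hz

-- `h_(k+2)` is negative at the largest root `y` of `h_(k+1)` and positive far out at `Z`; by parity
-- it alternates in sign at `-Z, y, Z` for even `k` and at `-Z, -y, y` for odd `k`.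
theorem exists_heatPoly_alternating (k : ℕ) : ∃ y₁ y₂ y₃ : ℝ, y₁ < y₂ ∧ y₂ < y₃ ∧
    heatPoly (k + 2) y₁ (-1) * heatPoly (k + 2) y₂ (-1) < 0 ∧
    heatPoly (k + 2) y₂ (-1) * heatPoly (k + 2) y₃ (-1) < 0 := by
  obtain ⟨y, hy0, hy, hk, -⟩ := exists_largest_root_heatPoly k
  obtain ⟨w, -, -, -, hw⟩ := exists_largest_root_heatPoly (k + 1)
  have hyneg := heatPoly_add_two_neg_of_root hy (hk y le_rfl)
  obtain ⟨Z, hyZ, hwZ⟩ : ∃ Z, y < Z ∧ w < Z :=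
    ((eventually_gt_atTop y).and (eventually_gt_atTop w)).exists
  have hprod := mul_neg_of_pos_of_neg (hw Z hwZ) hyneg
  rcases Nat.even_or_odd (k + 2) with hpar | hpar
  · refine ⟨-Z, y, Z, by linarith, hyZ, ?_, by rwa [mul_comm]⟩
    rwa [heatPoly_neg, hpar.neg_one_pow, one_mul]
  · have hy_pos : 0 < y := hy0.lt_of_ne fun h => by
      have := heatPoly_neg (k + 2) y (-1)
      rw [hpar.neg_one_pow, ← h, neg_zero] at this
      rw [← h] at hyneg
      linarith
    refine ⟨-Z, -y, y, by linarith, by linarith, ?_, ?_⟩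
    · rwa [heatPoly_neg, heatPoly_neg, hpar.neg_one_pow, neg_one_mul, neg_one_mul, neg_mul_neg]
    · rw [heatPoly_neg, hpar.neg_one_pow]
      nlinarith

end HeatPoly

section IteratedDerivative

variable {E : Type*} [NormedAddCommGroup E] [NormedSpace ℝ E] {Q : Set E} {e : E} {f g : E → ℝ}

theorem iterate_dirDeriv_congr (n : ℕ) (h : EqOn f g Q) :
    EqOn ((dirDeriv Q e)^[n] f) ((dirDeriv Q e)^[n] g) Q := by
  induction n generalizing f g with
  | zero => exact h
  | succ _ ih => exact ih (dirDeriv_congr h)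

namespace IsSmoothRegion

variable (hQ : IsSmoothRegion Q)
include hQ

theorem dirDeriv_add_const_mul (r : ℝ) (hf : ContDiffOn ℝ ∞ f Q) (hg : ContDiffOn ℝ ∞ g Q) :
    EqOn (dirDeriv Q e (f + (fun _ => r) * g))
      (dirDeriv Q e f + (fun _ => r) * dirDeriv Q e g) Q := fun q hq =>
  (hQ.dirDeriv_add hf (contDiffOn_const.mul hg) hq).trans
    (congrArg (dirDeriv Q e f q + ·) (hQ.dirDeriv_const_mul r hg hq))

theorem iterate_dirDeriv_add_const_mul (n : ℕ) (r : ℝ) (hf : ContDiffOn ℝ ∞ f Q)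
    (hg : ContDiffOn ℝ ∞ g Q) :
    EqOn ((dirDeriv Q e)^[n] (f + (fun _ => r) * g))
      ((dirDeriv Q e)^[n] f + (fun _ => r) * (dirDeriv Q e)^[n] g) Q := by
  induction n generalizing f g with
  | zero => exact fun _ _ => rfl
  | succ n ih =>
    exact (iterate_dirDeriv_congr n (hQ.dirDeriv_add_const_mul r hf hg)).trans
      (ih (hQ.contDiffOn_dirDeriv hf) (hQ.contDiffOn_dirDeriv hg))

end IsSmoothRegion

end IteratedDerivative

section HeatMonomial

/-- The heat polynomial of degree `k` centred at `p`, for the heat equation with diffusion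
coefficient `κ`. -/
noncomputable def heatMonomial (κ : ℝ) (p : ℝ × ℝ) (k : ℕ) (q : ℝ × ℝ) : ℝ :=
  heatPoly k (q.1 - p.1) (κ * (q.2 - p.2))

variable {κ x₁ x₂ t₀ t₁ : ℝ} {p : ℝ × ℝ} {k m : ℕ} {f : ℝ × ℝ → ℝ}

local notation "Q" => strip x₁ x₂ t₀ t₁

theorem contDiff_heatMonomial : ContDiff ℝ ∞ (heatMonomial κ p k) :=
  (contDiff_heatPoly k).comp₂ (contDiff_fst.sub contDiff_const)
    (contDiff_const.mul (contDiff_snd.sub contDiff_const))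

theorem hasDerivAt_heatMonomial_fst (x t : ℝ) :
    HasDerivAt (fun y => heatMonomial κ p (k + 1) (y, t)) (heatMonomial κ p k (x, t)) x :=
  (hasDerivAt_heatPoly_fst k (x - p.1) (κ * (t - p.2))).comp_sub_const x p.1

theorem hasDerivAt_heatMonomial_snd (x t : ℝ) :
    HasDerivAt (fun s => heatMonomial κ p (k + 2) (x, s)) (κ * heatMonomial κ p k (x, t)) t := by
  simpa [heatMonomial, mul_comm, Function.comp_def] using
    (hasDerivAt_heatPoly_snd k _ _).comp t (((hasDerivAt_id t).sub_const p.2).const_mul κ)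

section Strip

variable (h₁₂ : x₁ < x₂)
include h₁₂

theorem dX_heatMonomial : EqOn (dX Q (heatMonomial κ p (k + 1))) (heatMonomial κ p k) Q :=
  fun q hq => dX_eq_of_hasDerivAt contDiff_heatMonomial.contDiffOn hq.2 h₁₂ hq.1
    (hasDerivAt_heatMonomial_fst q.1 q.2)

theorem dT_heatMonomial :
    EqOn (dT Q (heatMonomial κ p k)) ((fun _ => κ) * dX Q (dX Q (heatMonomial κ p k))) Q := by
  have h1 : EqOn (dX Q (heatMonomial κ p 1)) (fun _ => 1) Q := dX_heatMonomial h₁₂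
  intro q hq
  match k with
  | 0 =>
    have hX : dX Q (dX Q (heatMonomial κ p 0)) q = 0 :=
      (dirDeriv_congr (fun _ _ => congrFun (dirDeriv_const 1) _) hq).trans
        (congrFun (dirDeriv_const 0) q)
    rw [Pi.mul_apply, hX, mul_zero]
    exact congrFun (dirDeriv_const 1) q
  | 1 =>
    have hT : dT Q (heatMonomial κ p 1) q = 0 :=
      dT_eq_of_hasDerivAt contDiff_heatMonomial.contDiffOn hq.2 hq.1
        (hasDerivAt_const q.2 (q.1 - p.1))
    have hX : dX Q (dX Q (heatMonomial κ p 1)) q = 0 :=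
      (dirDeriv_congr h1 hq).trans (congrFun (dirDeriv_const 1) q)
    rw [hT, Pi.mul_apply, hX, mul_zero]
  | k + 2 =>
    have hX : dX Q (dX Q (heatMonomial κ p (k + 2))) q = heatMonomial κ p k q :=
      (dirDeriv_congr (dX_heatMonomial h₁₂) hq).trans (dX_heatMonomial h₁₂ hq)
    rw [Pi.mul_apply, hX]
    exact dT_eq_of_hasDerivAt contDiff_heatMonomial.contDiffOn hq.2 hq.1
      (hasDerivAt_heatMonomial_snd q.1 q.2)

theorem iterate_dX_heatMonomial : EqOn ((dX Q)^[k] (heatMonomial κ p k)) (fun _ => 1) Q := by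
  induction k with
  | zero => exact fun _ _ => rfl
  | succ k ih => exact (iterate_dirDeriv_congr k (dX_heatMonomial h₁₂)).trans ih

theorem vanishesToOrder_heatMonomial (hp : p ∈ Q) : VanishesToOrder Q p k (heatMonomial κ p k) := by
  have hQ := isSmoothRegion_strip (t₀ := t₀) (t₁ := t₁) h₁₂
  induction k using Nat.strong_induction_on with
  | _ k ih =>
    cases k with
    | zero => exact vanishesToOrder_zero
    | succ k =>
      have hX := (ih k (by omega)).congr hp (dX_heatMonomial h₁₂).symm
      refine vanishesToOrder_succ_iff.2 ⟨by simp [heatMonomial, heatPoly_succ_zero_zero], hX, ?_⟩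
      exact (hX.dX_pred.mul_left hQ hp contDiffOn_const
        (hQ.contDiffOn_dirDeriv (hQ.contDiffOn_dirDeriv contDiff_heatMonomial.contDiffOn))).congr hp
        (dT_heatMonomial h₁₂).symm

theorem IsParabolicSolution.vanishesToOrder_sub_heatMonomial {a b c v : ℝ × ℝ → ℝ}
    (h : IsParabolicSolution Q a b c v) (hp : p ∈ Q) (hX : ∀ i < k, (dX Q)^[i] v p = 0) :
    VanishesToOrder Q p (k + 1)
      (v + (fun _ => -(dX Q)^[k] v p) * heatMonomial (a p) p k) := by
  have hQ := isSmoothRegion_strip (t₀ := t₀) (t₁ := t₁) h₁₂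
  set A := (dX Q)^[k] v p
  set μ := heatMonomial (a p) p k
  have sμ : ContDiffOn ℝ ∞ μ Q := contDiff_heatMonomial.contDiffOn
  have hv := h.vanishesToOrder hQ hp hX
  refine VanishesToOrder.succ_of_heat hQ hp (a p) (h.contDiffOn.add (contDiffOn_const.mul sμ))
    (h.contDiffOn_heatForcing hQ (a p)) (fun q hq => ?_)
    (hv.add hQ hp h.contDiffOn (contDiffOn_const.mul sμ)
      ((vanishesToOrder_heatMonomial h₁₂ hp).mul_left hQ hp contDiffOn_const sμ))
    (h.vanishesToOrder_heatForcing hQ hp hv) ?_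
  · have hXX := hQ.iterate_dirDeriv_add_const_mul (e := (1, 0)) 2 (-A) h.contDiffOn sμ hq
    have hT := hQ.dirDeriv_add_const_mul (e := (0, 1)) (-A) h.contDiffOn sμ hq
    have hv := h.heat_eqn (a p) hq
    have hμ := dT_heatMonomial (κ := a p) (p := p) (k := k) h₁₂ hq
    simp only [Pi.add_apply, Pi.mul_apply, Function.iterate_succ, Function.iterate_zero,
      Function.comp_apply, id, dX, dT, μ] at hXX hT hv hμ ⊢
    rw [hXX, hT, hv, hμ]
    ring
  · rw [hQ.iterate_dirDeriv_add_const_mul k (-A) h.contDiffOn sμ hp, Pi.add_apply, Pi.mul_apply,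
      iterate_dX_heatMonomial h₁₂ hp]
    simp [A]

end Strip

open Asymptotics

open scoped Nat in
theorem parabolicDist_pow_isBigO_heatMonomial (hκ : 0 < κ) :
    (parabolicDist p · ^ (2 * m)) =O[𝓝[{q | p.2 ≤ q.2}] p] heatMonomial κ p (2 * m) := by
  refine .of_bound (2 ^ (2 * m - 1) * ((2 * m)! + m ! / κ ^ m)) ?_
  filter_upwards [self_mem_nhdsWithin] with q hq
  have hτ : 0 ≤ q.2 - p.2 := sub_nonneg.2 hq
  have even : heatMonomial κ p (2 * m) q = heatPoly (2 * m) |q.1 - p.1| (κ * (q.2 - p.2)) := by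
    rcases abs_choice (q.1 - p.1) with h | h
    · rw [h, heatMonomial]
    · rw [h, heatPoly_neg, (even_two_mul m).neg_one_pow, one_mul, heatMonomial]
  have hs : 0 ≤ κ * (q.2 - p.2) := by positivity
  have space := pow_le_factorial_mul_heatPoly (abs_nonneg (q.1 - p.1)) hs (2 * m)
  have time := pow_le_factorial_mul_heatPoly_two_mul (abs_nonneg (q.1 - p.1)) hs m
  rw [Real.norm_of_nonneg (pow_nonneg (parabolicDist_nonneg p q) _), even,
    Real.norm_of_nonneg (heatPoly_nonneg (abs_nonneg _) hs _)]
  set η := heatPoly (2 * m) |q.1 - p.1| (κ * (q.2 - p.2))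
  calc parabolicDist p q ^ (2 * m)
      ≤ 2 ^ (2 * m - 1) * (|q.1 - p.1| ^ (2 * m) + √|q.2 - p.2| ^ (2 * m)) :=
        add_pow_le (abs_nonneg _) (Real.sqrt_nonneg _) _
    _ = 2 ^ (2 * m - 1) * (|q.1 - p.1| ^ (2 * m) + (κ * (q.2 - p.2)) ^ m / κ ^ m) := by
        rw [pow_mul √_, Real.sq_sqrt (abs_nonneg _), abs_of_nonneg hτ, mul_pow,
          mul_div_cancel_left₀ _ (by positivity)]
    _ ≤ 2 ^ (2 * m - 1) * ((2 * m)! * η + m ! * η / κ ^ m) := by gcongr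
    _ = 2 ^ (2 * m - 1) * ((2 * m)! + m ! / κ ^ m) * η := by ring

theorem parabolicDist_pow_isBigO_of_vanishesToOrder {A : ℝ} (h₁₂ : x₁ < x₂) (hp : p ∈ Q)
    (hκ : 0 < κ) (hA : A ≠ 0) (sf : ContDiffOn ℝ ∞ f Q)
    (hf : VanishesToOrder Q p (2 * m + 1) (f + (fun _ => -A) * heatMonomial κ p (2 * m))) :
    (parabolicDist p · ^ (2 * m)) =O[𝓝[Q ∩ {q | p.2 ≤ q.2}] p] f := by
  set l := 𝓝[Q ∩ {q | p.2 ≤ q.2}] p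
  have leading : (parabolicDist p · ^ (2 * m)) =O[l] fun q => A * heatMonomial κ p (2 * m) q :=
    (isBigO_const_mul_right_iff hA).2 <|
      (parabolicDist_pow_isBigO_heatMonomial hκ).mono (nhdsWithin_mono p inter_subset_right)
  have remainder := (hf.isBigO h₁₂ hp
    (sf.add (contDiffOn_const.mul contDiff_heatMonomial.contDiffOn))).mono
      (nhdsWithin_mono p (inter_subset_left (t := {q | p.2 ≤ q.2})))
  have small : (parabolicDist p · ^ (2 * m + 1)) =o[l] (parabolicDist p · ^ (2 * m)) := by
    have h0 : (parabolicDist p ·) =o[l] fun _ => (1 : ℝ) :=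
      (isLittleO_one_iff ℝ).2 ((tendsto_parabolicDist p).mono_left nhdsWithin_le_nhds)
    simpa [pow_succ] using (isBigO_refl (parabolicDist p · ^ (2 * m)) l).mul_isLittleO h0
  have equiv : f ~[l] fun q => A * heatMonomial κ p (2 * m) q :=
    ((remainder.trans_isLittleO small).trans_isBigO leading).congr_left fun q => by
      simp [sub_eq_add_neg]
  exact leading.trans equiv.isBigO_symm

theorem eventually_eq_of_parabolicDist_pow_isBigO {l : Filter (ℝ × ℝ)}
    (h : (parabolicDist p · ^ m) =O[l] f) : ∀ᶠ q in l, f q = 0 → q = p := by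
  filter_upwards [h.eq_zero_imp] with q hq h0
  have hd : parabolicDist p q = 0 := eq_zero_of_pow_eq_zero (hq h0)
  have hfst := (abs_fst_sub_le_parabolicDist p q).trans_eq hd
  have hsnd := (abs_snd_sub_le_parabolicDist_sq p q).trans_eq (by rw [hd, sq, mul_zero])
  exact Prod.ext (sub_eq_zero.1 (abs_nonpos_iff.1 hfst)) (sub_eq_zero.1 (abs_nonpos_iff.1 hsnd))

end HeatMonomial

/-- The zeros of `v(·, t)` in `I`. -/
def zeroSlice (I : Set ℝ) (v : ℝ × ℝ → ℝ) (t : ℝ) : Set ℝ := {x ∈ I | v (x, t) = 0}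

section LocalZeros

variable {a b c v : ℝ × ℝ → ℝ} {x₁ x₂ t₀ t₁ : ℝ} {p : ℝ × ℝ} {k : ℕ}

local notation "Q" => strip x₁ x₂ t₀ t₁

theorem zeroSlice_mono {I J : Set ℝ} {t : ℝ} (h : I ⊆ J) : zeroSlice I v t ⊆ zeroSlice J v t :=
  fun _ hx => ⟨h hx.1, hx.2⟩

theorem exists_dX_eq_zero {f : ℝ × ℝ → ℝ} {t x y : ℝ} (sf : ContDiffOn ℝ ∞ f Q)
    (ht : t ∈ Ioo t₀ t₁) (hx : x ∈ zeroSlice (Icc x₁ x₂) f t)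
    (hy : y ∈ zeroSlice (Icc x₁ x₂) f t) (hxy : x < y) : ∃ z ∈ Ioo x y, dX Q f (z, t) = 0 :=
  have hsub : Icc x y ⊆ Icc x₁ x₂ := Icc_subset_Icc hx.1.1 hy.1.2
  exists_hasDerivAt_eq_zero hxy
    (fun _ hz => ((hasDerivWithinAt_dX sf ht (hsub hz)).mono hsub).continuousWithinAt)
    (hx.2.trans hy.2.symm)
    fun _ hz => hasDerivAt_dX sf ht ⟨hx.1.1.trans_lt hz.1, hz.2.trans_le hy.1.2⟩

variable (h : IsParabolicSolution (strip x₁ x₂ t₀ t₁) a b c v)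
include h

theorem IsParabolicSolution.eventually_eq_of_even (h₁₂ : x₁ < x₂) (hp : p ∈ Q)
    (hX : ∀ i < k, (dX Q)^[i] v p = 0) (hk : (dX Q)^[k] v p ≠ 0) (heven : Even k) :
    ∀ᶠ q in 𝓝[Q ∩ {q | p.2 ≤ q.2}] p, v q = 0 → q = p := by
  obtain ⟨m, rfl⟩ := heven.two_dvd
  exact eventually_eq_of_parabolicDist_pow_isBigO <|
    parabolicDist_pow_isBigO_of_vanishesToOrder h₁₂ hp (h.pos p hp) hk h.contDiffOn
      (h.vanishesToOrder_sub_heatMonomial h₁₂ hp hX)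

theorem IsParabolicSolution.eventually_eq_of_odd (h₁₂ : x₁ < x₂) (hp : p ∈ Q)
    (hX : ∀ i < k, (dX Q)^[i] v p = 0) (hk : (dX Q)^[k] v p ≠ 0) (hodd : Odd k) :
    ∀ᶠ q in 𝓝[Q ∩ {q | p.2 ≤ q.2}] p, dX Q v q = 0 → q = p := by
  obtain ⟨m, rfl⟩ := hodd
  have hQ := isSmoothRegion_strip (t₀ := t₀) (t₁ := t₁) h₁₂
  have sX := hQ.contDiffOn_dirDeriv (e := (1, 0)) h.contDiffOn
  have hexp := (h.vanishesToOrder_sub_heatMonomial h₁₂ hp hX).dX_pred.congr hp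
    (hQ.dirDeriv_add_const_mul _ h.contDiffOn contDiff_heatMonomial.contDiffOn)
  refine eventually_eq_of_parabolicDist_pow_isBigO <|
    parabolicDist_pow_isBigO_of_vanishesToOrder h₁₂ hp (h.pos p hp) hk sX <|
      hexp.congr hp fun q hq => ?_
  simp only [Pi.add_apply, Pi.mul_apply]
  rw [← dX_heatMonomial h₁₂ hq]

theorem IsParabolicSolution.exists_zeroSlice_subsingleton (h₁₂ : x₁ < x₂) (hp : p ∈ Q)
    (hX : ∀ i < k, (dX Q)^[i] v p = 0) (hk : (dX Q)^[k] v p ≠ 0) :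
    ∃ δ > 0, ∀ t ∈ Ico p.2 (p.2 + δ),
      (zeroSlice (Icc x₁ x₂ ∩ Metric.ball p.1 δ) v t).Subsingleton := by
  have key : ∃ f : ℝ × ℝ → ℝ, (∀ᶠ q in 𝓝[Q ∩ {q | p.2 ≤ q.2}] p, f q = 0 → q = p) ∧
      (f = v ∨ f = dX Q v ∧ v p = 0) := by
    rcases Nat.even_or_odd k with heven | hodd
    · exact ⟨v, h.eventually_eq_of_even h₁₂ hp hX hk heven, .inl rfl⟩
    · exact ⟨_, h.eventually_eq_of_odd h₁₂ hp hX hk hodd, .inr ⟨rfl, hX 0 hodd.pos⟩⟩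
  obtain ⟨f, hf, hfv⟩ := key
  obtain ⟨ε, hε, hball⟩ := Metric.mem_nhdsWithin_iff.1 hf
  have hδ : 0 < min ε (t₁ - p.2) := lt_min hε (sub_pos.2 hp.2.2)
  refine ⟨_, hδ, fun t ht => ?_⟩
  have htT : t ∈ Ioo t₀ t₁ := ⟨hp.2.1.trans_le ht.1, by linarith [ht.2, min_le_right ε (t₁ - p.2)]⟩
  have centre {x : ℝ} (hx : x ∈ Icc x₁ x₂ ∩ Metric.ball p.1 (min ε (t₁ - p.2)))
      (h0 : f (x, t) = 0) : x = p.1 ∧ t = p.2 := by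
    have htε : dist t p.2 < ε := by
      rw [Real.dist_eq, abs_of_nonneg (sub_nonneg.2 ht.1)]
      linarith [ht.2, min_le_left ε (t₁ - p.2)]
    exact Prod.ext_iff.1 (hball ⟨max_lt (hx.2.trans_le (min_le_left _ _)) htε,
      ⟨hx.1, htT⟩, ht.1⟩ h0)
  rcases hfv with rfl | ⟨rfl, hvp⟩
  · exact fun x hx y hy => (centre hx.1 hx.2).1.trans (centre hy.1 hy.2).1.symm
  · refine fun x hx y hy => not_ne_iff.1 fun hne => ?_
    wlog hxy : x < y generalizing x y
    · exact this y hy x hx hne.symm (hne.symm.lt_of_le (not_lt.1 hxy))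
    have hx' := zeroSlice_mono inter_subset_left hx
    have hy' := zeroSlice_mono inter_subset_left hy
    have rolle {u w : ℝ} (hu : u ∈ zeroSlice (Icc x₁ x₂) v t) (hw : w ∈ zeroSlice (Icc x₁ x₂) v t)
        (huw : u < w) (hxu : x ≤ u) (hwy : w ≤ y) : u < p.1 ∧ p.1 < w ∧ t = p.2 := by
      obtain ⟨z, hz, hz0⟩ := exists_dX_eq_zero h.contDiffOn htT hu hw huw
      have hzball : z ∈ Metric.ball p.1 (min ε (t₁ - p.2)) :=
        (convex_ball _ _).ordConnected.out hx.1.2 hy.1.2 ⟨hxu.trans hz.1.le, hz.2.le.trans hwy⟩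
      obtain ⟨rfl, ht⟩ := centre ⟨⟨hu.1.1.trans hz.1.le, hz.2.le.trans hw.1.2⟩, hzball⟩ hz0
      exact ⟨hz.1, hz.2, ht⟩
    obtain ⟨hxp, hpy, rfl⟩ := rolle hx' hy' hxy le_rfl le_rfl
    exact (rolle hx' ⟨hp.1, hvp⟩ hxp le_rfl hpy.le).2.1.false

end LocalZeros

section Parabola

/-- The parabola `x = p.1 + √(κ (p.2 - t)) y` below its apex `p`, parametrized by
`ρ = √(κ (p.2 - t))`. -/
noncomputable def parabola (κ : ℝ) (p : ℝ × ℝ) (y ρ : ℝ) : ℝ × ℝ :=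
  (p.1 + ρ * y, p.2 - ρ ^ 2 / κ)

variable {κ y z x₁ x₂ t₀ t₁ δ : ℝ} {p : ℝ × ℝ} {k : ℕ} {a b c v : ℝ × ℝ → ℝ}

local notation "Q" => strip x₁ x₂ t₀ t₁

theorem continuous_parabola (κ : ℝ) (p : ℝ × ℝ) (y : ℝ) : Continuous (parabola κ p y) := by
  unfold parabola; fun_prop

theorem tendsto_parabola (κ : ℝ) (p : ℝ × ℝ) (y : ℝ) :
    Tendsto (parabola κ p y) (𝓝[>] 0) (𝓝 p) := by
  simpa [parabola] using ((continuous_parabola κ p y).tendsto 0).mono_left nhdsWithin_le_nhds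

theorem parabolicDist_parabola (κ : ℝ) (p : ℝ × ℝ) (y ρ : ℝ) :
    parabolicDist p (parabola κ p y ρ) = |ρ| * (|y| + 1 / √|κ|) := by
  simp [parabolicDist, parabola, abs_mul, abs_div, Real.sqrt_sq_eq_abs]
  ring

theorem heatMonomial_parabola (hκ : κ ≠ 0) (p : ℝ × ℝ) (y ρ : ℝ) :
    heatMonomial κ p k (parabola κ p y ρ) = ρ ^ k * heatPoly k y (-1) := by
  rw [← heatPoly_scale, heatMonomial, parabola]
  congr 1 <;> field_simp <;> ring

theorem tendsto_div_pow_parabola (h : IsParabolicSolution Q a b c v) (h₁₂ : x₁ < x₂)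
    (hpQ : Q ∈ 𝓝 p) (hX : ∀ i < k, (dX Q)^[i] v p = 0) (y : ℝ) :
    Tendsto (fun ρ => v (parabola (a p) p y ρ) / ρ ^ k) (𝓝[>] 0)
      (𝓝 ((dX Q)^[k] v p * heatPoly k y (-1))) := by
  have hp := mem_of_mem_nhds hpQ
  set A := (dX Q)^[k] v p
  set u := v + (fun _ => -A) * heatMonomial (a p) p k
  set γ := parabola (a p) p y
  have hu : u =O[𝓝 p] (parabolicDist p · ^ (k + 1)) := by
    rw [← nhdsWithin_eq_nhds.2 hpQ]
    exact (h.vanishesToOrder_sub_heatMonomial h₁₂ hp hX).isBigO h₁₂ hp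
      (h.contDiffOn.add (contDiffOn_const.mul contDiff_heatMonomial.contDiffOn))
  have huγ : (u ∘ γ) =O[𝓝[>] 0] fun ρ : ℝ => ρ ^ (k + 1) := by
    refine (hu.comp_tendsto (tendsto_parabola (a p) p y)).trans <|
      .of_bound ((|y| + 1 / √|a p|) ^ (k + 1)) (.of_forall fun ρ => le_of_eq ?_)
    rw [Function.comp_apply, parabolicDist_parabola, mul_pow, norm_mul, norm_pow, norm_pow,
      norm_pow, Real.norm_of_nonneg (by positivity : 0 ≤ |y| + 1 / √|a p|), Real.norm_eq_abs,
      abs_abs, Real.norm_eq_abs, mul_comm]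
  have hρ : (fun ρ : ℝ => ρ ^ (k + 1)) =o[𝓝[>] 0] fun ρ => ρ ^ k :=
    (Asymptotics.isLittleO_pow_pow k.lt_succ_self).mono nhdsWithin_le_nhds
  have hlim := (huγ.trans_isLittleO hρ).tendsto_div_nhds_zero.add_const (A * heatPoly k y (-1))
  rw [zero_add] at hlim
  refine hlim.congr' ?_
  filter_upwards [self_mem_nhdsWithin] with ρ hρ
  have hρ0 : ρ ≠ 0 := (mem_Ioi.1 hρ).ne'
  have := heatMonomial_parabola (k := k) (h.pos p hp).ne' p y ρ
  simp only [Function.comp_apply, u, Pi.add_apply, Pi.mul_apply, γ, this]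
  field_simp
  ring

theorem exists_mem_Ioo_eq_zero_of_mul_neg {f : ℝ → ℝ} {x y : ℝ} (hxy : x ≤ y)
    (hf : ContinuousOn f (Icc x y)) (hneg : f x * f y < 0) : ∃ z ∈ Ioo x y, f z = 0 := by
  rcases mul_neg_iff.1 hneg with ⟨hx, hy⟩ | ⟨hx, hy⟩
  · exact intermediate_value_Ioo' hxy hf ⟨hy, hx⟩
  · exact intermediate_value_Ioo hxy hf ⟨hx, hy⟩

theorem eventually_exists_zero_parabola (h : IsParabolicSolution Q a b c v) (h₁₂ : x₁ < x₂)
    (hpQ : Q ∈ 𝓝 p) (hX : ∀ i < k, (dX Q)^[i] v p = 0) (hk : (dX Q)^[k] v p ≠ 0) (hδ : 0 < δ)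
    (hyz : y < z) (hneg : heatPoly k y (-1) * heatPoly k z (-1) < 0) :
    ∀ᶠ ρ in 𝓝[>] 0, ∃ x ∈ Ioo (p.1 + ρ * y) (p.1 + ρ * z),
      x ∈ zeroSlice (Icc x₁ x₂ ∩ Metric.ball p.1 δ) v (p.2 - ρ ^ 2 / a p) := by
  set A := (dX Q)^[k] v p
  have hA : A * heatPoly k y (-1) * (A * heatPoly k z (-1)) < 0 := by
    rw [mul_mul_mul_comm]
    exact mul_neg_of_pos_of_neg (mul_self_pos.2 hk) hneg
  have hsign : ∀ᶠ ρ in 𝓝[>] 0,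
      v (parabola (a p) p y ρ) / ρ ^ k * (v (parabola (a p) p z ρ) / ρ ^ k) < 0 :=
    ((tendsto_div_pow_parabola h h₁₂ hpQ hX y).mul (tendsto_div_pow_parabola h h₁₂ hpQ hX z))
      |>.eventually_lt_const hA
  have hnear (w : ℝ) : ∀ᶠ ρ in 𝓝[>] 0, parabola (a p) p w ρ ∈ Q ∩ Metric.ball p δ :=
    tendsto_parabola (a p) p w |>.eventually (inter_mem hpQ (Metric.ball_mem_nhds p hδ))
  filter_upwards [self_mem_nhdsWithin, hsign, hnear y, hnear z] with ρ hρ hvv hy hz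
  have hle : p.1 + ρ * y ≤ p.1 + ρ * z := by gcongr; exact (mem_Ioi.1 hρ).le
  have hsub : Icc (p.1 + ρ * y) (p.1 + ρ * z) ⊆ Icc x₁ x₂ ∩ Metric.ball p.1 δ :=
    ((ordConnected_Icc.inter (convex_ball p.1 δ).ordConnected).out
      ⟨hy.1.1, (max_lt_iff.1 (Metric.mem_ball.1 hy.2)).1⟩
      ⟨hz.1.1, (max_lt_iff.1 (Metric.mem_ball.1 hz.2)).1⟩)
  obtain ⟨x, hx, hx0⟩ := exists_mem_Ioo_eq_zero_of_mul_neg hle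
    (f := fun x => v (x, p.2 - ρ ^ 2 / a p))
    (fun x hx => ((hasDerivWithinAt_dX h.contDiffOn hy.1.2 (hsub hx).1).mono
      fun _ hx' => (hsub hx').1).continuousWithinAt)
    (neg_of_div_neg_left (by rwa [div_mul_div_comm] at hvv) (mul_self_nonneg _))
  exact ⟨x, hx, hsub (Ioo_subset_Icc_self hx), hx0⟩

theorem eventually_nhdsLT_of_parabola {P : ℝ → Prop} (hκ : 0 < κ)
    (h : ∀ᶠ ρ in 𝓝[>] 0, P (p.2 - ρ ^ 2 / κ)) : ∀ᶠ t in 𝓝[<] p.2, P t := by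
  have hlim : Tendsto (fun t => √(κ * (p.2 - t))) (𝓝[<] p.2) (𝓝[>] 0) := by
    refine tendsto_nhdsWithin_iff.2 ⟨?_, ?_⟩
    · have : Continuous fun t => √(κ * (p.2 - t)) := by fun_prop
      simpa using (this.tendsto p.2).mono_left nhdsWithin_le_nhds
    · filter_upwards [self_mem_nhdsWithin] with t ht
      exact Real.sqrt_pos.2 (mul_pos hκ (sub_pos.2 ht))
  filter_upwards [hlim.eventually h, self_mem_nhdsWithin] with t hP ht
  rwa [Real.sq_sqrt (mul_nonneg hκ.le (sub_nonneg.2 (mem_Iio.1 ht).le)),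
    mul_div_cancel_left₀ _ hκ.ne', sub_sub_cancel] at hP

namespace IsParabolicSolution

variable (h : IsParabolicSolution (strip x₁ x₂ t₀ t₁) a b c v) (h₁₂ : x₁ < x₂)
  (hpQ : strip x₁ x₂ t₀ t₁ ∈ 𝓝 p)
include h h₁₂ hpQ

theorem eventually_zeroSlice_nontrivial (hX : ∀ i < k + 2, (dX Q)^[i] v p = 0)
    (hk : (dX Q)^[k + 2] v p ≠ 0) (hδ : 0 < δ) :
    ∀ᶠ t in 𝓝[<] p.2, (zeroSlice (Icc x₁ x₂ ∩ Metric.ball p.1 δ) v t).Nontrivial := by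
  obtain ⟨y₁, y₂, y₃, h12, h23, hneg, hneg'⟩ := exists_heatPoly_alternating k
  refine eventually_nhdsLT_of_parabola (h.pos p (mem_of_mem_nhds hpQ)) ?_
  filter_upwards [eventually_exists_zero_parabola h h₁₂ hpQ hX hk hδ h12 hneg,
    eventually_exists_zero_parabola h h₁₂ hpQ hX hk hδ h23 hneg'] with ρ h₁ h₂
  obtain ⟨x, hx, hx0⟩ := h₁
  obtain ⟨y, hy, hy0⟩ := h₂
  exact ⟨x, hx0, y, hy0, (hx.2.trans hy.1).ne⟩

theorem eventually_zeroSlice_nonempty (hX : ∀ i < k + 1, (dX Q)^[i] v p = 0)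
    (hk : (dX Q)^[k + 1] v p ≠ 0) (hδ : 0 < δ) :
    ∀ᶠ t in 𝓝[<] p.2, (zeroSlice (Icc x₁ x₂ ∩ Metric.ball p.1 δ) v t).Nonempty := by
  cases k with
  | zero =>
    refine eventually_nhdsLT_of_parabola (h.pos p (mem_of_mem_nhds hpQ)) ?_
    filter_upwards [eventually_exists_zero_parabola h h₁₂ hpQ hX hk hδ (y := -1) (z := 1)
      (by norm_num) (by norm_num [heatPoly])] with ρ hρ
    obtain ⟨x, -, hx⟩ := hρ
    exact ⟨x, hx⟩
  | succ k =>
    filter_upwards [h.eventually_zeroSlice_nontrivial h₁₂ hpQ hX hk hδ] with t ht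
    exact ht.nonempty

end IsParabolicSolution

end Parabola

section DifferentialInequalities

variable {f f' H D H' D' : ℝ → ℝ} {s t T C N : ℝ}

theorem le_mul_exp_of_hasDerivAt_le (hf : ∀ t ∈ Ico s T, HasDerivAt f (f' t) t)
    (hle : ∀ t ∈ Ico s T, f' t ≤ C * f t) (ht : t ∈ Ico s T) :
    f t ≤ f s * Real.exp (C * (t - s)) := by
  have hsub : Icc s t ⊆ Ico s T := fun r hr => ⟨hr.1, hr.2.trans_lt ht.2⟩
  rw [← gronwallBound_ε0]
  refine le_gronwallBound_of_liminf_deriv_right_le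
    (fun r hr => (hf r (hsub hr)).continuousAt.continuousWithinAt)
    (fun r hr _ => (hf r (hsub (Ico_subset_Icc_self hr))).hasDerivWithinAt.liminf_right_slope_le)
    le_rfl (fun r hr => ?_) t ⟨ht.1, le_rfl⟩
  simpa using hle r (hsub (Ico_subset_Icc_self hr))

theorem mul_pow_le_of_hasDerivAt_ge {n : ℕ} (hf : ∀ t ∈ Ico s T, HasDerivAt f (f' t) t)
    (hge : ∀ t ∈ Ico s T, -(n * f t) ≤ (T - t) * f' t) (ht : t ∈ Ico s T) :
    f s / (T - s) ^ n * (T - t) ^ n ≤ f t := by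
  have hτ : ∀ t ∈ Ico s T, 0 < T - t := fun t ht => sub_pos.2 ht.2
  have hd : ∀ t ∈ Ico s T, HasDerivAt (fun t => f t / (T - t) ^ n)
      ((f' t * (T - t) ^ n - f t * (n * (T - t) ^ (n - 1) * -1)) / ((T - t) ^ n) ^ 2) t :=
    fun t ht => (hf t ht).div (((hasDerivAt_id t).const_sub T).pow n) (pow_pos (hτ t ht) n).ne'
  have hmono : MonotoneOn (fun t => f t / (T - t) ^ n) (Ico s T) := by
    refine monotoneOn_of_deriv_nonneg (convex_Ico s T)
      (fun t ht => (hd t ht).continuousAt.continuousWithinAt)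
      (fun t ht => (hd t (interior_subset ht)).differentiableAt.differentiableWithinAt)
      fun t ht => ?_
    rw [(hd t (interior_subset ht)).deriv]
    refine div_nonneg ?_ (sq_nonneg _)
    have hτt := hτ t (interior_subset ht)
    have hge' := hge t (interior_subset ht)
    rcases n with _ | n
    · simp only [Nat.cast_zero, zero_mul, neg_zero] at hge'
      simpa using nonneg_of_mul_nonneg_right hge' hτt
    · calc (0 : ℝ) ≤ (T - t) ^ n * ((T - t) * f' t + (n + 1 : ℕ) * f t) := by
            have := pow_pos hτt n; apply mul_nonneg this.le; linarith
        _ = _ := by rw [Nat.add_sub_cancel, pow_succ]; ring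
  exact (le_div_iff₀ (pow_pos (hτ t ht) n)).1 (hmono ⟨le_rfl, ht.1.trans_lt ht.2⟩ ht ht.1)

theorem le_mul_of_frequency_le {ε : ℝ} (hε : 0 < ε) (hC : 0 ≤ C)
    (hH : ∀ t ∈ Ico s T, HasDerivAt H (H' t) t) (hD : ∀ t ∈ Ico s T, HasDerivAt D (D' t) t)
    (hH0 : ∀ t ∈ Ico s T, 0 ≤ H t) (hD0 : ∀ t ∈ Ico s T, 0 ≤ D t)
    (hD' : ∀ t ∈ Ico s T, D' t ≤ C * (H t + D t))
    (hDH : ∀ t ∈ Ico s T, D' t * H t - D t * H' t ≤ C * (H t + D t) * H t) (ht : t ∈ Ico s T) :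
    H t + ε + D t ≤ (1 + D s / (H s + ε)) * Real.exp (C * (T - s)) * (H t + ε) := by
  have hG : ∀ t ∈ Ico s T, 0 < H t + ε := fun t ht => by linarith [hH0 t ht]
  have hs : s ∈ Ico s T := ⟨le_rfl, ht.1.trans_lt ht.2⟩
  have hd : ∀ t ∈ Ico s T, HasDerivAt (fun t => 1 + D t / (H t + ε))
      ((D' t * (H t + ε) - D t * H' t) / (H t + ε) ^ 2) t := fun t ht =>
    ((hD t ht).div ((hH t ht).add_const ε) (hG t ht).ne').const_add 1
  have hle : ∀ t ∈ Ico s T, (D' t * (H t + ε) - D t * H' t) / (H t + ε) ^ 2 ≤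
      C * (1 + D t / (H t + ε)) := by
    intro t ht
    have hGt := hG t ht
    have : C * (1 + D t / (H t + ε)) * (H t + ε) ^ 2 = C * (H t + ε + D t) * (H t + ε) := by
      field_simp
    rw [div_le_iff₀ (by positivity), this]
    nlinarith [mul_le_mul_of_nonneg_right (hD' t ht) hε.le, hDH t ht,
      mul_nonneg (mul_nonneg hC hε.le) hGt.le]
  have hexp : Real.exp (C * (t - s)) ≤ Real.exp (C * (T - s)) :=
    Real.exp_le_exp.2 (mul_le_mul_of_nonneg_left (by linarith [ht.2]) hC)
  have hNs : 0 ≤ 1 + D s / (H s + ε) :=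
    add_nonneg one_pos.le (div_nonneg (hD0 s hs) (hG s hs).le)
  have hN := (le_mul_exp_of_hasDerivAt_le hd hle ht).trans (mul_le_mul_of_nonneg_left hexp hNs)
  have hGt := hG t ht
  calc H t + ε + D t = (1 + D t / (H t + ε)) * (H t + ε) := by field_simp
    _ ≤ _ := mul_le_mul_of_nonneg_right hN hGt.le

theorem exists_mul_pow_le_of_frequency_le (hC : 0 ≤ C)
    (hH : ∀ t ∈ Ico s T, HasDerivAt H (H' t) t) (hD : ∀ t ∈ Ico s T, HasDerivAt D (D' t) t)
    (hH0 : ∀ t ∈ Ico s T, 0 ≤ H t) (hD0 : ∀ t ∈ Ico s T, 0 ≤ D t)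
    (hD' : ∀ t ∈ Ico s T, D' t ≤ C * (H t + D t))
    (hDH : ∀ t ∈ Ico s T, D' t * H t - D t * H' t ≤ C * (H t + D t) * H t)
    (hH' : ∀ t ∈ Ico s T, -(C * (H t + D t)) ≤ (T - t) * H' t) (hsT : s < T) (hpos : 0 < H s) :
    ∃ n : ℕ, ∃ k > 0, ∀ t ∈ Ico s T, k * (T - t) ^ n ≤ H t := by
  have hs : s ∈ Ico s T := ⟨le_rfl, hsT⟩
  set B := (1 + D s / H s) * Real.exp (C * (T - s))
  obtain ⟨n, hn⟩ := exists_nat_ge (C * B)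
  have hτ : 0 < (T - s) ^ n := pow_pos (sub_pos.2 hsT) n
  have hreg : ∀ ε > 0, ∀ t ∈ Ico s T, H s / (T - s) ^ n * (T - t) ^ n ≤ H t + ε := by
    intro ε hε t ht
    have hge : ∀ r ∈ Ico s T, -(n * (H r + ε)) ≤ (T - r) * H' r := by
      intro r hr
      have hG : 0 < H r + ε := by linarith [hH0 r hr]
      have hDs := hD0 s hs
      have hfreq : H r + ε + D r ≤ B * (H r + ε) := by
        refine (le_mul_of_frequency_le hε hC hH hD hH0 hD0 hD' hDH hr).trans ?_
        simp only [B]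
        gcongr
        linarith
      nlinarith [hH' r hr, mul_le_mul_of_nonneg_left hfreq hC,
        mul_le_mul_of_nonneg_right hn hG.le, mul_nonneg hC hε.le]
    refine le_trans ?_ (mul_pow_le_of_hasDerivAt_ge (f := fun t => H t + ε)
      (fun r hr => (hH r hr).add_const ε) hge ht)
    have : 0 ≤ T - t := (sub_pos.2 ht.2).le
    gcongr
    linarith
  exact ⟨n, _, div_pos hpos hτ, fun t ht =>
    le_of_forall_pos_le_add fun ε hε => hreg ε hε t ht⟩

end DifferentialInequalities

section ParametricIntegrals

open MeasureTheory

variable {x₁ x₂ t₀ t₁ x₀ x t d : ℝ} {p : ℝ × ℝ} {f g : ℝ × ℝ → ℝ}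

local notation "Q" => strip x₁ x₂ t₀ t₁

theorem continuousOn_slice (hf : ContinuousOn f Q) (ht : t ∈ Ioo t₀ t₁) :
    ContinuousOn (fun x => f (x, t)) (Icc x₁ x₂) :=
  hf.comp (f := fun x : ℝ => (x, t)) (by fun_prop) fun _ hx => ⟨hx, ht⟩

theorem intervalIntegrable_slice (hf : ContinuousOn f Q) (ht : t ∈ Ioo t₀ t₁)
    (hx₀ : x₀ ∈ Icc x₁ x₂) (hx : x ∈ Icc x₁ x₂) :
    IntervalIntegrable (fun z => f (z, t)) volume x₀ x :=
  ((continuousOn_slice hf ht).mono (uIcc_subset_Icc hx₀ hx)).intervalIntegrable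

theorem integral_dX (h₁₂ : x₁ < x₂) (sf : ContDiffOn ℝ ∞ f Q) (ht : t ∈ Ioo t₀ t₁) :
    ∫ x in x₁..x₂, dX Q f (x, t) = f (x₂, t) - f (x₁, t) :=
  intervalIntegral.integral_eq_sub_of_hasDerivAt_of_le h₁₂.le
    (continuousOn_slice sf.continuousOn ht) (fun _ hx => hasDerivAt_dX sf ht hx)
    (intervalIntegrable_slice ((isSmoothRegion_strip h₁₂).contDiffOn_dirDeriv sf).continuousOn
      ht (left_mem_Icc.2 h₁₂.le) (right_mem_Icc.2 h₁₂.le))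

theorem hasDerivAt_intervalIntegral (h₁₂ : x₁ < x₂) (sf : ContDiffOn ℝ ∞ f Q) (ht : t ∈ Ioo t₀ t₁)
    (hx₀ : x₀ ∈ Icc x₁ x₂) (hx : x ∈ Icc x₁ x₂) :
    HasDerivAt (fun s => ∫ z in x₀..x, f (z, s)) (∫ z in x₀..x, dT Q f (z, t)) t := by
  have hT := ((isSmoothRegion_strip h₁₂).contDiffOn_dirDeriv (e := (0, 1)) sf).continuousOn
  obtain ⟨K, hKt, hKsub, hK⟩ := local_compact_nhds (Ioo_mem_nhds ht.1 ht.2)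
  obtain ⟨C, hC⟩ := (isCompact_Icc.prod hK).exists_bound_of_continuousOn
    (hT.mono (prod_mono le_rfl hKsub))
  have hsub : uIoc x₀ x ⊆ Icc x₁ x₂ := uIoc_subset_uIcc.trans (uIcc_subset_Icc hx₀ hx)
  refine (intervalIntegral.hasDerivAt_integral_of_dominated_loc_of_deriv_le (𝕜 := ℝ)
    (F := fun s z => f (z, s)) (F' := fun s z => dT Q f (z, s)) (bound := fun _ => C) hKt ?_
    (intervalIntegrable_slice sf.continuousOn ht hx₀ hx)
    (intervalIntegrable_slice hT ht hx₀ hx).def'.aestronglyMeasurable ?_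
    intervalIntegrable_const ?_).2
  · filter_upwards [hKt] with s hs
    exact (intervalIntegrable_slice sf.continuousOn (hKsub hs) hx₀ hx).def'.aestronglyMeasurable
  · exact .of_forall fun z hz s hs => hC (z, s) ⟨hsub hz, hs⟩
  · exact .of_forall fun z hz s hs => hasDerivAt_dT sf (hKsub hs) (hsub hz)

theorem hasFDerivWithinAt_of_hasDerivWithinAt_fst (hp : p ∈ Q) (hg : ContinuousOn g Q)
    (hf : ∀ q ∈ Q, HasDerivWithinAt (fun y => f (y, q.2)) (g q) (Icc x₁ x₂) q.1)
    (hd : HasDerivAt (fun s => f (p.1, s)) d p.2) :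
    HasFDerivWithinAt f
      (g p • ContinuousLinearMap.fst ℝ ℝ ℝ + d • ContinuousLinearMap.snd ℝ ℝ ℝ) Q p := by
  have horizontal : (fun q : ℝ × ℝ => f q - f (p.1, q.2) - g p * (q.1 - p.1)) =o[𝓝[Q] p]
      fun q => q - p := by
    refine Asymptotics.isLittleO_iff.2 fun ε hε => ?_
    obtain ⟨r, hr, hball⟩ := Metric.mem_nhdsWithin_iff.1
      ((Metric.tendsto_nhds.1 (hg p hp) ε hε))
    filter_upwards [inter_mem_nhdsWithin Q (Metric.ball_mem_nhds p hr)] with q ⟨hq, hqr⟩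
    have hseg : uIcc p.1 q.1 ⊆ Icc x₁ x₂ := uIcc_subset_Icc hp.1 hq.1
    rw [Metric.mem_ball, Prod.dist_eq, max_lt_iff] at hqr
    have bound : ∀ y ∈ uIcc p.1 q.1, ‖g (y, q.2) - g p‖ ≤ ε := by
      intro y hy
      have hyr : dist (y, q.2) p < r :=
        max_lt ((abs_sub_left_of_mem_uIcc hy).trans_lt hqr.1) hqr.2
      exact (hball ⟨Metric.mem_ball.2 hyr, hseg hy, hq.2⟩).le
    have hderiv : ∀ y ∈ uIcc p.1 q.1, HasDerivWithinAt (fun y => f (y, q.2) - g p * y)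
        (g (y, q.2) - g p) (uIcc p.1 q.1) y := fun y hy =>
      ((hf (y, q.2) ⟨hseg hy, hq.2⟩).mono hseg).sub
        (by simpa using (hasDerivWithinAt_id y _).const_mul (g p))
    have hmvt := (convex_uIcc p.1 q.1).norm_image_sub_le_of_norm_hasDerivWithin_le
      hderiv bound left_mem_uIcc right_mem_uIcc
    calc ‖f q - f (p.1, q.2) - g p * (q.1 - p.1)‖
        = ‖f (q.1, q.2) - g p * q.1 - (f (p.1, q.2) - g p * p.1)‖ := by congr 1; ring
      _ ≤ ε * ‖q.1 - p.1‖ := hmvt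
      _ ≤ ε * ‖q - p‖ := by gcongr; exact norm_fst_le (q - p)
  have vertical : (fun q : ℝ × ℝ => f (p.1, q.2) - f p - d * (q.2 - p.2)) =o[𝓝[Q] p]
      fun q => q - p := by
    have hsnd : Tendsto Prod.snd (𝓝[Q] p) (𝓝 p.2) :=
      continuous_snd.continuousAt.mono_left nhdsWithin_le_nhds
    have := (hasDerivAt_iff_isLittleO.1 hd).comp_tendsto hsnd
    simp only [smul_eq_mul, mul_comm _ d] at this
    exact this.trans_isBigO (.of_bound 1 (.of_forall fun q => by
      rw [one_mul]; exact norm_snd_le (q - p)))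
  refine .of_isLittleO ((horizontal.add vertical).congr_left fun q => ?_)
  simp
  ring

/-- The primitive of `g` in the space variable that vanishes at `x = x₀`. -/
noncomputable def primitive (x₀ : ℝ) (g : ℝ × ℝ → ℝ) (q : ℝ × ℝ) : ℝ := ∫ z in x₀..q.1, g (z, q.2)

theorem hasDerivWithinAt_primitive (hg : ContinuousOn g Q) (hx₀ : x₀ ∈ Icc x₁ x₂)
    (hx : x ∈ Icc x₁ x₂) (ht : t ∈ Ioo t₀ t₁) :
    HasDerivWithinAt (fun z => primitive x₀ g (z, t)) (g (x, t)) (Icc x₁ x₂) x := by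
  have h₁₂ : x₁ ≤ x₂ := hx.1.trans hx.2
  set G : ℝ → ℝ := IccExtend h₁₂ ((Icc x₁ x₂).domRestrict fun z => g (z, t))
  have hG : Continuous G := (continuousOn_slice hg ht).domRestrict.Icc_extend'
  have hGg : ∀ z ∈ Icc x₁ x₂, G z = g (z, t) := fun z hz => IccExtend_of_mem h₁₂ _ hz
  rw [← hGg x hx]
  refine (hG.integral_hasStrictDerivAt x₀ x).hasDerivAt.hasDerivWithinAt.congr_of_mem
    (fun z hz => ?_) hx
  exact intervalIntegral.integral_congr fun y hy => (hGg y (uIcc_subset_Icc hx₀ hz hy)).symm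

theorem hasFDerivWithinAt_primitive (h₁₂ : x₁ < x₂) (sg : ContDiffOn ℝ ∞ g Q)
    (hx₀ : x₀ ∈ Icc x₁ x₂) (hp : p ∈ Q) :
    HasFDerivWithinAt (primitive x₀ g) (g p • ContinuousLinearMap.fst ℝ ℝ ℝ +
      primitive x₀ (dT Q g) p • ContinuousLinearMap.snd ℝ ℝ ℝ) Q p :=
  hasFDerivWithinAt_of_hasDerivWithinAt_fst hp sg.continuousOn
    (fun _ hq => hasDerivWithinAt_primitive sg.continuousOn hx₀ hq.1 hq.2)
    (hasDerivAt_intervalIntegral h₁₂ sg hp.2 hx₀ hp.1)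

theorem contDiffOn_primitive (h₁₂ : x₁ < x₂) (sg : ContDiffOn ℝ ∞ g Q) (hx₀ : x₀ ∈ Icc x₁ x₂) :
    ContDiffOn ℝ ∞ (primitive x₀ g) Q := by
  have hQ : IsSmoothRegion Q := isSmoothRegion_strip h₁₂
  rw [contDiffOn_infty]
  intro n
  induction n generalizing g with
  | zero =>
    exact contDiffOn_zero.2 fun p hp =>
      (hasFDerivWithinAt_primitive h₁₂ sg hx₀ hp).continuousWithinAt
  | succ n ih =>
    have hg : ContDiffOn ℝ n g Q := sg.of_le (mod_cast le_top)
    exact (contDiffOn_succ_iff_hasFDerivWithinAt_of_uniqueDiffOn hQ.uniqueDiffOn).2 ⟨by simp, _,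
      (hg.smul contDiffOn_const).add ((ih (hQ.contDiffOn_dirDeriv sg)).smul contDiffOn_const),
      fun p hp => hasFDerivWithinAt_primitive h₁₂ sg hx₀ hp⟩

theorem dX_primitive (h₁₂ : x₁ < x₂) (sg : ContDiffOn ℝ ∞ g Q) (hx₀ : x₀ ∈ Icc x₁ x₂) :
    EqOn (dX Q (primitive x₀ g)) g Q := fun p hp => by
  simp [dirDeriv, (hasFDerivWithinAt_primitive h₁₂ sg hx₀ hp).fderivWithin
    ((isSmoothRegion_strip h₁₂).uniqueDiffOn p hp)]

theorem dT_primitive (h₁₂ : x₁ < x₂) (sg : ContDiffOn ℝ ∞ g Q) (hx₀ : x₀ ∈ Icc x₁ x₂) :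
    EqOn (dT Q (primitive x₀ g)) (primitive x₀ (dT Q g)) Q := fun p hp => by
  simp [dirDeriv, (hasFDerivWithinAt_primitive h₁₂ sg hx₀ hp).fderivWithin
    ((isSmoothRegion_strip h₁₂).uniqueDiffOn p hp)]

theorem mul_primitive_nonneg (hx₀ : x₀ ∈ Icc x₁ x₂) (hx : x ∈ Icc x₁ x₂)
    (hg : ∀ z ∈ Icc x₁ x₂, 0 ≤ g (z, t)) : 0 ≤ (x - x₀) * primitive x₀ g (x, t) := by
  have hnonneg : ∀ y ∈ Icc x₁ x₂, ∀ z ∈ Icc x₁ x₂, y ≤ z → 0 ≤ ∫ r in y..z, g (r, t) :=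
    fun y hy z hz hyz => intervalIntegral.integral_nonneg hyz fun r hr =>
      hg r ⟨hy.1.trans hr.1, hr.2.trans hz.2⟩
  rcases le_total x₀ x with h | h
  · exact mul_nonneg (sub_nonneg.2 h) (hnonneg _ hx₀ _ hx h)
  · refine mul_nonneg_of_nonpos_of_nonpos (sub_nonpos.2 h) ?_
    rw [primitive, intervalIntegral.integral_symm]
    exact neg_nonpos.2 (hnonneg _ hx _ hx₀ h)

theorem sq_integral_mul_le {u k r : ℝ → ℝ} (h₁₂ : x₁ ≤ x₂) (hu : ContinuousOn u (Icc x₁ x₂))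
    (hk : ContinuousOn k (Icc x₁ x₂)) (hr : ContinuousOn r (Icc x₁ x₂))
    (hr0 : ∀ x ∈ Icc x₁ x₂, 0 ≤ r x) :
    (∫ x in x₁..x₂, u x * k x * r x) ^ 2 ≤
      (∫ x in x₁..x₂, u x ^ 2 * r x) * ∫ x in x₁..x₂, k x ^ 2 * r x := by
  have huu : IntervalIntegrable (fun x => u x ^ 2 * r x) volume x₁ x₂ :=
    ((hu.pow 2).mul hr).intervalIntegrable_of_Icc h₁₂
  have huk : IntervalIntegrable (fun x => u x * k x * r x) volume x₁ x₂ :=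
    ((hu.mul hk).mul hr).intervalIntegrable_of_Icc h₁₂
  have hkk : IntervalIntegrable (fun x => k x ^ 2 * r x) volume x₁ x₂ :=
    ((hk.pow 2).mul hr).intervalIntegrable_of_Icc h₁₂
  have quadratic_nonneg : ∀ z : ℝ, 0 ≤ (∫ x in x₁..x₂, k x ^ 2 * r x) * (z * z) +
      (2 * ∫ x in x₁..x₂, u x * k x * r x) * z + ∫ x in x₁..x₂, u x ^ 2 * r x := by
    intro z
    calc (0 : ℝ) ≤ ∫ x in x₁..x₂, (u x + z * k x) ^ 2 * r x :=
          intervalIntegral.integral_nonneg h₁₂ fun x hx => mul_nonneg (sq_nonneg _) (hr0 x hx)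
      _ = _ := by
        rw [← intervalIntegral.integral_mul_const, ← intervalIntegral.integral_const_mul,
          ← intervalIntegral.integral_mul_const,
          ← intervalIntegral.integral_add (hkk.mul_const _) ((huk.const_mul _).mul_const _),
          ← intervalIntegral.integral_add
            ((hkk.mul_const _).add ((huk.const_mul _).mul_const _)) huu]
        congr 1
        ext x
        ring
  have := discrim_le_zero quadratic_nonneg
  rw [discrim] at this
  linarith

end ParametricIntegrals

section FrequencyFunction

/-- A weight `μ` on `[x₁, x₂] × (s, T)` adapted to the diffusion coefficient `a`: it is transported
by a velocity field `V` that points outwards at the lateral boundary and stretches `a` like the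
self-similar flow of the backward heat kernel with pole at time `T`. -/
structure IsFrequencyWeight (x₁ x₂ s T : ℝ) (a V μ : ℝ × ℝ → ℝ) : Prop where
  contDiffOn_a : ContDiffOn ℝ ∞ a (strip x₁ x₂ s T)
  contDiffOn_velocity : ContDiffOn ℝ ∞ V (strip x₁ x₂ s T)
  contDiffOn : ContDiffOn ℝ ∞ μ (strip x₁ x₂ s T)
  a_pos : ∀ q ∈ strip x₁ x₂ s T, 0 < a q
  pos : ∀ q ∈ strip x₁ x₂ s T, 0 < μ q
  transport : EqOn (dT (strip x₁ x₂ s T) μ) (dX (strip x₁ x₂ s T) (μ * V)) (strip x₁ x₂ s T)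
  stretch : ∀ q ∈ strip x₁ x₂ s T,
    dT (strip x₁ x₂ s T) a q + 2 * a q * dX (strip x₁ x₂ s T) V q =
      V q * dX (strip x₁ x₂ s T) a q + a q / (T - q.2)
  velocity_left : ∀ t ∈ Ioo s T, V (x₁, t) ≤ 0
  velocity_right : ∀ t ∈ Ioo s T, 0 ≤ V (x₂, t)

/-- The derivative of `w` along the flow of the velocity field `-V`. -/
noncomputable def materialDeriv (Q : Set (ℝ × ℝ)) (V w : ℝ × ℝ → ℝ) : ℝ × ℝ → ℝ :=
  dT Q w - V * dX Q w

/-- The operator `μ⁻¹ ∂ₓ (μ a ∂ₓ w)`, which is symmetric for the weight `μ`. -/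
noncomputable def weightedLaplacian (Q : Set (ℝ × ℝ)) (a μ w : ℝ × ℝ → ℝ) : ℝ × ℝ → ℝ :=
  μ⁻¹ * dX Q (μ * a * dX Q w)

/-- The square of the weighted `L²` norm of `w` at time `t`. -/
noncomputable def weightedMass (x₁ x₂ : ℝ) (μ w : ℝ × ℝ → ℝ) (t : ℝ) : ℝ :=
  ∫ x in x₁..x₂, w (x, t) ^ 2 * μ (x, t)

/-- The weighted Dirichlet energy of `w` at time `t`. -/
noncomputable def dirichletEnergy (Q : Set (ℝ × ℝ)) (x₁ x₂ : ℝ) (a μ w : ℝ × ℝ → ℝ) (t : ℝ) : ℝ :=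
  ∫ x in x₁..x₂, a (x, t) * dX Q w (x, t) ^ 2 * μ (x, t)

variable {x₁ x₂ s T t M : ℝ} {a V μ w : ℝ × ℝ → ℝ}

local notation "Q" => strip x₁ x₂ s T

section WeightedIntegral

open MeasureTheory

variable {u σ l r : ℝ → ℝ} (h₁₂ : x₁ ≤ x₂) (hu : ContinuousOn u (Icc x₁ x₂))
  (hσ : ContinuousOn σ (Icc x₁ x₂)) (hl : ContinuousOn l (Icc x₁ x₂))
  (hr : ContinuousOn r (Icc x₁ x₂)) (hr0 : ∀ x ∈ Icc x₁ x₂, 0 ≤ r x)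
include h₁₂ hu hσ hl hr hr0

omit hu hr0 in
theorem integral_sq_add : ∫ x in x₁..x₂, (σ x + l x) ^ 2 * r x =
    4 * (∫ x in x₁..x₂, l x * σ x * r x) + ∫ x in x₁..x₂, (σ x - l x) ^ 2 * r x := by
  have hlσ : IntervalIntegrable (fun x => l x * σ x * r x) volume x₁ x₂ :=
    ((hl.mul hσ).mul hr).intervalIntegrable_of_Icc h₁₂
  have hff : IntervalIntegrable (fun x => (σ x - l x) ^ 2 * r x) volume x₁ x₂ :=
    (((hσ.sub hl).pow 2).mul hr).intervalIntegrable_of_Icc h₁₂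
  rw [← intervalIntegral.integral_const_mul, ← intervalIntegral.integral_add (hlσ.const_mul 4) hff]
  congr 1
  ext x
  ring

theorem sq_integral_add_integral_le :
    ((∫ x in x₁..x₂, u x * σ x * r x) + ∫ x in x₁..x₂, u x * l x * r x) ^ 2 ≤
      (∫ x in x₁..x₂, u x ^ 2 * r x) * ∫ x in x₁..x₂, (σ x + l x) ^ 2 * r x := by
  have huσ : IntervalIntegrable (fun x => u x * σ x * r x) volume x₁ x₂ :=
    ((hu.mul hσ).mul hr).intervalIntegrable_of_Icc h₁₂
  have hul : IntervalIntegrable (fun x => u x * l x * r x) volume x₁ x₂ :=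
    ((hu.mul hl).mul hr).intervalIntegrable_of_Icc h₁₂
  rw [← intervalIntegral.integral_add huσ hul]
  convert sq_integral_mul_le (k := fun x => σ x + l x) h₁₂ hu (hσ.add hl) hr hr0 using 4
  ring

theorem neg_integral_add_integral_le :
    -((∫ x in x₁..x₂, u x ^ 2 * r x) + ∫ x in x₁..x₂, (σ x - l x) ^ 2 * r x) ≤
      2 * ((∫ x in x₁..x₂, u x * σ x * r x) - ∫ x in x₁..x₂, u x * l x * r x) := by
  have huu : IntervalIntegrable (fun x => u x ^ 2 * r x) volume x₁ x₂ :=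
    ((hu.pow 2).mul hr).intervalIntegrable_of_Icc h₁₂
  have huσ : IntervalIntegrable (fun x => u x * σ x * r x) volume x₁ x₂ :=
    ((hu.mul hσ).mul hr).intervalIntegrable_of_Icc h₁₂
  have hul : IntervalIntegrable (fun x => u x * l x * r x) volume x₁ x₂ :=
    ((hu.mul hl).mul hr).intervalIntegrable_of_Icc h₁₂
  have hff : IntervalIntegrable (fun x => (σ x - l x) ^ 2 * r x) volume x₁ x₂ :=
    (((hσ.sub hl).pow 2).mul hr).intervalIntegrable_of_Icc h₁₂
  rw [← intervalIntegral.integral_add huu hff, ← intervalIntegral.integral_sub huσ hul,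
    ← intervalIntegral.integral_const_mul, ← intervalIntegral.integral_neg]
  refine intervalIntegral.integral_mono_on h₁₂ (huu.add hff).neg ((huσ.sub hul).const_mul 2)
    fun x hx => ?_
  have := mul_nonneg (sq_nonneg (u x + (σ x - l x))) (hr0 x hx)
  linarith

end WeightedIntegral

theorem hasDerivAt_integral_of_dT_eq {f g J : ℝ × ℝ → ℝ} (h₁₂ : x₁ < x₂)
    (sf : ContDiffOn ℝ ∞ f Q) (hg : ContinuousOn g Q) (sJ : ContDiffOn ℝ ∞ J Q)
    (hf : EqOn (dT Q f) (fun q => g q + dX Q J q) Q) (ht : t ∈ Ioo s T) :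
    HasDerivAt (fun r => ∫ x in x₁..x₂, f (x, r))
      ((∫ x in x₁..x₂, g (x, t)) + (J (x₂, t) - J (x₁, t))) t := by
  have hx₁ : x₁ ∈ Icc x₁ x₂ := left_mem_Icc.2 h₁₂.le
  have hx₂ : x₂ ∈ Icc x₁ x₂ := right_mem_Icc.2 h₁₂.le
  convert hasDerivAt_intervalIntegral h₁₂ sf ht hx₁ hx₂ using 1
  rw [← integral_dX h₁₂ sJ ht, ← intervalIntegral.integral_add
    (intervalIntegrable_slice hg ht hx₁ hx₂) (intervalIntegrable_slice
      ((isSmoothRegion_strip h₁₂).contDiffOn_dirDeriv sJ).continuousOn ht hx₁ hx₂)]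
  exact intervalIntegral.integral_congr fun x hx => (hf ⟨uIcc_of_le h₁₂.le ▸ hx, ht⟩).symm

theorem frequency_inequalities_of_integrals {τ H I I' A B G N F : ℝ} (hτ : 0 < τ) (hτ1 : τ ≤ 1)
    (hM : 0 ≤ M) (hH : 0 ≤ H) (hI : 0 ≤ I) (hIB : I = -B) (hN : 0 ≤ N) (hNG : N = 4 * G + F)
    (cauchy : (A + B) ^ 2 ≤ H * N) (young : -(H + F) ≤ 2 * (A - B)) (error : F ≤ M * (H + I))
    (hI' : I' ≤ τ⁻¹ * I - 2 * G) :
    -1 * I + τ * I' ≤ (M + 2) * (H + τ * I) ∧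
      (-1 * I + τ * I') * H - τ * I * (2 * A) ≤ (M + 2) * (H + τ * I) * H ∧
      -((M + 2) * (H + τ * I)) ≤ τ * (2 * A) := by
  have hD : 0 ≤ τ * I := mul_nonneg hτ.le hI
  have hτH : τ * H ≤ H := mul_le_of_le_one_left hH hτ1
  have hMD : 0 ≤ M * (H + τ * I) := by positivity
  have hτF : τ * F ≤ M * (H + τ * I) := by
    calc τ * F ≤ τ * (M * (H + I)) := by gcongr
      _ = M * (τ * H + τ * I) := by ring
      _ ≤ M * (H + τ * I) := by gcongr
  have hD' : -1 * I + τ * I' ≤ τ * (F - N) / 2 := by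
    calc -1 * I + τ * I' ≤ -1 * I + τ * (τ⁻¹ * I - 2 * G) := by gcongr
      _ = τ * (F - N) / 2 := by rw [hNG]; field_simp; ring
  have hcross : 4 * (A * B) ≤ H * N := by linarith [sq_nonneg (A - B)]
  refine ⟨by linarith [mul_nonneg hτ.le hN], ?_, ?_⟩
  · calc (-1 * I + τ * I') * H - τ * I * (2 * A)
        ≤ τ * (F - N) / 2 * H - τ * I * (2 * A) := by gcongr
      _ = τ * F / 2 * H + τ / 2 * (4 * (A * B) - H * N) := by rw [hIB]; ring
      _ ≤ τ * F / 2 * H := by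
        linarith [mul_nonneg (half_pos hτ).le (sub_nonneg.2 hcross)]
      _ ≤ (M + 2) * (H + τ * I) * H := by gcongr; linarith
  · have := mul_le_mul_of_nonneg_left young hτ.le
    linarith [mul_comm τ I, congrArg (τ * ·) hIB]

namespace IsFrequencyWeight

variable (hμ : IsFrequencyWeight x₁ x₂ s T a V μ) (h₁₂ : x₁ < x₂)
  (sw : ContDiffOn ℝ ∞ w (strip x₁ x₂ s T))
include hμ h₁₂ sw

theorem contDiffOn_materialDeriv : ContDiffOn ℝ ∞ (materialDeriv Q V w) Q :=
  have hQ : IsSmoothRegion Q := isSmoothRegion_strip h₁₂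
  (hQ.contDiffOn_dirDeriv sw).sub (hμ.contDiffOn_velocity.mul (hQ.contDiffOn_dirDeriv sw))

theorem contDiffOn_weightedLaplacian : ContDiffOn ℝ ∞ (weightedLaplacian Q a μ w) Q :=
  have hQ : IsSmoothRegion Q := isSmoothRegion_strip h₁₂
  (hμ.contDiffOn.inv fun q hq => (hμ.pos q hq).ne').mul
    (hQ.contDiffOn_dirDeriv ((hμ.contDiffOn.mul hμ.contDiffOn_a).mul (hQ.contDiffOn_dirDeriv sw)))

theorem dT_mass : EqOn (dT Q (w * w * μ))
    (fun q => 2 * (w q * materialDeriv Q V w q * μ q) + dX Q (w * w * (μ * V)) q) Q :=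
  fun q hq => by
  have hQ : IsSmoothRegion Q := isSmoothRegion_strip h₁₂
  have sww : ContDiffOn ℝ ∞ (w * w) Q := sw.mul sw
  have sμV : ContDiffOn ℝ ∞ (μ * V) Q := hμ.contDiffOn.mul hμ.contDiffOn_velocity
  have htr := hμ.transport hq
  simp only [dX, dT, hQ.dirDeriv_mul sww hμ.contDiffOn hq, hQ.dirDeriv_mul sww sμV hq,
    hQ.dirDeriv_mul sw sw hq, materialDeriv, Pi.add_apply, Pi.mul_apply, Pi.sub_apply] at htr ⊢
  linear_combination w q * w q * htr

theorem dX_flux : EqOn (dX Q (w * (μ * a * dX Q w)))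
    (fun q => w q * weightedLaplacian Q a μ w q * μ q + a q * dX Q w q ^ 2 * μ q) Q :=
  fun q hq => by
  have hQ : IsSmoothRegion Q := isSmoothRegion_strip h₁₂
  have hne := (hμ.pos q hq).ne'
  have sJ : ContDiffOn ℝ ∞ (μ * a * dX Q w) Q :=
    (hμ.contDiffOn.mul hμ.contDiffOn_a).mul (hQ.contDiffOn_dirDeriv sw)
  simp only [dX, hQ.dirDeriv_mul sw sJ hq, weightedLaplacian, Pi.add_apply, Pi.mul_apply,
    Pi.inv_apply]
  field_simp

theorem dT_energy : EqOn (dT Q (a * (dX Q w * dX Q w) * μ))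
    (fun q => (T - q.2)⁻¹ * (a q * dX Q w q ^ 2 * μ q) -
      2 * (weightedLaplacian Q a μ w q * materialDeriv Q V w q * μ q) +
      dX Q (μ * a * dX Q w * (dT Q w + materialDeriv Q V w)) q) Q := fun q hq => by
  have hQ : IsSmoothRegion Q := isSmoothRegion_strip h₁₂
  have hinv := inv_mul_cancel₀ (hμ.pos q hq).ne'
  have sX : ContDiffOn ℝ ∞ (dX Q w) Q := hQ.contDiffOn_dirDeriv sw
  have sT : ContDiffOn ℝ ∞ (dT Q w) Q := hQ.contDiffOn_dirDeriv sw
  have sXX : ContDiffOn ℝ ∞ (dX Q w * dX Q w) Q := sX.mul sX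
  have saXX : ContDiffOn ℝ ∞ (a * (dX Q w * dX Q w)) Q := hμ.contDiffOn_a.mul sXX
  have sμa : ContDiffOn ℝ ∞ (μ * a) Q := hμ.contDiffOn.mul hμ.contDiffOn_a
  have sJ : ContDiffOn ℝ ∞ (μ * a * dX Q w) Q := sμa.mul sX
  have sVX : ContDiffOn ℝ ∞ (V * dX Q w) Q := hμ.contDiffOn_velocity.mul sX
  have sS : ContDiffOn ℝ ∞ (dT Q w - V * dX Q w) Q := sT.sub sVX
  have sTS : ContDiffOn ℝ ∞ (dT Q w + (dT Q w - V * dX Q w)) Q := sT.add sS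
  have htr := hμ.transport hq
  have hst := hμ.stretch q hq
  have hcomm := hQ.dirDeriv_comm (e := (0, 1)) (e' := (1, 0)) sw hq
  simp only [dX, dT, materialDeriv, weightedLaplacian, hQ.dirDeriv_mul saXX hμ.contDiffOn hq,
    hQ.dirDeriv_mul hμ.contDiffOn_a sXX hq, hQ.dirDeriv_mul sX sX hq,
    hQ.dirDeriv_mul sJ sTS hq, hQ.dirDeriv_add sT sS hq, hQ.dirDeriv_sub sT sVX hq,
    hQ.dirDeriv_mul hμ.contDiffOn_velocity sX hq, hQ.dirDeriv_mul sμa sX hq,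
    hQ.dirDeriv_mul hμ.contDiffOn hμ.contDiffOn_a hq, hQ.dirDeriv_mul hμ.contDiffOn
    hμ.contDiffOn_velocity hq, Pi.add_apply, Pi.mul_apply, Pi.sub_apply, Pi.inv_apply]
    at htr hst hcomm ⊢
  linear_combination a q * dX Q w q ^ 2 * htr + 2 * a q * dX Q w q * μ q * hcomm +
    dX Q w q ^ 2 * μ q * hst + 2 * (dT Q w q - V q * dX Q w q) * (μ q * a q * dX Q (dX Q w) q +
      (μ q * dX Q a q + dX Q μ q * a q) * dX Q w q) * hinv

omit sw in
theorem weightedMass_nonneg (ht : t ∈ Ioo s T) : 0 ≤ weightedMass x₁ x₂ μ w t :=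
  intervalIntegral.integral_nonneg h₁₂.le fun _ hx =>
    mul_nonneg (sq_nonneg _) (hμ.pos _ ⟨hx, ht⟩).le

omit sw in
theorem dirichletEnergy_nonneg (ht : t ∈ Ioo s T) : 0 ≤ dirichletEnergy Q x₁ x₂ a μ w t :=
  intervalIntegral.integral_nonneg h₁₂.le fun _ hx =>
    mul_nonneg (mul_nonneg (hμ.a_pos _ ⟨hx, ht⟩).le (sq_nonneg _)) (hμ.pos _ ⟨hx, ht⟩).le

theorem integral_error_le (ht : t ∈ Ioo s T) (hf : ∀ q ∈ Q, (materialDeriv Q V w q -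
      weightedLaplacian Q a μ w q) ^ 2 ≤ M * (w q ^ 2 + a q * dX Q w q ^ 2)) :
    ∫ x in x₁..x₂, (materialDeriv Q V w (x, t) - weightedLaplacian Q a μ w (x, t)) ^ 2 * μ (x, t) ≤
      M * (weightedMass x₁ x₂ μ w t + dirichletEnergy Q x₁ x₂ a μ w t) := by
  have hx₁ : x₁ ∈ Icc x₁ x₂ := left_mem_Icc.2 h₁₂.le
  have hx₂ : x₂ ∈ Icc x₁ x₂ := right_mem_Icc.2 h₁₂.le
  have sX := (isSmoothRegion_strip h₁₂).contDiffOn_dirDeriv (e := (1, 0)) sw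
  have herror := intervalIntegrable_slice
    (f := fun q => (materialDeriv Q V w q - weightedLaplacian Q a μ w q) ^ 2 * μ q)
    ((((hμ.contDiffOn_materialDeriv h₁₂ sw).sub
      (hμ.contDiffOn_weightedLaplacian h₁₂ sw)).pow 2).mul hμ.contDiffOn).continuousOn ht hx₁ hx₂
  have hmass := intervalIntegrable_slice (f := fun q => w q ^ 2 * μ q)
    ((sw.pow 2).mul hμ.contDiffOn).continuousOn ht hx₁ hx₂
  have henergy := intervalIntegrable_slice (f := fun q => a q * dX Q w q ^ 2 * μ q)
    ((hμ.contDiffOn_a.mul (sX.pow 2)).mul hμ.contDiffOn).continuousOn ht hx₁ hx₂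
  rw [weightedMass, dirichletEnergy, ← intervalIntegral.integral_add hmass henergy,
    ← intervalIntegral.integral_const_mul]
  refine intervalIntegral.integral_mono_on h₁₂.le herror ((hmass.add henergy).const_mul M)
    fun x hx => ?_
  have := mul_le_mul_of_nonneg_right (hf (x, t) ⟨hx, ht⟩) (hμ.pos (x, t) ⟨hx, ht⟩).le
  linarith

variable (hw : ∀ t ∈ Ioo s T, w (x₁, t) = 0 ∧ w (x₂, t) = 0) (ht : t ∈ Ioo s T)
include hw ht

theorem hasDerivAt_weightedMass : HasDerivAt (weightedMass x₁ x₂ μ w)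
    (2 * ∫ x in x₁..x₂, w (x, t) * materialDeriv Q V w (x, t) * μ (x, t)) t := by
  have smass : ContDiffOn ℝ ∞ (w * w * μ) Q := (sw.mul sw).mul hμ.contDiffOn
  have sflux : ContDiffOn ℝ ∞ (w * w * (μ * V)) Q :=
    (sw.mul sw).mul (hμ.contDiffOn.mul hμ.contDiffOn_velocity)
  have sprod : ContinuousOn (fun q => 2 * (w q * materialDeriv Q V w q * μ q)) Q :=
    continuousOn_const.mul ((sw.mul (hμ.contDiffOn_materialDeriv h₁₂ sw)).mul
      hμ.contDiffOn).continuousOn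
  have := hasDerivAt_integral_of_dT_eq h₁₂ smass sprod sflux (hμ.dT_mass h₁₂ sw) ht
  unfold weightedMass
  simpa [sq, (hw t ht).1, (hw t ht).2] using this

theorem dirichletEnergy_eq : dirichletEnergy Q x₁ x₂ a μ w t =
    -∫ x in x₁..x₂, w (x, t) * weightedLaplacian Q a μ w (x, t) * μ (x, t) := by
  have hx₁ : x₁ ∈ Icc x₁ x₂ := left_mem_Icc.2 h₁₂.le
  have hx₂ : x₂ ∈ Icc x₁ x₂ := right_mem_Icc.2 h₁₂.le
  have sX := (isSmoothRegion_strip h₁₂).contDiffOn_dirDeriv (e := (1, 0)) sw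
  have sflux : ContDiffOn ℝ ∞ (w * (μ * a * dX Q w)) Q :=
    sw.mul ((hμ.contDiffOn.mul hμ.contDiffOn_a).mul sX)
  have hflux := integral_dX h₁₂ sflux ht
  rw [intervalIntegral.integral_congr fun x hx =>
      hμ.dX_flux h₁₂ sw (⟨uIcc_of_le h₁₂.le ▸ hx, ht⟩ : (x, t) ∈ Q),
    intervalIntegral.integral_add
      (intervalIntegrable_slice (f := fun q => w q * weightedLaplacian Q a μ w q * μ q)
        ((sw.mul (hμ.contDiffOn_weightedLaplacian h₁₂ sw)).mul hμ.contDiffOn).continuousOn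
        ht hx₁ hx₂)
      (intervalIntegrable_slice (f := fun q => a q * dX Q w q ^ 2 * μ q)
        ((hμ.contDiffOn_a.mul (sX.pow 2)).mul hμ.contDiffOn).continuousOn ht hx₁ hx₂)] at hflux
  simp only [Pi.mul_apply, (hw t ht).1, (hw t ht).2, zero_mul, sub_zero] at hflux
  exact eq_neg_of_add_eq_zero_right hflux

theorem energyFlux_le : (μ * a * dX Q w * (dT Q w + materialDeriv Q V w)) (x₂, t) -
    (μ * a * dX Q w * (dT Q w + materialDeriv Q V w)) (x₁, t) ≤ 0 := by
  have hx₁ : x₁ ∈ Icc x₁ x₂ := left_mem_Icc.2 h₁₂.le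
  have hx₂ : x₂ ∈ Icc x₁ x₂ := right_mem_Icc.2 h₁₂.le
  have hlat : Ioo s T ∈ 𝓝 t := Ioo_mem_nhds ht.1 ht.2
  have hT₁ : dT Q w (x₁, t) = 0 := dT_eq_of_hasDerivAt sw ht hx₁
    ((hasDerivAt_const t 0).congr_of_eventuallyEq (mem_of_superset hlat fun r hr => (hw r hr).1))
  have hT₂ : dT Q w (x₂, t) = 0 := dT_eq_of_hasDerivAt sw ht hx₂
    ((hasDerivAt_const t 0).congr_of_eventuallyEq (mem_of_superset hlat fun r hr => (hw r hr).2))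
  have dissipation {x : ℝ} (hx : x ∈ Icc x₁ x₂) : 0 ≤ μ (x, t) * a (x, t) * dX Q w (x, t) ^ 2 :=
    mul_nonneg (mul_pos (hμ.pos _ ⟨hx, ht⟩) (hμ.a_pos _ ⟨hx, ht⟩)).le (sq_nonneg _)
  simp only [materialDeriv, Pi.mul_apply, Pi.add_apply, Pi.sub_apply, hT₁, hT₂]
  linarith [mul_nonneg (hμ.velocity_right t ht) (dissipation hx₂),
    mul_nonneg (neg_nonneg.2 (hμ.velocity_left t ht)) (dissipation hx₁)]

theorem deriv_dirichletEnergy_le :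
    DifferentiableAt ℝ (dirichletEnergy Q x₁ x₂ a μ w) t ∧
    deriv (dirichletEnergy Q x₁ x₂ a μ w) t ≤ (T - t)⁻¹ * dirichletEnergy Q x₁ x₂ a μ w t -
      2 * ∫ x in x₁..x₂, weightedLaplacian Q a μ w (x, t) * materialDeriv Q V w (x, t) *
        μ (x, t) := by
  have hQ : IsSmoothRegion Q := isSmoothRegion_strip h₁₂
  have hx₁ : x₁ ∈ Icc x₁ x₂ := left_mem_Icc.2 h₁₂.le
  have hx₂ : x₂ ∈ Icc x₁ x₂ := right_mem_Icc.2 h₁₂.le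
  have sX : ContDiffOn ℝ ∞ (dX Q w) Q := hQ.contDiffOn_dirDeriv sw
  have sS := hμ.contDiffOn_materialDeriv h₁₂ sw
  have senergy : ContDiffOn ℝ ∞ (a * (dX Q w * dX Q w) * μ) Q :=
    (hμ.contDiffOn_a.mul (sX.mul sX)).mul hμ.contDiffOn
  have henergy : ContinuousOn (fun q => a q * dX Q w q ^ 2 * μ q) Q :=
    ((hμ.contDiffOn_a.mul (sX.pow 2)).mul hμ.contDiffOn).continuousOn
  have hwork : ContinuousOn (fun q => weightedLaplacian Q a μ w q * materialDeriv Q V w q * μ q)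
      Q := (((hμ.contDiffOn_weightedLaplacian h₁₂ sw).mul sS).mul hμ.contDiffOn).continuousOn
  have hstretch : ContinuousOn (fun q : ℝ × ℝ => (T - q.2)⁻¹) Q :=
    (continuousOn_const.sub continuousOn_snd).inv₀ fun q hq => (sub_pos.2 hq.2.2).ne'
  have hdensity : ContinuousOn (fun q => (T - q.2)⁻¹ * (a q * dX Q w q ^ 2 * μ q) -
      2 * (weightedLaplacian Q a μ w q * materialDeriv Q V w q * μ q)) Q :=
    (hstretch.mul henergy).sub (continuousOn_const.mul hwork)
  have sflux : ContDiffOn ℝ ∞ (μ * a * dX Q w * (dT Q w + materialDeriv Q V w)) Q :=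
    ((hμ.contDiffOn.mul hμ.contDiffOn_a).mul sX).mul ((hQ.contDiffOn_dirDeriv sw).add sS)
  suffices h : HasDerivAt (dirichletEnergy Q x₁ x₂ a μ w) _ t from
    ⟨h.differentiableAt, h.deriv.le.trans
      (add_le_of_le_of_nonpos le_rfl (hμ.energyFlux_le h₁₂ sw hw ht))⟩
  convert hasDerivAt_integral_of_dT_eq h₁₂ senergy hdensity sflux (hμ.dT_energy h₁₂ sw) ht
    using 2
  · simp only [dirichletEnergy, sq, Pi.mul_apply]
  · rw [dirichletEnergy, ← intervalIntegral.integral_const_mul,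
      ← intervalIntegral.integral_const_mul, ← intervalIntegral.integral_sub
        ((intervalIntegrable_slice henergy ht hx₁ hx₂).const_mul _)
        ((intervalIntegrable_slice hwork ht hx₁ hx₂).const_mul 2)]

theorem frequency_inequalities (hM : 0 ≤ M) (hf : ∀ q ∈ Q, (materialDeriv Q V w q -
      weightedLaplacian Q a μ w q) ^ 2 ≤ M * (w q ^ 2 + a q * dX Q w q ^ 2))
    (hsT : T - s ≤ 1) :
    let H := weightedMass x₁ x₂ μ w t
    let H' := 2 * ∫ x in x₁..x₂, w (x, t) * materialDeriv Q V w (x, t) * μ (x, t)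
    let D := (T - t) * dirichletEnergy Q x₁ x₂ a μ w t
    let D' := -1 * dirichletEnergy Q x₁ x₂ a μ w t +
      (T - t) * deriv (dirichletEnergy Q x₁ x₂ a μ w) t
    D' ≤ (M + 2) * (H + D) ∧ D' * H - D * H' ≤ (M + 2) * (H + D) * H ∧
      -((M + 2) * (H + D)) ≤ (T - t) * H' := by
  have hw_cont := continuousOn_slice sw.continuousOn ht
  have hS := continuousOn_slice (hμ.contDiffOn_materialDeriv h₁₂ sw).continuousOn ht
  have hL := continuousOn_slice (hμ.contDiffOn_weightedLaplacian h₁₂ sw).continuousOn ht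
  have hμ_cont := continuousOn_slice hμ.contDiffOn.continuousOn ht
  have hμ0 : ∀ x ∈ Icc x₁ x₂, 0 ≤ μ (x, t) := fun x hx => (hμ.pos _ ⟨hx, ht⟩).le
  exact frequency_inequalities_of_integrals (sub_pos.2 ht.2) (by linarith [ht.1]) hM
    (hμ.weightedMass_nonneg h₁₂ ht) (hμ.dirichletEnergy_nonneg h₁₂ ht)
    (hμ.dirichletEnergy_eq h₁₂ sw hw ht)
    (intervalIntegral.integral_nonneg h₁₂.le fun x hx => mul_nonneg (sq_nonneg _) (hμ0 x hx))
    (integral_sq_add h₁₂.le hS hL hμ_cont)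
    (sq_integral_add_integral_le h₁₂.le hw_cont hS hL hμ_cont hμ0)
    (neg_integral_add_integral_le h₁₂.le hw_cont hS hL hμ_cont hμ0)
    (hμ.integral_error_le h₁₂ sw ht hf) (hμ.deriv_dirichletEnergy_le h₁₂ sw hw ht).2

omit ht in
theorem exists_mul_pow_le_weightedMass (hM : 0 ≤ M) (hf : ∀ q ∈ Q, (materialDeriv Q V w q -
      weightedLaplacian Q a μ w q) ^ 2 ≤ M * (w q ^ 2 + a q * dX Q w q ^ 2))
    (hsT : T - s ≤ 1) (ht : t ∈ Ioo s T) (hpos : 0 < weightedMass x₁ x₂ μ w t) :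
    ∃ n : ℕ, ∃ k > 0, ∀ r ∈ Ico t T, k * (T - r) ^ n ≤ weightedMass x₁ x₂ μ w r := by
  have hIco : ∀ r ∈ Ico t T, r ∈ Ioo s T := fun r hr => ⟨ht.1.trans_le hr.1, hr.2⟩
  have hineq := fun r hr => hμ.frequency_inequalities h₁₂ sw hw (hIco r hr) hM hf hsT
  exact exists_mul_pow_le_of_frequency_le (by linarith)
    (fun r hr => hμ.hasDerivAt_weightedMass h₁₂ sw hw (hIco r hr))
    (fun r hr => ((hasDerivAt_id r).const_sub T).mul
      (hμ.deriv_dirichletEnergy_le h₁₂ sw hw (hIco r hr)).1.hasDerivAt)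
    (fun r hr => hμ.weightedMass_nonneg h₁₂ (hIco r hr))
    (fun r hr => mul_nonneg (sub_nonneg.2 hr.2.le) (hμ.dirichletEnergy_nonneg h₁₂ (hIco r hr)))
    (fun r hr => (hineq r hr).1) (fun r hr => (hineq r hr).2.1) (fun r hr => (hineq r hr).2.2)
    ht.2 hpos

end IsFrequencyWeight

end FrequencyFunction

theorem dirDeriv_comp {E : Type*} [NormedAddCommGroup E] [NormedSpace ℝ E] {Q : Set E} {e p : E}
    {g : E → ℝ} {φ : ℝ → ℝ} {φ' : ℝ} (hQ : IsSmoothRegion Q) (hg : ContDiffOn ℝ ∞ g Q) (hp : p ∈ Q)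
    (hφ : HasDerivAt φ φ' (g p)) : dirDeriv Q e (φ ∘ g) p = φ' * dirDeriv Q e g p := by
  have hg' := (differentiableWithinAt_of_contDiffOn hg hp).hasFDerivWithinAt
  simp [dirDeriv, (hφ.comp_hasFDerivWithinAt p hg').fderivWithin (hQ.uniqueDiffOn p hp)]

/-- The defect of `w` in the heat equation `∂ₜ w = a ∂ₓₓ w`. -/
noncomputable def heatDefect (Q : Set (ℝ × ℝ)) (a w : ℝ × ℝ → ℝ) : ℝ × ℝ → ℝ :=
  dT Q w - a * dX Q (dX Q w)

section HeatKernelWeight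

/-- The reciprocal of the time left until `T`. -/
noncomputable def invTimeLeft (T : ℝ) (q : ℝ × ℝ) : ℝ := (T - q.2)⁻¹

/-- The space coordinate centred at `x₀` in which the diffusion coefficient `ρ²` becomes `1`. -/
noncomputable def arcCoord (x₀ : ℝ) (ρ : ℝ × ℝ → ℝ) : ℝ × ℝ → ℝ := primitive x₀ ρ⁻¹

/-- The logarithm of the backward heat kernel `(T - t)^(-1/2) ρ⁻¹ exp (-y² / (4 (T - t)))`, where
`y` is `arcCoord x₀ ρ`. -/
noncomputable def kernelPhase (x₀ T : ℝ) (ρ : ℝ × ℝ → ℝ) : ℝ × ℝ → ℝ :=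
  (fun _ => 1 / 2) * Real.log ∘ invTimeLeft T - Real.log ∘ ρ -
    (fun _ => 1 / 4) * (arcCoord x₀ ρ * arcCoord x₀ ρ * invTimeLeft T)

/-- The backward heat kernel with pole `(x₀, T)` for the diffusion coefficient `ρ²`. -/
noncomputable def kernelWeight (x₀ T : ℝ) (ρ : ℝ × ℝ → ℝ) : ℝ × ℝ → ℝ :=
  Real.exp ∘ kernelPhase x₀ T ρ

/-- The velocity field in the variable `y = arcCoord x₀ ρ` of the backward self-similar flow. -/
noncomputable def selfSimilarSpeed (Q : Set (ℝ × ℝ)) (x₀ T : ℝ) (ρ : ℝ × ℝ → ℝ) : ℝ × ℝ → ℝ :=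
  dT Q (arcCoord x₀ ρ) + (fun _ => 1 / 2) * (arcCoord x₀ ρ * invTimeLeft T)

variable {x₁ x₂ s T x₀ t : ℝ} {ρ w : ℝ × ℝ → ℝ} {q : ℝ × ℝ}

local notation "Q" => strip x₁ x₂ s T

theorem invTimeLeft_pos (hq : q ∈ Q) : 0 < invTimeLeft T q := inv_pos.2 (sub_pos.2 hq.2.2)

theorem contDiffOn_invTimeLeft : ContDiffOn ℝ ∞ (invTimeLeft T) Q :=
  (contDiffOn_const.sub contDiffOn_snd).inv fun _ hq => (sub_pos.2 hq.2.2).ne'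

theorem dX_invTimeLeft (h₁₂ : x₁ < x₂) (hq : q ∈ Q) : dX Q (invTimeLeft T) q = 0 :=
  dX_eq_of_hasDerivAt contDiffOn_invTimeLeft hq.2 h₁₂ hq.1
    (hasDerivAt_const q.1 (invTimeLeft T q))

theorem dT_invTimeLeft (hq : q ∈ Q) : dT Q (invTimeLeft T) q = invTimeLeft T q ^ 2 := by
  refine dT_eq_of_hasDerivAt contDiffOn_invTimeLeft hq.2 hq.1 ?_
  have h := HasDerivAt.fun_inv ((hasDerivAt_id q.2).const_sub T) (sub_pos.2 hq.2.2).ne'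
  rwa [neg_neg, one_div, ← inv_pow] at h

variable (h₁₂ : x₁ < x₂) (hx₀ : x₀ ∈ Icc x₁ x₂) (sρ : ContDiffOn ℝ ∞ ρ (strip x₁ x₂ s T))
  (hρ : ∀ q ∈ strip x₁ x₂ s T, 0 < ρ q)
include h₁₂ hx₀ sρ hρ

theorem contDiffOn_arcCoord : ContDiffOn ℝ ∞ (arcCoord x₀ ρ) Q :=
  contDiffOn_primitive h₁₂ (sρ.inv fun q hq => (hρ q hq).ne') hx₀

theorem dX_arcCoord : EqOn (dX Q (arcCoord x₀ ρ)) ρ⁻¹ Q :=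
  dX_primitive h₁₂ (sρ.inv fun q hq => (hρ q hq).ne') hx₀

theorem contDiffOn_kernelPhase : ContDiffOn ℝ ∞ (kernelPhase x₀ T ρ) Q :=
  have sy := contDiffOn_arcCoord h₁₂ hx₀ sρ hρ
  ((contDiffOn_const.mul (contDiffOn_invTimeLeft.log fun _ hq => (invTimeLeft_pos hq).ne')).sub
    (sρ.log fun q hq => (hρ q hq).ne')).sub
    (contDiffOn_const.mul ((sy.mul sy).mul contDiffOn_invTimeLeft))

theorem contDiffOn_kernelWeight : ContDiffOn ℝ ∞ (kernelWeight x₀ T ρ) Q :=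
  (contDiffOn_kernelPhase h₁₂ hx₀ sρ hρ).exp

theorem contDiffOn_selfSimilarSpeed : ContDiffOn ℝ ∞ (selfSimilarSpeed Q x₀ T ρ) Q :=
  have sy := contDiffOn_arcCoord h₁₂ hx₀ sρ hρ
  ((isSmoothRegion_strip h₁₂).contDiffOn_dirDeriv sy).add
    (contDiffOn_const.mul (sy.mul contDiffOn_invTimeLeft))

variable (hq : q ∈ strip x₁ x₂ s T)
include hq

theorem dirDeriv_kernelPhase (e : ℝ × ℝ) : dirDeriv Q e (kernelPhase x₀ T ρ) q =
    dirDeriv Q e (invTimeLeft T) q / (2 * invTimeLeft T q) - dirDeriv Q e ρ q / ρ q -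
      (2 * arcCoord x₀ ρ q * dirDeriv Q e (arcCoord x₀ ρ) q * invTimeLeft T q +
        arcCoord x₀ ρ q ^ 2 * dirDeriv Q e (invTimeLeft T) q) / 4 := by
  have hQ : IsSmoothRegion Q := isSmoothRegion_strip h₁₂
  have sy := contDiffOn_arcCoord h₁₂ hx₀ sρ hρ
  have sl : ContDiffOn ℝ ∞ (invTimeLeft T) Q := contDiffOn_invTimeLeft
  have slogl : ContDiffOn ℝ ∞ (Real.log ∘ invTimeLeft T) Q :=
    sl.log fun _ hq => (invTimeLeft_pos hq).ne'
  have slogρ : ContDiffOn ℝ ∞ (Real.log ∘ ρ) Q := sρ.log fun q hq => (hρ q hq).ne'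
  have syy : ContDiffOn ℝ ∞ (arcCoord x₀ ρ * arcCoord x₀ ρ) Q := sy.mul sy
  have syyl : ContDiffOn ℝ ∞ (arcCoord x₀ ρ * arcCoord x₀ ρ * invTimeLeft T) Q := syy.mul sl
  have sclogl : ContDiffOn ℝ ∞ ((fun _ => 1 / 2) * Real.log ∘ invTimeLeft T) Q :=
    contDiffOn_const.mul slogl
  have slog : ContDiffOn ℝ ∞ ((fun _ => 1 / 2) * Real.log ∘ invTimeLeft T - Real.log ∘ ρ) Q :=
    sclogl.sub slogρ
  have scyyl : ContDiffOn ℝ ∞ ((fun _ => 1 / 4) * (arcCoord x₀ ρ * arcCoord x₀ ρ * invTimeLeft T))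
      Q := contDiffOn_const.mul syyl
  have hl := (invTimeLeft_pos hq).ne'
  rw [kernelPhase, hQ.dirDeriv_sub slog scyyl hq]
  simp only [Pi.sub_apply, hQ.dirDeriv_sub sclogl slogρ hq, hQ.dirDeriv_const_mul _ slogl hq,
    hQ.dirDeriv_const_mul _ syyl hq, hQ.dirDeriv_mul syy sl hq, hQ.dirDeriv_mul sy sy hq,
    dirDeriv_comp hQ sl hq (Real.hasDerivAt_log hl),
    dirDeriv_comp hQ sρ hq (Real.hasDerivAt_log (hρ q hq).ne'), Pi.mul_apply, Pi.add_apply]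
  field_simp
  ring

theorem dX_kernelWeight : dX Q (kernelWeight x₀ T ρ) q = -kernelWeight x₀ T ρ q *
    ((arcCoord x₀ ρ q * invTimeLeft T q / 2 + dX Q ρ q) / ρ q) := by
  refine (dirDeriv_comp (isSmoothRegion_strip h₁₂) (contDiffOn_kernelPhase h₁₂ hx₀ sρ hρ) hq
    (Real.hasDerivAt_exp _)).trans ?_
  have hl := dX_invTimeLeft h₁₂ hq
  have hy := dX_arcCoord h₁₂ hx₀ sρ hρ hq
  simp only [dX] at hl hy ⊢
  rw [dirDeriv_kernelPhase h₁₂ hx₀ sρ hρ hq, hl, hy]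
  simp only [kernelWeight, Function.comp_apply, Pi.inv_apply]
  ring

theorem dT_kernelWeight : dT Q (kernelWeight x₀ T ρ) q = kernelWeight x₀ T ρ q *
    (invTimeLeft T q / 2 - dT Q ρ q / ρ q -
      (2 * arcCoord x₀ ρ q * dT Q (arcCoord x₀ ρ) q * invTimeLeft T q +
        arcCoord x₀ ρ q ^ 2 * invTimeLeft T q ^ 2) / 4) := by
  have hl := (invTimeLeft_pos hq).ne'
  refine (dirDeriv_comp (isSmoothRegion_strip h₁₂) (contDiffOn_kernelPhase h₁₂ hx₀ sρ hρ) hq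
    (Real.hasDerivAt_exp _)).trans ?_
  have hlt := dT_invTimeLeft hq
  simp only [dT] at hlt ⊢
  rw [dirDeriv_kernelPhase h₁₂ hx₀ sρ hρ hq, hlt, kernelWeight, Function.comp_apply]
  field_simp [hl]

theorem dX_selfSimilarSpeed : dX Q (selfSimilarSpeed Q x₀ T ρ) q =
    -dT Q ρ q / ρ q ^ 2 + invTimeLeft T q / (2 * ρ q) := by
  have hQ : IsSmoothRegion Q := isSmoothRegion_strip h₁₂
  have sy := contDiffOn_arcCoord h₁₂ hx₀ sρ hρ
  have syl : ContDiffOn ℝ ∞ (arcCoord x₀ ρ * invTimeLeft T) Q := sy.mul contDiffOn_invTimeLeft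
  have hcomm : dX Q (dT Q (arcCoord x₀ ρ)) q = -dT Q ρ q / ρ q ^ 2 := by
    refine (hQ.dirDeriv_comm sy hq).trans ((dirDeriv_congr (dX_arcCoord h₁₂ hx₀ sρ hρ) hq).trans
      ((dirDeriv_comp hQ sρ hq (hasDerivAt_inv (hρ q hq).ne')).trans ?_))
    ring
  have shyl : ContDiffOn ℝ ∞ ((fun _ => 1 / 2) * (arcCoord x₀ ρ * invTimeLeft T)) Q :=
    contDiffOn_const.mul syl
  refine (hQ.dirDeriv_add (hQ.contDiffOn_dirDeriv sy) shyl hq).trans ?_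
  have hl := dX_invTimeLeft h₁₂ hq
  have hy := dX_arcCoord h₁₂ hx₀ sρ hρ hq
  simp only [dX] at hl hy hcomm
  rw [Pi.add_apply, hcomm, hQ.dirDeriv_const_mul _ syl hq, Pi.mul_apply,
    hQ.dirDeriv_mul sy contDiffOn_invTimeLeft hq]
  simp only [Pi.add_apply, Pi.mul_apply, hl, hy, Pi.inv_apply]
  ring

omit hq in
theorem transport_kernelWeight : EqOn (dT Q (kernelWeight x₀ T ρ))
    (dX Q (kernelWeight x₀ T ρ * (selfSimilarSpeed Q x₀ T ρ * ρ))) Q := fun q hq => by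
  have hQ : IsSmoothRegion Q := isSmoothRegion_strip h₁₂
  have sS := contDiffOn_selfSimilarSpeed h₁₂ hx₀ sρ hρ
  have sV : ContDiffOn ℝ ∞ (selfSimilarSpeed Q x₀ T ρ * ρ) Q := sS.mul sρ
  have hSx := dX_selfSimilarSpeed h₁₂ hx₀ sρ hρ hq
  have hμx := dX_kernelWeight h₁₂ hx₀ sρ hρ hq
  have hρq := (hρ q hq).ne'
  refine (dT_kernelWeight h₁₂ hx₀ sρ hρ hq).trans ?_
  simp only [dX, dT] at hSx hμx ⊢
  rw [hQ.dirDeriv_mul (contDiffOn_kernelWeight h₁₂ hx₀ sρ hρ) sV hq]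
  simp only [Pi.add_apply, Pi.mul_apply, hQ.dirDeriv_mul sS sρ hq, hSx, hμx]
  simp only [selfSimilarSpeed, Pi.add_apply, Pi.mul_apply]
  field_simp
  ring

theorem stretch_selfSimilarSpeed : dT Q (ρ * ρ) q +
    2 * (ρ * ρ) q * dX Q (selfSimilarSpeed Q x₀ T ρ * ρ) q =
      (selfSimilarSpeed Q x₀ T ρ * ρ) q * dX Q (ρ * ρ) q + (ρ * ρ) q / (T - q.2) := by
  have hQ : IsSmoothRegion Q := isSmoothRegion_strip h₁₂
  have hSx := dX_selfSimilarSpeed h₁₂ hx₀ sρ hρ hq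
  have hρq := (hρ q hq).ne'
  simp only [dX, dT, invTimeLeft] at hSx ⊢
  simp only [hQ.dirDeriv_mul sρ sρ hq,
    hQ.dirDeriv_mul (contDiffOn_selfSimilarSpeed h₁₂ hx₀ sρ hρ) sρ hq, Pi.add_apply, Pi.mul_apply,
    hSx]
  field_simp
  ring

theorem selfSimilarSpeed_eq_primitive : selfSimilarSpeed Q x₀ T ρ q =
    primitive x₀ (dT Q ρ⁻¹ + (fun _ => 1 / 2) * (ρ⁻¹ * invTimeLeft T)) q := by
  have sρinv : ContDiffOn ℝ ∞ ρ⁻¹ Q := sρ.inv fun q hq => (hρ q hq).ne'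
  have hint := intervalIntegrable_slice sρinv.continuousOn hq.2 hx₀ hq.1
  have hintT := intervalIntegrable_slice
    ((isSmoothRegion_strip h₁₂).contDiffOn_dirDeriv (e := (0, 1)) sρinv).continuousOn hq.2 hx₀ hq.1
  refine (congrArg (· + _) (dT_primitive h₁₂ sρinv hx₀ hq)).trans ?_
  simp only [primitive, arcCoord, Pi.add_apply, Pi.mul_apply, invTimeLeft]
  rw [intervalIntegral.integral_add hintT ((hint.mul_const _).const_mul _),
    intervalIntegral.integral_const_mul, intervalIntegral.integral_mul_const]

theorem materialDeriv_sub_weightedLaplacian (sw : ContDiffOn ℝ ∞ w Q) :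
    materialDeriv Q (selfSimilarSpeed Q x₀ T ρ * ρ) w q -
      weightedLaplacian Q (ρ * ρ) (kernelWeight x₀ T ρ) w q =
    heatDefect Q (ρ * ρ) w q - ρ q * (dT Q (arcCoord x₀ ρ) q + dX Q ρ q) * dX Q w q := by
  have hQ : IsSmoothRegion Q := isSmoothRegion_strip h₁₂
  have sμ := contDiffOn_kernelWeight h₁₂ hx₀ sρ hρ
  have sa : ContDiffOn ℝ ∞ (ρ * ρ) Q := sρ.mul sρ
  have sμa : ContDiffOn ℝ ∞ (kernelWeight x₀ T ρ * (ρ * ρ)) Q := sμ.mul sa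
  have hμx := dX_kernelWeight h₁₂ hx₀ sρ hρ hq
  have hρq := (hρ q hq).ne'
  have hμq : kernelWeight x₀ T ρ q ≠ 0 := (Real.exp_pos _).ne'
  simp only [heatDefect, materialDeriv, weightedLaplacian, dX, dT, Pi.sub_apply, Pi.mul_apply,
    Pi.inv_apply] at hμx ⊢
  simp only [hQ.dirDeriv_mul sμa (hQ.contDiffOn_dirDeriv sw) hq, hQ.dirDeriv_mul sμ sa hq,
    hQ.dirDeriv_mul sρ sρ hq, Pi.add_apply, Pi.mul_apply, hμx, selfSimilarSpeed]
  field_simp [hρq, hμq]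
  ring

omit hq in
theorem isFrequencyWeight_kernelWeight
    (hsign : ∀ q ∈ Q, 0 ≤ dT Q ρ⁻¹ q + ρ⁻¹ q * invTimeLeft T q / 2) :
    IsFrequencyWeight x₁ x₂ s T (ρ * ρ) (selfSimilarSpeed Q x₀ T ρ * ρ) (kernelWeight x₀ T ρ) := by
  have sS := contDiffOn_selfSimilarSpeed h₁₂ hx₀ sρ hρ
  have outward : ∀ q ∈ Q, 0 ≤ (q.1 - x₀) * selfSimilarSpeed Q x₀ T ρ q := fun q hq => by
    rw [selfSimilarSpeed_eq_primitive h₁₂ hx₀ sρ hρ hq]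
    refine mul_primitive_nonneg hx₀ hq.1 fun z hz => (hsign (z, q.2) ⟨hz, hq.2⟩).trans_eq ?_
    simp only [Pi.add_apply, Pi.mul_apply]
    ring
  have at_pole : ∀ q ∈ Q, q.1 = x₀ → selfSimilarSpeed Q x₀ T ρ q = 0 := fun q hq h => by
    rw [selfSimilarSpeed_eq_primitive h₁₂ hx₀ sρ hρ hq, primitive, h,
      intervalIntegral.integral_same]
  refine ⟨sρ.mul sρ, sS.mul sρ, contDiffOn_kernelWeight h₁₂ hx₀ sρ hρ,
    fun q hq => mul_pos (hρ q hq) (hρ q hq), fun _ _ => Real.exp_pos _,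
    transport_kernelWeight h₁₂ hx₀ sρ hρ, fun q hq => stretch_selfSimilarSpeed h₁₂ hx₀ sρ hρ hq,
    fun t ht => ?_, fun t ht => ?_⟩
  · have hq : (x₁, t) ∈ Q := ⟨left_mem_Icc.2 h₁₂.le, ht⟩
    refine mul_nonpos_of_nonpos_of_nonneg ?_ (hρ _ hq).le
    rcases hx₀.1.eq_or_lt with h | h
    · exact (at_pole _ hq h).le
    · exact nonpos_of_mul_nonneg_right (outward _ hq) (sub_neg.2 h)
  · have hq : (x₂, t) ∈ Q := ⟨right_mem_Icc.2 h₁₂.le, ht⟩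
    refine mul_nonneg ?_ (hρ _ hq).le
    rcases hx₀.2.eq_or_lt with h | h
    · exact (at_pole _ hq h.symm).ge
    · exact nonneg_of_mul_nonneg_right (outward _ hq) (sub_pos.2 h)

end HeatKernelWeight

section BackwardUniqueness

variable {x₁ x₂ t₀ t₁ s T x₀ t : ℝ} {ρ f g w : ℝ × ℝ → ℝ} {q : ℝ × ℝ}

local notation "Q" => strip x₁ x₂ t₀ t₁

theorem exists_eventually_abs_le_of_isBigO (hT : T ∈ Ioo t₀ t₁)
    (h : ∀ x ∈ Icc x₁ x₂, f =O[𝓝[Q] (x, T)] g) :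
    ∃ C > 0, ∀ᶠ t in 𝓝 T, ∀ x ∈ Icc x₁ x₂, |f (x, t)| ≤ C * |g (x, t)| := by
  suffices H : ∃ C > 0, ∀ᶠ t in 𝓝 T, ∀ x ∈ Icc x₁ x₂, x ∈ Icc x₁ x₂ → |f (x, t)| ≤ C * |g (x, t)| by
    exact H.imp fun C hC => ⟨hC.1, hC.2.mono fun t ht x hx => ht x hx hx⟩
  refine isCompact_Icc.induction_on (p := fun S => ∃ C > 0, ∀ᶠ t in 𝓝 T, ∀ x ∈ S, x ∈ Icc x₁ x₂ →
    |f (x, t)| ≤ C * |g (x, t)|) ⟨1, one_pos, by simp⟩ ?_ ?_ fun x hx => ?_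
  · rintro S S' hSS' ⟨C, hC, h⟩
    exact ⟨C, hC, h.mono fun t ht x hx => ht x (hSS' hx)⟩
  · rintro S S' ⟨C, hC, h⟩ ⟨C', hC', h'⟩
    refine ⟨C + C', by positivity, ?_⟩
    filter_upwards [h, h'] with t ht ht' x hxS hx
    rcases hxS with hxS | hxS
    · exact (ht x hxS hx).trans (by gcongr; linarith)
    · exact (ht' x hxS hx).trans (by gcongr; linarith)
  · obtain ⟨C, hC, hCf⟩ := (h x hx).exists_pos
    have hev := eventually_nhdsWithin_iff.1 hCf.bound
    rw [nhds_prod_eq] at hev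
    obtain ⟨A, hA, B, hB, hAB⟩ := eventually_prod_iff.1 hev
    refine ⟨{y | A y}, mem_nhdsWithin_of_mem_nhds hA, C, hC, ?_⟩
    filter_upwards [hB, Ioo_mem_nhds hT.1 hT.2] with t ht htI y hy hyI
    exact hAB hy ht ⟨hyI, htI⟩

theorem exists_eventually_abs_le_of_continuousOn (hT : T ∈ Ioo t₀ t₁) (hf : ContinuousOn f Q) :
    ∃ C > 0, ∀ᶠ t in 𝓝 T, ∀ x ∈ Icc x₁ x₂, |f (x, t)| ≤ C := by
  simpa using exists_eventually_abs_le_of_isBigO (g := fun _ => (1 : ℝ)) hT fun x hx =>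
    (hf (x, T) ⟨hx, hT⟩).isBigO_one ℝ

theorem isBigO_nhdsWithin_of_ne_zero {E : Type*} [TopologicalSpace E] {S : Set E} {p : E}
    {f g : E → ℝ} (hf : ContinuousWithinAt f S p) (hg : ContinuousWithinAt g S p) (hp : g p ≠ 0) :
    f =O[𝓝[S] p] g :=
  Asymptotics.isBigO_of_div_tendsto_nhds
    ((hg.eventually_ne hp).mono fun _ hq h => absurd h hq) _ (hf.div hg hp)

theorem eventually_forall_mem_Ioo {P : ℝ → Prop} (h : ∀ᶠ t in 𝓝[<] T, P t) :
    ∀ᶠ s in 𝓝[<] T, ∀ t ∈ Ioo s T, P t := by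
  obtain ⟨l, hl, hlT⟩ := (mem_nhdsLT_iff_exists_Ioo_subset).1 h
  filter_upwards [Ioo_mem_nhdsLT hl] with s hs t ht
  exact hlT ⟨hs.1.trans ht.1, ht.2⟩

theorem dirDeriv_strip_of_subset (h : Ioo s T ⊆ Ioo t₀ t₁) (e : ℝ × ℝ) (f : ℝ × ℝ → ℝ) :
    EqOn (dirDeriv (strip x₁ x₂ s T) e f) (dirDeriv Q e f) (strip x₁ x₂ s T) := fun q hq => by
  have hnhds : (Icc x₁ x₂ ×ˢ Ioo s T : Set (ℝ × ℝ)) =ᶠ[𝓝 q] Icc x₁ x₂ ×ˢ Ioo t₀ t₁ := by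
    filter_upwards [(continuous_snd.tendsto q) (Ioo_mem_nhds hq.2.1 hq.2.2)] with r hr
    exact propext (and_congr_right fun _ => ⟨fun _ => h hr, fun _ => hr⟩)
  rw [dirDeriv, dirDeriv, fderivWithin_congr_set hnhds]

theorem kernelWeight_eq (hT : q.2 < T) (hρ : 0 < ρ q) : kernelWeight x₀ T ρ q =
    (√(T - q.2))⁻¹ * (ρ q)⁻¹ * Real.exp (-(arcCoord x₀ ρ q ^ 2 / (4 * (T - q.2)))) := by
  have hτ : 0 < T - q.2 := sub_pos.2 hT
  have hphase : kernelPhase x₀ T ρ q = Real.log (√(T - q.2))⁻¹ + Real.log (ρ q)⁻¹ +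
      -(arcCoord x₀ ρ q ^ 2 / (4 * (T - q.2))) := by
    simp only [kernelPhase, invTimeLeft, Function.comp_apply, Pi.sub_apply, Pi.mul_apply,
      Real.log_inv, Real.log_sqrt hτ.le]
    field_simp
    ring
  rw [kernelWeight, Function.comp_apply, hphase, Real.exp_add, Real.exp_add, Real.exp_log,
    Real.exp_log] <;> positivity

theorem exists_pow_mul_exp_neg_sq_le {κ : ℝ} (hκ : 0 < κ) (m : ℕ) :
    ∃ C, ∀ z ≥ 0, (1 + z) ^ m * Real.exp (-(κ * z ^ 2)) ≤ C := by
  refine ⟨Real.exp (m ^ 2 / (4 * κ)), fun z hz => ?_⟩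
  have hsq : m * z - κ * z ^ 2 ≤ m ^ 2 / (4 * κ) := by
    rw [le_div_iff₀ (by positivity)]
    nlinarith [sq_nonneg (2 * κ * z - m)]
  calc (1 + z) ^ m * Real.exp (-(κ * z ^ 2))
      ≤ Real.exp z ^ m * Real.exp (-(κ * z ^ 2)) := by
        gcongr
        linarith [Real.add_one_le_exp z]
    _ = Real.exp (m * z - κ * z ^ 2) := by rw [← Real.exp_nat_mul, ← Real.exp_add, sub_eq_add_neg]
    _ ≤ _ := Real.exp_le_exp.2 hsq

theorem sq_le_arcCoord_sq {k : ℝ} (hk : 0 ≤ k) (hρc : ContinuousOn ρ⁻¹ Q)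
    (hx₀ : x₀ ∈ Icc x₁ x₂) (hq : q ∈ Q) (h : ∀ x ∈ Icc x₁ x₂, k ≤ ρ⁻¹ (x, q.2)) :
    (k * (q.1 - x₀)) ^ 2 ≤ arcCoord x₀ ρ q ^ 2 := by
  have hint := intervalIntegrable_slice hρc hq.2 hx₀ hq.1
  have hnonneg := mul_primitive_nonneg (g := ρ⁻¹ - fun _ => k) hx₀ hq.1
    fun z hz => sub_nonneg.2 (h z hz)
  have hsub : primitive x₀ (ρ⁻¹ - fun _ => k) q = arcCoord x₀ ρ q - k * (q.1 - x₀) := by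
    simp only [primitive, arcCoord, Pi.sub_apply]
    rw [intervalIntegral.integral_sub hint (by simp), intervalIntegral.integral_const, smul_eq_mul,
      mul_comm k]
  rw [Prod.mk.eta, hsub] at hnonneg
  nlinarith [sq_nonneg (arcCoord x₀ ρ q - k * (q.1 - x₀)), mul_nonneg hk hnonneg]

theorem kernelWeight_le {k K : ℝ} (hk : 0 < k) (hρc : ContinuousOn ρ⁻¹ Q)
    (hx₀ : x₀ ∈ Icc x₁ x₂) (hq : q ∈ Q) (hT : q.2 < T)
    (h : ∀ x ∈ Icc x₁ x₂, k ≤ ρ⁻¹ (x, q.2) ∧ ρ⁻¹ (x, q.2) ≤ K) :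
    kernelWeight x₀ T ρ q ≤ (√(T - q.2))⁻¹ * K *
      Real.exp (-(k ^ 2 / 4 * (|q.1 - x₀| / √(T - q.2)) ^ 2)) := by
  have hτ : 0 < T - q.2 := sub_pos.2 hT
  have hρ : 0 < ρ q := inv_pos.1 (hk.trans_le (h q.1 hq.1).1)
  have harc := sq_le_arcCoord_sq hk.le hρc hx₀ hq fun x hx => (h x hx).1
  rw [kernelWeight_eq hT hρ]
  refine mul_le_mul (by gcongr; exact (h q.1 hq.1).2) (Real.exp_le_exp.2 (neg_le_neg ?_))
    (Real.exp_pos _).le (by have := hk.trans_le ((h q.1 hq.1).1.trans (h q.1 hq.1).2); positivity)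
  calc k ^ 2 / 4 * (|q.1 - x₀| / √(T - q.2)) ^ 2
      = (k * (q.1 - x₀)) ^ 2 / (4 * (T - q.2)) := by
        rw [div_pow, sq_abs, Real.sq_sqrt hτ.le]
        field_simp
    _ ≤ _ := by gcongr

theorem sq_mul_kernelWeight_le {k K B C : ℝ} {n : ℕ} (hk : 0 < k)
    (hρc : ContinuousOn ρ⁻¹ Q) (hx₀ : x₀ ∈ Icc x₁ x₂) (hq : q ∈ Q) (hT : q.2 < T)
    (hT1 : T - q.2 ≤ 1) (h : ∀ x ∈ Icc x₁ x₂, k ≤ ρ⁻¹ (x, q.2) ∧ ρ⁻¹ (x, q.2) ≤ K)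
    (hB : ∀ z ≥ 0, (1 + z) ^ (2 * (n + 1)) * Real.exp (-(k ^ 2 / 4 * z ^ 2)) ≤ B)
    (hw : |w q| ≤ C * parabolicDist (x₀, T) q ^ (n + 1)) :
    w q ^ 2 * kernelWeight x₀ T ρ q ≤ C ^ 2 * K * B * (T - q.2) ^ n := by
  have hτ : 0 < T - q.2 := sub_pos.2 hT
  have hR : 0 < √(T - q.2) := Real.sqrt_pos.2 hτ
  have hK : 0 ≤ K := hk.le.trans ((h q.1 hq.1).1.trans (h q.1 hq.1).2)
  have hdist : parabolicDist (x₀, T) q = √(T - q.2) * (1 + |q.1 - x₀| / √(T - q.2)) := by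
    rw [parabolicDist, abs_sub_comm q.2, abs_of_pos hτ]
    field_simp
    ring
  set R := √(T - q.2)
  set z := |q.1 - x₀| / R
  have hz : 0 ≤ z := by positivity
  have hB0 : 0 ≤ B := le_trans (by positivity) (hB z hz)
  calc w q ^ 2 * kernelWeight x₀ T ρ q
      ≤ (C * (R * (1 + z)) ^ (n + 1)) ^ 2 * (R⁻¹ * K * Real.exp (-(k ^ 2 / 4 * z ^ 2))) := by
        rw [hdist] at hw
        rw [← sq_abs (w q)]
        gcongr
        exacts [(Real.exp_pos _).le, kernelWeight_le hk hρc hx₀ hq hT h]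
    _ = C ^ 2 * K * ((1 + z) ^ (2 * (n + 1)) * Real.exp (-(k ^ 2 / 4 * z ^ 2))) *
          ((R ^ 2) ^ n * R) := by
        rw [mul_pow R]
        field_simp
        ring
    _ ≤ C ^ 2 * K * B * ((R ^ 2) ^ n * 1) := by
        gcongr
        exacts [hB z hz, Real.sqrt_le_one.2 hT1]
    _ = C ^ 2 * K * B * (T - q.2) ^ n := by rw [mul_one, Real.sq_sqrt hτ.le]

theorem exists_eventually_abs_le_parabolicDist_pow (hT : T ∈ Ioo t₀ t₁) (hw : ContinuousOn w Q)
    {k : ℕ} (hflat : w =O[𝓝[Q] (x₀, T)] (parabolicDist (x₀, T) · ^ k)) :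
    ∃ C > 0, ∀ᶠ t in 𝓝 T, ∀ x ∈ Icc x₁ x₂, |w (x, t)| ≤ C * parabolicDist (x₀, T) (x, t) ^ k := by
  have hcont : Continuous (parabolicDist (x₀, T)) := by unfold parabolicDist; fun_prop
  have hO : ∀ x ∈ Icc x₁ x₂, w =O[𝓝[Q] (x, T)] (parabolicDist (x₀, T) · ^ k) := fun x hx => by
    rcases eq_or_ne x x₀ with rfl | hne
    · exact hflat
    have hdist : parabolicDist (x₀, T) (x, T) ^ k ≠ 0 := by
      simpa [parabolicDist] using fun h => (sub_ne_zero.2 hne h).elim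
    exact isBigO_nhdsWithin_of_ne_zero (hw (x, T) ⟨hx, hT⟩) (hcont.pow k).continuousWithinAt hdist
  simpa [abs_of_nonneg (parabolicDist_nonneg _ _)] using exists_eventually_abs_le_of_isBigO hT hO

theorem exists_eventually_inv_bounds (hT : T ∈ Ioo t₀ t₁) (hρc : ContinuousOn ρ Q)
    (hρ : ∀ q ∈ Q, 0 < ρ q) :
    ∃ k > 0, ∃ K, ∀ᶠ t in 𝓝 T, ∀ x ∈ Icc x₁ x₂, k ≤ ρ⁻¹ (x, t) ∧ ρ⁻¹ (x, t) ≤ K := by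
  obtain ⟨A, hA, hAρ⟩ := exists_eventually_abs_le_of_continuousOn hT hρc
  obtain ⟨K, -, hKρ⟩ := exists_eventually_abs_le_of_continuousOn hT
    (hρc.inv₀ fun q hq => (hρ q hq).ne')
  refine ⟨A⁻¹, inv_pos.2 hA, K, ?_⟩
  filter_upwards [hAρ, hKρ, Ioo_mem_nhds hT.1 hT.2] with t hAt hKt ht x hx
  exact ⟨inv_anti₀ (hρ _ ⟨hx, ht⟩) (le_of_abs_le (hAt x hx)), le_of_abs_le (hKt x hx)⟩

theorem exists_eventually_weightedMass_le (h₁₂ : x₁ < x₂) (hx₀ : x₀ ∈ Icc x₁ x₂)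
    (hT : T ∈ Ioo t₀ t₁) (sρ : ContDiffOn ℝ ∞ ρ Q) (hρ : ∀ q ∈ Q, 0 < ρ q)
    (hw : ContinuousOn w Q) (hflat : ∀ k : ℕ, w =O[𝓝[Q] (x₀, T)] (parabolicDist (x₀, T) · ^ k))
    (n : ℕ) :
    ∃ C, ∀ᶠ t in 𝓝[<] T, weightedMass x₁ x₂ (kernelWeight x₀ T ρ) w t ≤ C * (T - t) ^ n := by
  obtain ⟨C, -, hC⟩ := exists_eventually_abs_le_parabolicDist_pow hT hw (hflat (n + 1))
  obtain ⟨k, hk, K, hkK⟩ := exists_eventually_inv_bounds hT sρ.continuousOn hρ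
  obtain ⟨B, hB⟩ := exists_pow_mul_exp_neg_sq_le (κ := k ^ 2 / 4) (by positivity) (2 * (n + 1))
  refine ⟨C ^ 2 * K * B * (x₂ - x₁), ?_⟩
  filter_upwards [hC.filter_mono nhdsWithin_le_nhds, hkK.filter_mono nhdsWithin_le_nhds,
    Ioo_mem_nhdsLT hT.1, Ioo_mem_nhdsLT (sub_one_lt T)] with t hCt hkKt ht ht1
  have hstrip : ∀ x ∈ Icc x₁ x₂, (x, t) ∈ strip x₁ x₂ t₀ T := fun x hx => ⟨hx, ht⟩
  have hsub : strip x₁ x₂ t₀ T ⊆ Q := prod_mono le_rfl (Ioo_subset_Ioo_right hT.2.le)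
  have hμ := contDiffOn_kernelWeight h₁₂ hx₀ (sρ.mono hsub) fun q hq => hρ q (hsub hq)
  have hint := continuousOn_slice (((hw.mono hsub).pow 2).mul hμ.continuousOn) ht
  have hbound : ∀ x ∈ Icc x₁ x₂,
      w (x, t) ^ 2 * kernelWeight x₀ T ρ (x, t) ≤ C ^ 2 * K * B * (T - t) ^ n := fun x hx =>
    sq_mul_kernelWeight_le hk (sρ.continuousOn.inv₀ fun q hq => (hρ q hq).ne') hx₀
      (hsub (hstrip x hx)) ht.2 (by linarith [ht1.1]) hkKt hB (hCt x hx)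
  calc weightedMass x₁ x₂ (kernelWeight x₀ T ρ) w t
      ≤ ∫ _ in x₁..x₂, C ^ 2 * K * B * (T - t) ^ n :=
        intervalIntegral.integral_mono_on h₁₂.le (hint.intervalIntegrable_of_Icc h₁₂.le)
          (by simp) hbound
    _ = _ := by rw [intervalIntegral.integral_const, smul_eq_mul]; ring

theorem eventually_isFrequencyWeight (h₁₂ : x₁ < x₂) (hx₀ : x₀ ∈ Icc x₁ x₂) (hT : T ∈ Ioo t₀ t₁)
    (sρ : ContDiffOn ℝ ∞ ρ Q) (hρ : ∀ q ∈ Q, 0 < ρ q) :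
    ∀ᶠ s in 𝓝[<] T, IsFrequencyWeight x₁ x₂ s T (ρ * ρ)
      (selfSimilarSpeed (strip x₁ x₂ s T) x₀ T ρ * ρ) (kernelWeight x₀ T ρ) := by
  have sρinv : ContDiffOn ℝ ∞ ρ⁻¹ Q := sρ.inv fun q hq => (hρ q hq).ne'
  have scaled : ∀ x ∈ Icc x₁ x₂, dT Q ρ⁻¹ =O[𝓝[Q] (x, T)] ρ⁻¹ := fun x hx =>
    isBigO_nhdsWithin_of_ne_zero
      (((isSmoothRegion_strip h₁₂).contDiffOn_dirDeriv sρinv).continuousOn _ ⟨hx, hT⟩)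
      (sρinv.continuousOn _ ⟨hx, hT⟩) (inv_ne_zero (hρ _ ⟨hx, hT⟩).ne')
  obtain ⟨C, hC, hCρ⟩ := exists_eventually_abs_le_of_isBigO hT scaled
  have hblowup : ∀ᶠ t in 𝓝[<] T, 2 * C ≤ (T - t)⁻¹ := by
    filter_upwards [Ioo_mem_nhdsLT (sub_lt_self T (inv_pos.2 (mul_pos two_pos hC)))] with t ht
    rw [le_inv_comm₀ (by positivity) (sub_pos.2 ht.2)]
    linarith [ht.1]
  filter_upwards [eventually_forall_mem_Ioo (hblowup.and (hCρ.filter_mono nhdsWithin_le_nhds)),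
    Ioo_mem_nhdsLT hT.1] with s hs hsT
  have hIoo : Ioo s T ⊆ Ioo t₀ t₁ := Ioo_subset_Ioo hsT.1.le hT.2.le
  have hsub : strip x₁ x₂ s T ⊆ Q := prod_mono le_rfl hIoo
  refine isFrequencyWeight_kernelWeight h₁₂ hx₀ (sρ.mono hsub) (fun q hq => hρ q (hsub hq))
    fun q hq => ?_
  obtain ⟨hCT, hbound⟩ := hs q.2 hq.2
  have hpos : 0 < ρ⁻¹ q := inv_pos.2 (hρ q (hsub hq))
  have hlow := neg_le_of_abs_le (hbound q.1 hq.1)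
  rw [Prod.mk.eta, abs_of_pos hpos] at hlow
  rw [dT, dirDeriv_strip_of_subset hIoo _ _ hq, invTimeLeft]
  nlinarith

theorem heatDefect_strip_of_subset (h : Ioo s T ⊆ Ioo t₀ t₁) (a w : ℝ × ℝ → ℝ) :
    EqOn (heatDefect (strip x₁ x₂ s T) a w) (heatDefect Q a w) (strip x₁ x₂ s T) := fun q hq => by
  have hXX : dX (strip x₁ x₂ s T) (dX (strip x₁ x₂ s T) w) q = dX Q (dX Q w) q :=
    (dirDeriv_congr (dirDeriv_strip_of_subset h _ w) hq).trans
      (dirDeriv_strip_of_subset h _ (dX Q w) hq)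
  exact congr_arg₂ (fun r r' => r - a q * r') (dirDeriv_strip_of_subset h _ w hq) hXX

theorem sq_sub_mul_le {E N u d e M₀ M₁ K : ℝ} (hE : |E| ≤ M₀ * (|u| + |d|)) (hN : |N| ≤ M₁)
    (hd : d ^ 2 ≤ K ^ 2 * e ^ 2) :
    (E - N * d) ^ 2 ≤ (4 * M₀ ^ 2 + 2 * M₁ ^ 2) * (1 + K ^ 2) * (u ^ 2 + e ^ 2) := by
  have hE2 : E ^ 2 ≤ 2 * M₀ ^ 2 * (u ^ 2 + d ^ 2) :=
    calc E ^ 2 = |E| ^ 2 := (sq_abs E).symm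
      _ ≤ (M₀ * (|u| + |d|)) ^ 2 := by gcongr
      _ = M₀ ^ 2 * (|u| + |d|) ^ 2 := mul_pow ..
      _ ≤ M₀ ^ 2 * (2 * (|u| ^ 2 + |d| ^ 2)) := by gcongr; exact add_sq_le
      _ = 2 * M₀ ^ 2 * (u ^ 2 + d ^ 2) := by rw [sq_abs, sq_abs]; ring
  have hN2 : N ^ 2 ≤ M₁ ^ 2 := sq_le_sq' (neg_le_of_abs_le hN) (le_of_abs_le hN)
  calc (E - N * d) ^ 2 ≤ 2 * (E ^ 2 + N ^ 2 * d ^ 2) := by nlinarith [sq_nonneg (E + N * d)]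
    _ ≤ 2 * (2 * M₀ ^ 2 * (u ^ 2 + d ^ 2) + M₁ ^ 2 * (u ^ 2 + d ^ 2)) := by
      gcongr
      exact le_add_of_nonneg_left (sq_nonneg u)
    _ = (4 * M₀ ^ 2 + 2 * M₁ ^ 2) * (u ^ 2 + d ^ 2) := by ring
    _ ≤ (4 * M₀ ^ 2 + 2 * M₁ ^ 2) * ((1 + K ^ 2) * (u ^ 2 + e ^ 2)) := by
      gcongr
      nlinarith [sq_nonneg u, sq_nonneg e, mul_nonneg (sq_nonneg K) (sq_nonneg u)]
    _ = _ := by ring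

theorem exists_eventually_sq_materialDeriv_sub_le (h₁₂ : x₁ < x₂) (hx₀ : x₀ ∈ Icc x₁ x₂)
    (hT : T ∈ Ioo t₀ t₁) (sρ : ContDiffOn ℝ ∞ ρ Q) (hρ : ∀ q ∈ Q, 0 < ρ q)
    (sw : ContDiffOn ℝ ∞ w Q)
    (hheat : ∀ q ∈ Q, heatDefect Q (ρ * ρ) w =O[𝓝[Q] q] fun q => |w q| + |dX Q w q|) :
    ∃ M ≥ 0, ∀ᶠ s in 𝓝[<] T, ∀ q ∈ strip x₁ x₂ s T,
      (materialDeriv (strip x₁ x₂ s T) (selfSimilarSpeed (strip x₁ x₂ s T) x₀ T ρ * ρ) w q -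
        weightedLaplacian (strip x₁ x₂ s T) (ρ * ρ) (kernelWeight x₀ T ρ) w q) ^ 2 ≤
      M * (w q ^ 2 + (ρ * ρ) q * dX (strip x₁ x₂ s T) w q ^ 2) := by
  have hQ : IsSmoothRegion Q := isSmoothRegion_strip h₁₂
  obtain ⟨M₀, hM₀, hE⟩ := exists_eventually_abs_le_of_isBigO hT fun x hx => hheat (x, T) ⟨hx, hT⟩
  obtain ⟨M₁, hM₁, hN⟩ := exists_eventually_abs_le_of_continuousOn hT
    (sρ.mul ((hQ.contDiffOn_dirDeriv (e := (0, 1)) (contDiffOn_arcCoord h₁₂ hx₀ sρ hρ)).add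
      (hQ.contDiffOn_dirDeriv (e := (1, 0)) sρ))).continuousOn
  obtain ⟨k, -, K, hkK⟩ := exists_eventually_inv_bounds hT sρ.continuousOn hρ
  refine ⟨(4 * M₀ ^ 2 + 2 * M₁ ^ 2) * (1 + K ^ 2), by positivity, ?_⟩
  filter_upwards [eventually_forall_mem_Ioo
    ((hE.and (hN.and hkK)).filter_mono nhdsWithin_le_nhds), Ioo_mem_nhdsLT hT.1] with s hs hsT q hq
  have hIoo : Ioo s T ⊆ Ioo t₀ t₁ := Ioo_subset_Ioo hsT.1.le hT.2.le
  have hsub : strip x₁ x₂ s T ⊆ Q := prod_mono le_rfl hIoo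
  obtain ⟨hEq, hNq, hkKq⟩ := hs q.2 hq.2
  have hρinv : (ρ q)⁻¹ ≤ K := (hkKq q.1 hq.1).2
  have hd : dX Q w q ^ 2 ≤ K ^ 2 * (ρ q * dX Q w q) ^ 2 := by
    have hρq := hρ q (hsub hq)
    calc dX Q w q ^ 2 = (ρ q)⁻¹ ^ 2 * (ρ q * dX Q w q) ^ 2 := by field_simp
      _ ≤ _ := by gcongr
  rw [materialDeriv_sub_weightedLaplacian h₁₂ hx₀ (sρ.mono hsub) (fun q hq => hρ q (hsub hq)) hq
    (sw.mono hsub), heatDefect_strip_of_subset hIoo _ _ hq]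
  simp only [dX, dT, dirDeriv_strip_of_subset hIoo _ _ hq]
  have hE := hEq q.1 hq.1
  rw [abs_of_nonneg (a := |w _| + _) (by positivity)] at hE
  refine (sq_sub_mul_le hE (hNq q.1 hq.1) hd).trans_eq ?_
  simp only [Pi.mul_apply]
  ring

theorem eventually_eq_zero_of_flat (h₁₂ : x₁ < x₂) (hx₀ : x₀ ∈ Icc x₁ x₂) (hT : T ∈ Ioo t₀ t₁)
    (sρ : ContDiffOn ℝ ∞ ρ Q) (hρ : ∀ q ∈ Q, 0 < ρ q) (sw : ContDiffOn ℝ ∞ w Q)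
    (hw : ∀ t ∈ Ioo t₀ t₁, w (x₁, t) = 0 ∧ w (x₂, t) = 0)
    (hheat : ∀ q ∈ Q, heatDefect Q (ρ * ρ) w =O[𝓝[Q] q] fun q => |w q| + |dX Q w q|)
    (hflat : ∀ k : ℕ, w =O[𝓝[Q] (x₀, T)] (parabolicDist (x₀, T) · ^ k)) :
    ∀ᶠ t in 𝓝[<] T, ∀ x ∈ Icc x₁ x₂, w (x, t) = 0 := by
  obtain ⟨M, hM, herr⟩ := exists_eventually_sq_materialDeriv_sub_le h₁₂ hx₀ hT sρ hρ sw hheat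
  obtain ⟨s, hμ, herr, hsT, hsT1⟩ := ((eventually_isFrequencyWeight h₁₂ hx₀ hT sρ hρ).and
    (herr.and (inter_mem (Ioo_mem_nhdsLT hT.1) (Ioo_mem_nhdsLT (sub_one_lt T))))).exists
  have hIoo : Ioo s T ⊆ Ioo t₀ t₁ := Ioo_subset_Ioo hsT.1.le hT.2.le
  have hsub : strip x₁ x₂ s T ⊆ Q := prod_mono le_rfl hIoo
  have hmass : ∀ t ∈ Ioo s T, weightedMass x₁ x₂ (kernelWeight x₀ T ρ) w t = 0 := by
    intro t ht
    by_contra hne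
    obtain ⟨n, k, hk, hlower⟩ := hμ.exists_mul_pow_le_weightedMass h₁₂ (sw.mono hsub)
      (fun t ht => hw t (hIoo ht)) hM herr (by linarith [hsT1.1]) ht
      ((hμ.weightedMass_nonneg h₁₂ ht).lt_of_ne' hne)
    obtain ⟨C, hC⟩ := exists_eventually_weightedMass_le h₁₂ hx₀ hT sρ hρ sw.continuousOn hflat
      (n + 1)
    have hle : ∀ᶠ r in 𝓝[<] T, k ≤ C * (T - r) := by
      filter_upwards [hC, Ioo_mem_nhdsLT ht.2] with r hr hrt
      have hτ : 0 < T - r := sub_pos.2 hrt.2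
      refine le_of_mul_le_mul_right ?_ (pow_pos hτ n)
      calc k * (T - r) ^ n ≤ _ := hlower r ⟨hrt.1.le, hrt.2⟩
        _ ≤ C * (T - r) ^ (n + 1) := hr
        _ = C * (T - r) * (T - r) ^ n := by ring
    have hlim : Tendsto (fun r => C * (T - r)) (𝓝[<] T) (𝓝 0) := by
      have : Continuous fun r => C * (T - r) := by fun_prop
      simpa using (this.tendsto T).mono_left nhdsWithin_le_nhds
    exact hk.not_ge (ge_of_tendsto hlim hle)
  filter_upwards [Ioo_mem_nhdsLT hsT.2] with t ht x hx
  by_contra hne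
  refine (hmass t ht).not_gt (intervalIntegral.integral_pos h₁₂ (continuousOn_slice
    (((sw.mono hsub).pow 2).mul hμ.contDiffOn).continuousOn ht) (fun y hy => ?_) ⟨x, hx, ?_⟩)
  · exact mul_nonneg (sq_nonneg _) (hμ.pos _ ⟨Ioc_subset_Icc_self hy, ht⟩).le
  · exact mul_pos (by positivity) (hμ.pos _ ⟨hx, ht⟩)

end BackwardUniqueness

section FlatZeros

open Asymptotics

variable {x₁ x₂ t₀ t₁ : ℝ} {a b c v φ : ℝ × ℝ → ℝ} {p q : ℝ × ℝ}

theorem IsParabolicSolution.heatDefect_mul {S : Set (ℝ × ℝ)} (h : IsParabolicSolution S a b c v)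
    (hS : IsSmoothRegion S) (sφ : ContDiffOn ℝ ∞ φ S) :
    EqOn (heatDefect S a (φ * v)) ((heatDefect S a φ + c * φ) * v +
      (b * φ - 2 * a * dX S φ) * dX S v) S := by
  intro q hq
  have sφX := hS.contDiffOn_dirDeriv (e := (1, 0)) sφ
  have svX := hS.contDiffOn_dirDeriv (e := (1, 0)) h.contDiffOn
  have sum₁ : ContDiffOn ℝ ∞ (φ * dX S v) S := sφ.mul svX
  have sum₂ : ContDiffOn ℝ ∞ (dX S φ * v) S := sφX.mul h.contDiffOn
  have hXX : dX S (dX S (φ * v)) q =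
      φ q * dX S (dX S v) q + 2 * (dX S φ q * dX S v q) + dX S (dX S φ) q * v q := by
    refine (dirDeriv_congr (hS.dirDeriv_mul sφ h.contDiffOn) hq).trans
      ((hS.dirDeriv_add sum₁ sum₂ hq).trans ?_)
    have e₁ := hS.dirDeriv_mul (e := (1, 0)) sφ svX hq
    have e₂ := hS.dirDeriv_mul (e := (1, 0)) sφX h.contDiffOn hq
    simp only [dX, Pi.add_apply, Pi.mul_apply] at e₁ e₂ ⊢
    rw [e₁, e₂]
    ring
  have hT := hS.dirDeriv_mul (e := (0, 1)) sφ h.contDiffOn hq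
  have heqn := h.eqn hq
  simp only [heatDefect, dX, dT, Pi.add_apply, Pi.sub_apply, Pi.mul_apply, Pi.ofNat_apply]
    at hXX hT heqn ⊢
  rw [hT, hXX, heqn]
  ring

local notation "Q" => strip x₁ x₂ t₀ t₁

theorem isBigO_mul_of_ne_zero {E : Type*} [TopologicalSpace E] {S : Set E} {p : E} {f w : E → ℝ}
    (hf : ContinuousWithinAt f S p) (hp : f p ≠ 0) : w =O[𝓝[S] p] (f * w) :=
  ((isBigO_nhdsWithin_of_ne_zero (f := fun _ => 1) continuousWithinAt_const hf hp).mul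
    (isBigO_refl w _)).congr_left fun _ => one_mul _

theorem mul_isBigO_of_continuousWithinAt {E : Type*} [TopologicalSpace E] {S : Set E} {p : E}
    {f w : E → ℝ} (hf : ContinuousWithinAt f S p) : (f * w) =O[𝓝[S] p] w :=
  ((hf.isBigO_one ℝ).mul (isBigO_refl w _)).congr_right fun _ => one_mul _

theorem isBigO_abs_add_abs_dX_mul (h₁₂ : x₁ < x₂) (sφ : ContDiffOn ℝ ∞ φ Q)
    (sv : ContDiffOn ℝ ∞ v Q) (hq : q ∈ Q) (h0 : φ q ≠ 0) :
    v =O[𝓝[Q] q] (fun q => |(φ * v) q| + |dX Q (φ * v) q|) ∧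
      dX Q v =O[𝓝[Q] q] fun q => |(φ * v) q| + |dX Q (φ * v) q| := by
  have hQ := isSmoothRegion_strip (t₀ := t₀) (t₁ := t₁) h₁₂
  have sφX := hQ.contDiffOn_dirDeriv (e := (1, 0)) sφ
  have hw : (φ * v) =O[𝓝[Q] q] fun q => |(φ * v) q| + |dX Q (φ * v) q| :=
    .of_bound' (Eventually.of_forall fun r =>
      (le_add_of_nonneg_right (abs_nonneg _)).trans (le_abs_self _))
  have hwX : dX Q (φ * v) =O[𝓝[Q] q] fun q => |(φ * v) q| + |dX Q (φ * v) q| :=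
    .of_bound' (Eventually.of_forall fun r =>
      (le_add_of_nonneg_left (abs_nonneg _)).trans (le_abs_self _))
  have hv := (isBigO_mul_of_ne_zero (w := v) (sφ.continuousOn q hq) h0).trans hw
  have hprod : φ * dX Q v =ᶠ[𝓝[Q] q] fun r => dX Q (φ * v) r - (dX Q φ * v) r :=
    eventually_mem_nhdsWithin.mono fun r hr =>
      eq_sub_of_add_eq (hQ.dirDeriv_mul sφ sv hr).symm
  exact ⟨hv, (isBigO_mul_of_ne_zero (sφ.continuousOn q hq) h0).trans <| hprod.trans_isBigO <|
    hwX.sub ((mul_isBigO_of_continuousWithinAt (sφX.continuousOn q hq)).trans hv)⟩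

theorem IsParabolicSolution.heatDefect_mul_isBigO
    (h : IsParabolicSolution (strip x₁ x₂ t₀ t₁) a b c v) (h₁₂ : x₁ < x₂)
    (sφ : ContDiffOn ℝ ∞ φ Q) (hq : q ∈ Q) (hφ : φ q = 0 → dX Q (φ * v) q ≠ 0) :
    heatDefect Q a (φ * v) =O[𝓝[Q] q] fun q => |(φ * v) q| + |dX Q (φ * v) q| := by
  have hQ := isSmoothRegion_strip (t₀ := t₀) (t₁ := t₁) h₁₂
  have sφX := hQ.contDiffOn_dirDeriv (e := (1, 0)) sφ
  have sw : ContDiffOn ℝ ∞ (φ * v) Q := sφ.mul h.contDiffOn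
  have sA : ContDiffOn ℝ ∞ (heatDefect Q a φ + c * φ) Q :=
    ((hQ.contDiffOn_dirDeriv sφ).sub (h.contDiffOn_a.mul (hQ.contDiffOn_dirDeriv sφX))).add
      (h.contDiffOn_c.mul sφ)
  have sB : ContDiffOn ℝ ∞ (b * φ - 2 * a * dX Q φ) Q :=
    (h.contDiffOn_b.mul sφ).sub ((contDiffOn_const.mul h.contDiffOn_a).mul sφX)
  have hdefect : heatDefect Q a (φ * v) =ᶠ[𝓝[Q] q] (heatDefect Q a φ + c * φ) * v +
      (b * φ - 2 * a * dX Q φ) * dX Q v :=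
    eventually_mem_nhdsWithin.mono (h.heatDefect_mul hQ sφ)
  refine hdefect.trans_isBigO ?_
  by_cases h0 : φ q = 0
  · exact isBigO_nhdsWithin_of_ne_zero
      (((sA.mul h.contDiffOn).add (sB.mul (hQ.contDiffOn_dirDeriv h.contDiffOn))).continuousOn q hq)
      ((sw.continuousOn.abs.add (hQ.contDiffOn_dirDeriv sw).continuousOn.abs) q hq)
      (by have := abs_pos.2 (hφ h0); positivity)
  · obtain ⟨hv, hvX⟩ := isBigO_abs_add_abs_dX_mul h₁₂ sφ h.contDiffOn hq h0
    exact ((mul_isBigO_of_continuousWithinAt (sA.continuousOn q hq)).trans hv).add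
      ((mul_isBigO_of_continuousWithinAt (sB.continuousOn q hq)).trans hvX)

theorem dX_eq_zero_of_forall_eq_zero {f : ℝ × ℝ → ℝ} {t : ℝ} (h₁₂ : x₁ < x₂)
    (sf : ContDiffOn ℝ ∞ f Q) (ht : t ∈ Ioo t₀ t₁) (hf : ∀ x ∈ Icc x₁ x₂, f (x, t) = 0) :
    ∀ x ∈ Icc x₁ x₂, dX Q f (x, t) = 0 := fun x hx =>
  (uniqueDiffOn_Icc h₁₂ x hx).eq_deriv _ (hasDerivWithinAt_dX sf ht hx)
    ((hasDerivWithinAt_const x _ 0).congr hf (hf x hx))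

theorem iterate_dX_eq_zero_of_forall_eq_zero {f : ℝ × ℝ → ℝ} {t : ℝ} (h₁₂ : x₁ < x₂)
    (sf : ContDiffOn ℝ ∞ f Q) (ht : t ∈ Ioo t₀ t₁) (hf : ∀ x ∈ Icc x₁ x₂, f (x, t) = 0) (k : ℕ) :
    ∀ x ∈ Icc x₁ x₂, (dX Q)^[k] f (x, t) = 0 := by
  induction k generalizing f with
  | zero => exact hf
  | succ _ ih =>
    exact ih ((isSmoothRegion_strip h₁₂).contDiffOn_dirDeriv sf)
      (dX_eq_zero_of_forall_eq_zero h₁₂ sf ht hf)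

theorem IsParabolicSolution.eventually_eq_zero_of_mul
    (h : IsParabolicSolution (strip x₁ x₂ t₀ t₁) a b c v) (h₁₂ : x₁ < x₂)
    (sφ : ContDiffOn ℝ ∞ φ Q) (hφ : ∀ q ∈ Q, φ q = 0 → dX Q (φ * v) q ≠ 0)
    (hw : ∀ t ∈ Ioo t₀ t₁, (φ * v) (x₁, t) = 0 ∧ (φ * v) (x₂, t) = 0)
    (hp : p ∈ Q) (hflat : ∀ k, (dX Q)^[k] v p = 0) :
    ∀ᶠ t in 𝓝[<] p.2, ∀ x ∈ Icc x₁ x₂, v (x, t) = 0 := by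
  have hQ := isSmoothRegion_strip (t₀ := t₀) (t₁ := t₁) h₁₂
  have sw : ContDiffOn ℝ ∞ (φ * v) Q := sφ.mul h.contDiffOn
  have sρ : ContDiffOn ℝ ∞ (fun q => √(a q)) Q := h.contDiffOn_a.sqrt fun q hq => (h.pos q hq).ne'
  have hheat (q) (hq : q ∈ Q) : heatDefect Q ((fun q => √(a q)) * fun q => √(a q)) (φ * v)
      =O[𝓝[Q] q] fun q => |(φ * v) q| + |dX Q (φ * v) q| :=
    (h.heatDefect_mul_isBigO h₁₂ sφ hq (hφ q hq)).congr'
      (eventually_mem_nhdsWithin.mono fun r hr => by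
        simp only [heatDefect, Pi.sub_apply, Pi.mul_apply, Real.mul_self_sqrt (h.pos r hr).le]) .rfl
  have hzero := eventually_eq_zero_of_flat h₁₂ hp.1 hp.2 sρ
    (fun q hq => Real.sqrt_pos.2 (h.pos q hq)) sw hw hheat fun k =>
      (VanishesToOrder.mul_left hQ hp sφ h.contDiffOn
        (h.vanishesToOrder hQ hp fun i _ => hflat i)).isBigO h₁₂ hp sw
  filter_upwards [hzero, Ioo_mem_nhdsLT hp.2.1] with t ht htp x hx
  have htI : t ∈ Ioo t₀ t₁ := ⟨htp.1, htp.2.trans hp.2.2⟩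
  exact (mul_eq_zero.1 (ht x hx)).resolve_left fun h0 =>
    hφ (x, t) ⟨hx, htI⟩ h0 (dX_eq_zero_of_forall_eq_zero h₁₂ sw htI ht x hx)

theorem exists_boundary_factor {u : ℝ → ℝ} {I : Set ℝ} (e : ℝ)
    (hu : (∀ t ∈ I, u t = 0) ∨ ∀ t ∈ I, u t ≠ 0) :
    ∃ f : ℝ → ℝ, ContDiff ℝ ∞ f ∧ (∀ t ∈ I, f e * u t = 0) ∧
      ∀ x, f x = 0 → x = e ∧ deriv f x ≠ 0 ∧ ∀ t ∈ I, u t ≠ 0 := by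
  rcases hu with hu | hu
  · exact ⟨fun _ => 1, contDiff_const, by simpa using hu, by simp⟩
  · exact ⟨fun x => x - e, by fun_prop, by simp, fun x hx => ⟨sub_eq_zero.1 hx, by simp, hu⟩⟩

theorem IsParabolicSolution.eventually_eq_zero_of_iterate_dX_eq_zero
    (h : IsParabolicSolution (strip x₁ x₂ t₀ t₁) a b c v) (h₁₂ : x₁ < x₂)
    (hbc₁ : (∀ t ∈ Ioo t₀ t₁, v (x₁, t) = 0) ∨ ∀ t ∈ Ioo t₀ t₁, v (x₁, t) ≠ 0)
    (hbc₂ : (∀ t ∈ Ioo t₀ t₁, v (x₂, t) = 0) ∨ ∀ t ∈ Ioo t₀ t₁, v (x₂, t) ≠ 0)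
    (hp : p ∈ Q) (hflat : ∀ k, (dX Q)^[k] v p = 0) :
    ∀ᶠ t in 𝓝[<] p.2, ∀ x ∈ Icc x₁ x₂, v (x, t) = 0 := by
  obtain ⟨f, sf, hfv, hf⟩ := exists_boundary_factor x₁ hbc₁
  obtain ⟨g, sg, hgv, hg⟩ := exists_boundary_factor x₂ hbc₂
  have sφ : ContDiff ℝ ∞ fun q : ℝ × ℝ => f q.1 * g q.1 :=
    (sf.comp contDiff_fst).mul (sg.comp contDiff_fst)
  refine h.eventually_eq_zero_of_mul (φ := fun q => f q.1 * g q.1) h₁₂ sφ.contDiffOn ?_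
    (fun t ht => ⟨?_, ?_⟩) hp hflat
  · rintro ⟨x, t⟩ hq h0
    have hd : HasDerivAt (fun y => f y * g y) (deriv f x * g x + f x * deriv g x) x :=
      ((sf.differentiable (by simp) x).hasDerivAt).mul (sg.differentiable (by simp) x).hasDerivAt
    have hX : dX Q ((fun q => f q.1 * g q.1) * v) (x, t) =
        (deriv f x * g x + f x * deriv g x) * v (x, t) := by
      have := (isSmoothRegion_strip h₁₂).dirDeriv_mul (e := (1, 0)) sφ.contDiffOn h.contDiffOn hq
      simp only [dX, Pi.add_apply, Pi.mul_apply] at this h0 ⊢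
      rw [this, h0, zero_mul, zero_add]
      exact congrArg (· * v (x, t)) (dX_eq_of_hasDerivAt sφ.contDiffOn hq.2 h₁₂ hq.1 hd)
    rw [hX]
    rcases mul_eq_zero.1 h0 with hfx | hgx
    · obtain ⟨rfl, hf', hv⟩ := hf x hfx
      have hgx : g x ≠ 0 := fun hgx => h₁₂.ne (hg x hgx).1
      simpa [hfx] using ⟨⟨hf', hgx⟩, hv t hq.2⟩
    · obtain ⟨rfl, hg', hv⟩ := hg x hgx
      have hfx : f x ≠ 0 := fun hfx => h₁₂.ne' (hf x hfx).1
      simpa [hgx] using ⟨⟨hfx, hg'⟩, hv t hq.2⟩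
  · simp [mul_right_comm _ (g x₁), hfv t ht]
  · simp [mul_assoc, hgv t ht]

end FlatZeros

section MaximumPrinciple

variable {x₁ x₂ t₀ t₁ s T x t : ℝ} {a b c v f : ℝ × ℝ → ℝ} {p : ℝ × ℝ}

local notation "Q" => strip x₁ x₂ t₀ t₁

theorem deriv_deriv_nonpos_of_isLocalMax {f : ℝ → ℝ} (hf : ContinuousAt f x)
    (h : IsLocalMax f x) : deriv (deriv f) x ≤ 0 := by
  by_contra! hpos
  have hmin := isLocalMin_of_deriv_deriv_pos hpos h.deriv_eq_zero hf
  have hconst : f =ᶠ[𝓝 x] fun _ => f x := (h.and hmin).mono fun y hy => le_antisymm hy.1 hy.2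
  exact hpos.ne' (by simp [hconst.deriv.deriv_eq])

theorem nonneg_of_hasDerivAt_of_eventually_le {f : ℝ → ℝ} {f' : ℝ} (hf : HasDerivAt f f' t)
    (h : ∀ᶠ r in 𝓝[<] t, f r ≤ f t) : 0 ≤ f' := by
  refine ge_of_tendsto ((hasDerivWithinAt_iff_tendsto_slope' self_notMem_Iio).1
    hf.hasDerivWithinAt) ?_
  filter_upwards [h, self_mem_nhdsWithin] with r hr hrt
  rw [slope_def_field]
  exact div_nonneg_of_nonpos (sub_nonpos.2 hr) (sub_nonpos.2 (le_of_lt hrt))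

theorem deriv_deriv_eq_dX_dX (h₁₂ : x₁ < x₂) (sf : ContDiffOn ℝ ∞ f Q) (ht : t ∈ Ioo t₀ t₁)
    (hx : x ∈ Ioo x₁ x₂) : deriv (deriv fun y => f (y, t)) x = dX Q (dX Q f) (x, t) := by
  have hderiv : deriv (fun y => f (y, t)) =ᶠ[𝓝 x] fun y => dX Q f (y, t) := by
    filter_upwards [Ioo_mem_nhds hx.1 hx.2] with y hy using (hasDerivAt_dX sf ht hy).deriv
  rw [hderiv.deriv_eq]
  exact (hasDerivAt_dX ((isSmoothRegion_strip h₁₂).contDiffOn_dirDeriv sf) ht hx).deriv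

namespace IsParabolicSolution

variable (h : IsParabolicSolution (strip x₁ x₂ t₀ t₁) a b c v)
include h

theorem neg (h₁₂ : x₁ < x₂) : IsParabolicSolution Q a b c (-v) where
  contDiffOn_a := h.contDiffOn_a
  contDiffOn_b := h.contDiffOn_b
  contDiffOn_c := h.contDiffOn_c
  contDiffOn := h.contDiffOn.neg
  pos := h.pos
  eqn q hq := by
    have hneg (e : ℝ × ℝ) (f : ℝ × ℝ → ℝ) : EqOn (dirDeriv Q e (-f)) (-dirDeriv Q e f) Q :=
      fun r hr => by
        simp [dirDeriv, fderivWithin_neg ((isSmoothRegion_strip h₁₂).uniqueDiffOn r hr)]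
    have hT : dT Q (-v) q = -dT Q v q := hneg _ v hq
    have hX : dX Q (-v) q = -dX Q v q := hneg _ v hq
    have hXX : dX Q (dX Q (-v)) q = -dX Q (dX Q v) q :=
      (dirDeriv_congr (hneg _ v) hq).trans (hneg _ _ hq)
    have heq := h.eqn hq
    simp only [Pi.add_apply, Pi.mul_apply, Pi.neg_apply, hT, hX, hXX] at heq ⊢
    rw [heq]
    ring

theorem dT_le_of_isLocalMax (h₁₂ : x₁ < x₂) (hx : x ∈ Ioo x₁ x₂) (ht : t ∈ Ioo t₀ t₁)
    (hmax : IsLocalMax (fun y => v (y, t)) x) : dT Q v (x, t) ≤ c (x, t) * v (x, t) := by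
  have hq : (x, t) ∈ Q := ⟨Ioo_subset_Icc_self hx, ht⟩
  have hd := hasDerivAt_dX h.contDiffOn ht hx
  have hX : dX Q v (x, t) = 0 := hmax.hasDerivAt_eq_zero hd
  have hXX : dX Q (dX Q v) (x, t) ≤ 0 := by
    rw [← deriv_deriv_eq_dX_dX h₁₂ h.contDiffOn ht hx]
    exact deriv_deriv_nonpos_of_isLocalMax hd.continuousAt hmax
  rw [h.eqn hq]
  simpa [hX] using mul_nonpos_of_nonneg_of_nonpos (h.pos _ hq).le hXX

theorem nonpos_of_isMaxOn {K : ℝ} (h₁₂ : x₁ < x₂) (hx : x ∈ Ioo x₁ x₂) (ht : t ∈ Ioo t₀ t₁)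
    (hst : s < t) (hK : c (x, t) < K)
    (hmax : IsMaxOn (fun q => v q * Real.exp (-K * q.2)) (Icc x₁ x₂ ×ˢ Icc s t) (x, t)) :
    v (x, t) ≤ 0 := by
  have hspace : IsLocalMax (fun y => v (y, t)) x := by
    filter_upwards [Ioo_mem_nhds hx.1 hx.2] with y hy
    exact le_of_mul_le_mul_right (isMaxOn_iff.1 hmax (y, t)
      ⟨Ioo_subset_Icc_self hy, right_mem_Icc.2 hst.le⟩) (Real.exp_pos _)
  have hexp : HasDerivAt (fun r => Real.exp (-K * r)) (Real.exp (-K * t) * -K) t := by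
    simpa using ((hasDerivAt_id t).const_mul (-K)).exp
  have htime : 0 ≤ dT Q v (x, t) * Real.exp (-K * t) + v (x, t) * (Real.exp (-K * t) * -K) := by
    refine nonneg_of_hasDerivAt_of_eventually_le
      ((hasDerivAt_dT h.contDiffOn ht (Ioo_subset_Icc_self hx)).mul hexp) ?_
    filter_upwards [Ioo_mem_nhdsLT hst] with r hr
    exact isMaxOn_iff.1 hmax (x, r) ⟨Ioo_subset_Icc_self hx, Ioo_subset_Icc_self hr⟩
  have hKv : K * v (x, t) ≤ dT Q v (x, t) :=
    sub_nonneg.1 (nonneg_of_mul_nonneg_left (by linarith) (Real.exp_pos (-K * t)))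
  nlinarith [h.dT_le_of_isLocalMax h₁₂ hx ht hspace]

theorem nonpos_of_parabolicBoundary (h₁₂ : x₁ < x₂) (hs : t₀ < s) (hT : T < t₁)
    (hv : ∀ q ∈ Icc x₁ x₂ ×ˢ Icc s T, q.1 = x₁ ∨ q.1 = x₂ ∨ q.2 = s → v q ≤ 0) :
    ∀ q ∈ Icc x₁ x₂ ×ˢ Icc s T, v q ≤ 0 := by
  intro p hp
  have hsub : Icc x₁ x₂ ×ˢ Icc s T ⊆ Q := prod_mono le_rfl (Icc_subset_Ioo hs hT)
  have hcompact : IsCompact (Icc x₁ x₂ ×ˢ Icc s T) := isCompact_Icc.prod isCompact_Icc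
  obtain ⟨C, hC⟩ :=
    hcompact.exists_bound_of_continuousOn (h.contDiffOn_c.continuousOn.mono hsub)
  obtain ⟨⟨x, t⟩, hq, hmax⟩ := hcompact.exists_isMaxOn ⟨p, hp⟩
    (f := fun q => v q * Real.exp (-(C + 1) * q.2))
    ((h.contDiffOn.continuousOn.mono hsub).mul (by fun_prop))
  have hvq : v (x, t) ≤ 0 := by
    by_cases hb : x = x₁ ∨ x = x₂ ∨ t = s
    · exact hv _ hq hb
    push Not at hb
    refine h.nonpos_of_isMaxOn h₁₂ ⟨hq.1.1.lt_of_ne' hb.1, hq.1.2.lt_of_ne hb.2.1⟩ (hsub hq).2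
      (hq.2.1.lt_of_ne' hb.2.2) ?_ (hmax.on_subset (prod_mono le_rfl (Icc_subset_Icc_right hq.2.2)))
    exact ((le_abs_self _).trans (hC _ hq)).trans_lt (lt_add_one C)
  have hpq := isMaxOn_iff.1 hmax p hp
  exact nonpos_of_mul_nonpos_left (hpq.trans (mul_nonpos_of_nonpos_of_nonneg hvq
    (Real.exp_pos _).le)) (Real.exp_pos _)

theorem eq_zero_of_le (h₁₂ : x₁ < x₂) (hv₁ : ∀ t ∈ Ioo t₀ t₁, v (x₁, t) = 0)
    (hv₂ : ∀ t ∈ Ioo t₀ t₁, v (x₂, t) = 0) (hs : s ∈ Ioo t₀ t₁)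
    (hvs : ∀ x ∈ Icc x₁ x₂, v (x, s) = 0) (hst : s ≤ t) (ht : t < t₁) :
    ∀ x ∈ Icc x₁ x₂, v (x, t) = 0 := by
  intro x hx
  have hbdry : ∀ q ∈ Icc x₁ x₂ ×ˢ Icc s t, q.1 = x₁ ∨ q.1 = x₂ ∨ q.2 = s → v q = 0 := by
    rintro ⟨y, r⟩ ⟨hy, hr⟩ (rfl | rfl | rfl)
    exacts [hv₁ r (Icc_subset_Ioo hs.1 ht hr), hv₂ r (Icc_subset_Ioo hs.1 ht hr), hvs y hy]
  have hq : (x, t) ∈ Icc x₁ x₂ ×ˢ Icc s t := ⟨hx, right_mem_Icc.2 hst⟩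
  refine le_antisymm ?_ (neg_nonpos.1 ?_)
  · exact h.nonpos_of_parabolicBoundary h₁₂ hs.1 ht (fun q hq hb => (hbdry q hq hb).le) _ hq
  · exact (h.neg h₁₂).nonpos_of_parabolicBoundary h₁₂ hs.1 ht
      (fun q hq hb => by simp [hbdry q hq hb]) _ hq

end IsParabolicSolution

end MaximumPrinciple

section FiniteOrder

variable {x₁ x₂ t₀ t₁ t : ℝ} {a b c v : ℝ × ℝ → ℝ} {p : ℝ × ℝ}

local notation "Q" => strip x₁ x₂ t₀ t₁

namespace IsParabolicSolution

theorem eq_zero_of_iterate_dX_eq_zero_of_dirichlet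
    (h : IsParabolicSolution (strip x₁ x₂ t₀ t₁) a b c v) (h₁₂ : x₁ < x₂)
    (hv₁ : ∀ t ∈ Ioo t₀ t₁, v (x₁, t) = 0) (hv₂ : ∀ t ∈ Ioo t₀ t₁, v (x₂, t) = 0)
    (hp : p ∈ Q) (hflat : ∀ k, (dX Q)^[k] v p = 0) :
    ∀ t ∈ Ioo t₀ t₁, ∀ x ∈ Icc x₁ x₂, v (x, t) = 0 := by
  have hm : x₁ ∈ Icc x₁ x₂ := left_mem_Icc.2 h₁₂.le
  set E : Set ℝ := {t ∈ Ioo t₀ t₁ | ∀ x ∈ Icc x₁ x₂, v (x, t) = 0}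
  have hopen : IsOpen E := by
    refine isOpen_iff_mem_nhds.2 fun t ht => ?_
    have hback := h.eventually_eq_zero_of_iterate_dX_eq_zero h₁₂ (.inl hv₁) (.inl hv₂)
      (p := (x₁, t)) ⟨hm, ht.1⟩ fun k =>
        iterate_dX_eq_zero_of_forall_eq_zero h₁₂ h.contDiffOn ht.1 ht.2 k x₁ hm
    filter_upwards [eventually_nhdsWithin_iff.1 hback, Ioo_mem_nhds ht.1.1 ht.1.2] with r hr hrI
    refine ⟨hrI, (lt_or_ge r t).elim hr fun htr => ?_⟩
    exact h.eq_zero_of_le h₁₂ hv₁ hv₂ ht.1 ht.2 htr hrI.2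
  have hnonempty : (Ioo t₀ t₁ ∩ E).Nonempty := by
    obtain ⟨t, hzero, ht⟩ := ((h.eventually_eq_zero_of_iterate_dX_eq_zero h₁₂ (.inl hv₁)
      (.inl hv₂) hp hflat).and (Ioo_mem_nhdsLT hp.2.1)).exists
    have htI : t ∈ Ioo t₀ t₁ := ⟨ht.1, ht.2.trans hp.2.2⟩
    exact ⟨t, htI, htI, hzero⟩
  have hclosed : closure E ∩ Ioo t₀ t₁ ⊆ E := by
    rintro t ⟨htE, ht⟩
    refine ⟨ht, fun x hx => by_contra fun hne => ?_⟩
    have hcont : ContinuousAt (fun s => v (x, s)) t :=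
      (hasDerivAt_dT h.contDiffOn ht hx).continuousAt
    obtain ⟨s, hs, hvs⟩ := ((mem_closure_iff_frequently.1 htE).and_eventually
      (hcont.eventually_ne hne)).exists
    exact hvs (hs.2 x hx)
  exact fun t ht => (isPreconnected_Ioo.subset_of_closure_inter_subset hopen hnonempty hclosed ht).2

theorem exists_iterate_dX_ne_zero
    (h : IsParabolicSolution (strip x₁ x₂ t₀ t₁) a b c v) (h₁₂ : x₁ < x₂)
    (hbc₁ : (∀ t ∈ Ioo t₀ t₁, v (x₁, t) = 0) ∨ ∀ t ∈ Ioo t₀ t₁, v (x₁, t) ≠ 0)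
    (hbc₂ : (∀ t ∈ Ioo t₀ t₁, v (x₂, t) = 0) ∨ ∀ t ∈ Ioo t₀ t₁, v (x₂, t) ≠ 0)
    (hv : ¬ ∀ x ∈ Icc x₁ x₂, ∀ t ∈ Ioo t₀ t₁, v (x, t) = 0) (hp : p ∈ Q) :
    ∃ k, (∀ i < k, (dX Q)^[i] v p = 0) ∧ (dX Q)^[k] v p ≠ 0 := by
  classical
  suffices hex : ∃ k, (dX Q)^[k] v p ≠ 0 from
    ⟨Nat.find hex, fun i hi => not_not.1 (Nat.find_min hex hi), Nat.find_spec hex⟩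
  by_contra! hflat
  obtain ⟨t, hzero, ht⟩ := ((h.eventually_eq_zero_of_iterate_dX_eq_zero h₁₂ hbc₁ hbc₂ hp
    hflat).and (Ioo_mem_nhdsLT hp.2.1)).exists
  have htI : t ∈ Ioo t₀ t₁ := ⟨ht.1, ht.2.trans hp.2.2⟩
  have hv₁ := hbc₁.resolve_right fun hne => hne t htI (hzero x₁ (left_mem_Icc.2 h₁₂.le))
  have hv₂ := hbc₂.resolve_right fun hne => hne t htI (hzero x₂ (right_mem_Icc.2 h₁₂.le))
  exact hv fun x hx t ht =>
    h.eq_zero_of_iterate_dX_eq_zero_of_dirichlet h₁₂ hv₁ hv₂ hp hflat t ht x hx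

end IsParabolicSolution

end FiniteOrder

section Counting

variable {X ι : Type*} {Z Z₀ : Set X}

theorem ncard_le_of_subsingleton_cover {I : Set ι} {U : ι → Set X} (hI : I.Finite)
    (hcover : Z ⊆ ⋃ i ∈ I, U i) (hU : ∀ i ∈ I, (Z ∩ U i).Subsingleton) : Z.ncard ≤ I.ncard := by
  rcases Z.eq_empty_or_nonempty with rfl | ⟨z, hz⟩
  · simp
  have hmem : ∀ x ∈ Z, ∃ i ∈ I, x ∈ U i := fun x hx => by simpa using hcover hx
  have : Nonempty ι := (hmem z hz).nonempty
  choose! f hfI hfU using hmem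
  exact ncard_le_ncard_of_injOn f hfI (fun x hx y hy hxy =>
    hU (f x) (hfI x hx) ⟨hx, hfU x hx⟩ ⟨hy, hxy ▸ hfU y hy⟩) hI

theorem ncard_le_of_pairwiseDisjoint {I : Set ι} {U : ι → Set X} (hZ : Z.Finite)
    (hd : I.PairwiseDisjoint U) (hU : ∀ i ∈ I, (Z ∩ U i).Nonempty) : I.ncard ≤ Z.ncard := by
  rcases I.eq_empty_or_nonempty with rfl | ⟨i₀, hi₀⟩
  · simp
  have : Nonempty X := (hU i₀ hi₀).to_type
  choose! f hf using hU
  exact ncard_le_ncard_of_injOn f (fun i hi => (hf i hi).1) (fun i hi j hj hij =>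
    hd.elim_set hi hj (f i) (hf i hi).2 (hij ▸ (hf j hj).2)) hZ

theorem ncard_lt_of_pairwiseDisjoint {I : Set ι} {U : ι → Set X} {i : ι} (hZ : Z.Finite)
    (hd : I.PairwiseDisjoint U) (hU : ∀ j ∈ I, (Z ∩ U j).Nonempty) (hi : i ∈ I)
    (hnt : (Z ∩ U i).Nontrivial) : I.ncard < Z.ncard := by
  obtain ⟨x, hx⟩ := hnt.nonempty
  refine (ncard_le_of_pairwiseDisjoint (hZ.subset sdiff_subset) hd fun j hj => ?_).trans_lt
    (ncard_sdiff_singleton_lt_of_mem hx.1 hZ)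
  rcases eq_or_ne j i with rfl | hji
  · obtain ⟨y, hy, hyx⟩ := hnt.exists_ne x
    exact ⟨y, ⟨hy.1, hyx⟩, hy.2⟩
  · obtain ⟨y, hy⟩ := hU j hj
    exact ⟨y, ⟨hy.1, fun hyx => hji (hd.elim_set hj hi x (hyx ▸ hy.2) hx.2)⟩, hy.2⟩

variable [TopologicalSpace X] {l : Filter ι} {F : ι → Set X}

theorem eventually_ncard_le_of_isCompact {K : Set X} (hK : IsCompact K) (hZ₀ : Z₀.Finite)
    (hF : ∀ᶠ t in l, F t ⊆ K) (h : ∀ x ∈ K, ∃ U ∈ 𝓝[K] x, ∀ᶠ t in l,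
      (F t ∩ U).Subsingleton ∧ ((F t ∩ U).Nonempty → x ∈ Z₀)) :
    ∀ᶠ t in l, (F t).ncard ≤ Z₀.ncard := by
  choose! U hU hUF using h
  obtain ⟨s, hsK, hcover⟩ := hK.elim_nhdsWithin_subcover U hU
  filter_upwards [hF, (eventually_all_finset s).2 fun x hx => hUF x (hsK x hx)] with t htK ht
  have hcover₀ : F t ⊆ ⋃ x ∈ Z₀ ∩ s, U x := fun y hy => by
    obtain ⟨x, hx, hyx⟩ := mem_iUnion₂.1 (hcover (htK hy))
    exact mem_iUnion₂.2 ⟨x, ⟨(ht x hx).2 ⟨y, hy, hyx⟩, hx⟩, hyx⟩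
  exact (ncard_le_of_subsingleton_cover (hZ₀.inter_of_left _) hcover₀
    fun x hx => (ht x hx.2).1).trans (ncard_le_ncard inter_subset_left hZ₀)

variable [T2Space X] (hZ₀ : Z₀.Finite) (hF : ∀ᶠ t in l, (F t).Finite)
  (h : ∀ x ∈ Z₀, ∀ U ∈ 𝓝 x, ∀ᶠ t in l, (F t ∩ U).Nonempty)
include hZ₀ hF h

theorem eventually_le_ncard : ∀ᶠ t in l, Z₀.ncard ≤ (F t).ncard := by
  obtain ⟨U, hU, hd⟩ := hZ₀.t2_separation
  filter_upwards [hF, (eventually_all_finite hZ₀).2 fun x hx =>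
    h x hx (U x) ((hU x).2.mem_nhds (hU x).1)] with t htF ht
  exact ncard_le_of_pairwiseDisjoint htF hd ht

theorem eventually_lt_ncard {x₀ : X} (hx₀ : x₀ ∈ Z₀)
    (hnt : ∀ U ∈ 𝓝 x₀, ∀ᶠ t in l, (F t ∩ U).Nontrivial) : ∀ᶠ t in l, Z₀.ncard < (F t).ncard := by
  obtain ⟨U, hU, hd⟩ := hZ₀.t2_separation
  have hnhds (x : X) : U x ∈ 𝓝 x := (hU x).2.mem_nhds (hU x).1
  filter_upwards [hF, hnt (U x₀) (hnhds x₀), (eventually_all_finite hZ₀).2 fun x hx =>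
    h x hx (U x) (hnhds x)] with t htF hnt ht
  exact ncard_lt_of_pairwiseDisjoint htF hd ht hx₀ hnt

end Counting

section LocalMonotonicity

variable {α β : Type*} [ConditionallyCompleteLinearOrder α] [TopologicalSpace α] [OrderTopology α]
  [DenselyOrdered α] [Preorder β]

theorem antitoneOn_of_eventually_le {I : Set α} (hI : I.OrdConnected) {N : α → β}
    (hR : ∀ s ∈ I, ∀ᶠ t in 𝓝[>] s, N t ≤ N s) (hL : ∀ s ∈ I, ∀ᶠ t in 𝓝[<] s, N s ≤ N t) :
    AntitoneOn N I := by
  intro s hs T hT hsT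
  set S : Set α := {t | ∀ r ∈ Icc s t, N r ≤ N s}
  have hsS : s ∈ S := fun r hr => (le_antisymm hr.2 hr.1 ▸ le_rfl)
  have hclosed : IsClosed (S ∩ Icc s T) := by
    refine isClosed_of_closure_subset fun t ht => ?_
    have htI : t ∈ Icc s T := closure_minimal inter_subset_right isClosed_Icc ht
    have hlt : ∀ r ∈ Ico s t, N r ≤ N s := fun r hr => by
      obtain ⟨u, hru, hu⟩ := mem_closure_iff_nhds.1 ht _ (Ioi_mem_nhds hr.2)
      exact hu.1 r ⟨hr.1, le_of_lt hru⟩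
    refine ⟨fun r hr => hr.2.lt_or_eq.elim (fun hrt => hlt r ⟨hr.1, hrt⟩) ?_, htI⟩
    rintro rfl
    rcases hr.1.eq_or_lt with rfl | hsr
    · exact le_rfl
    have := nhdsLT_neBot_of_exists_lt ⟨s, hsr⟩
    obtain ⟨u, hru, hu⟩ :=
      ((hL r (hI.out hs hT htI)).and (Ioo_mem_nhdsLT hsr)).exists
    exact hru.trans (hlt u (Ioo_subset_Ico_self hu))
  refine hclosed.Icc_subset_of_forall_mem_nhdsWithin hsS (fun t ht => ?_)
    (right_mem_Icc.2 hsT) T (right_mem_Icc.2 hsT)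
  obtain ⟨u, hu, hut⟩ := (mem_nhdsGT_iff_exists_Ioo_subset' ht.2.2).1
    (hR t (hI.out hs hT (Ico_subset_Icc_self ht.2)))
  filter_upwards [Ioo_mem_nhdsGT hu] with w hw r hr
  rcases le_or_gt r t with hrt | htr
  · exact ht.1 r ⟨hr.1, hrt⟩
  · exact (hut ⟨htr, hr.2.trans_lt hw.2⟩).trans (ht.1 t ⟨ht.2.1, le_rfl⟩)

end LocalMonotonicity

section ZeroCount

variable {x₁ x₂ t₀ t₁ s t x : ℝ} {a b c v : ℝ × ℝ → ℝ}

local notation "Q" => strip x₁ x₂ t₀ t₁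

theorem zeroSlice_inter (I J : Set ℝ) : zeroSlice (I ∩ J) v t = zeroSlice I v t ∩ J :=
  ext fun _ => and_right_comm

theorem eventually_zeroSlice_eq_empty (hv : ContinuousOn v Q) (hx : x ∈ Icc x₁ x₂)
    (hs : s ∈ Ioo t₀ t₁) (hne : v (x, s) ≠ 0) :
    ∃ U ∈ 𝓝[Icc x₁ x₂] x, ∀ᶠ t in 𝓝 s, zeroSlice U v t = ∅ := by
  have hprod : ∀ᶠ q in 𝓝[Icc x₁ x₂] x ×ˢ 𝓝 s, v q ≠ 0 := by
    rw [← isOpen_Ioo.nhdsWithin_eq hs, ← nhdsWithin_prod_eq]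
    exact (hv (x, s) ⟨hx, hs⟩).eventually_ne hne
  obtain ⟨U, hU, V, hV, hUV⟩ := eventually_prod_iff.1 hprod
  exact ⟨{y | U y}, hU, hV.mono fun t ht => eq_empty_of_forall_notMem
    fun y hy => hUV hy.1 ht hy.2⟩

theorem isParabolicSolution_of_interior (h₁₂ : x₁ < x₂) (sa : ContDiffOn ℝ ∞ a Q)
    (sb : ContDiffOn ℝ ∞ b Q) (sc : ContDiffOn ℝ ∞ c Q) (sv : ContDiffOn ℝ ∞ v Q)
    (ha : ∀ q ∈ Q, 0 < a q)
    (heq : ∀ x ∈ Ioo x₁ x₂, ∀ t ∈ Ioo t₀ t₁, deriv (fun s => v (x, s)) t =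
      a (x, t) * deriv (deriv fun y => v (y, t)) x + b (x, t) * deriv (fun y => v (y, t)) x
        + c (x, t) * v (x, t)) :
    IsParabolicSolution Q a b c v := by
  refine ⟨sa, sb, sc, sv, ha, ?_⟩
  have hQ := isSmoothRegion_strip (t₀ := t₀) (t₁ := t₁) h₁₂
  have sX := hQ.contDiffOn_dirDeriv (e := (1, 0)) sv
  have hinterior : EqOn (dT Q v) (a * dX Q (dX Q v) + b * dX Q v + c * v)
      (Ioo x₁ x₂ ×ˢ Ioo t₀ t₁) := by
    rintro ⟨x, t⟩ ⟨hx, ht⟩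
    have := heq x hx t ht
    rwa [(hasDerivAt_dT sv ht (Ioo_subset_Icc_self hx)).deriv, deriv_deriv_eq_dX_dX h₁₂ sv ht hx,
      (hasDerivAt_dX sv ht hx).deriv] at this
  refine hinterior.of_subset_closure (hQ.contDiffOn_dirDeriv sv).continuousOn ?_
    (prod_mono Ioo_subset_Icc_self le_rfl) ?_
  · exact ((sa.mul (hQ.contDiffOn_dirDeriv sX)).add (sb.mul sX)).add (sc.mul sv) |>.continuousOn
  · rw [closure_prod_eq, closure_Ioo h₁₂.ne]
    exact prod_mono le_rfl subset_closure

namespace IsParabolicSolution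

variable (h : IsParabolicSolution (strip x₁ x₂ t₀ t₁) a b c v) (h₁₂ : x₁ < x₂)
  (hbc₁ : (∀ t ∈ Ioo t₀ t₁, v (x₁, t) = 0) ∨ ∀ t ∈ Ioo t₀ t₁, v (x₁, t) ≠ 0)
  (hbc₂ : (∀ t ∈ Ioo t₀ t₁, v (x₂, t) = 0) ∨ ∀ t ∈ Ioo t₀ t₁, v (x₂, t) ≠ 0)
  (hv : ¬ ∀ x ∈ Icc x₁ x₂, ∀ t ∈ Ioo t₀ t₁, v (x, t) = 0)
include h h₁₂ hbc₁ hbc₂ hv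

theorem eventually_zeroSlice_subsingleton (hx : x ∈ Icc x₁ x₂) (hs : s ∈ Ioo t₀ t₁) :
    ∃ U ∈ 𝓝[Icc x₁ x₂] x, ∀ᶠ t in 𝓝[≥] s, (zeroSlice U v t).Subsingleton := by
  obtain ⟨k, hX, hk⟩ := h.exists_iterate_dX_ne_zero h₁₂ hbc₁ hbc₂ hv (p := (x, s)) ⟨hx, hs⟩
  obtain ⟨δ, hδ, hsub⟩ := h.exists_zeroSlice_subsingleton h₁₂ ⟨hx, hs⟩ hX hk
  exact ⟨_, inter_mem_nhdsWithin _ (Metric.ball_mem_nhds x hδ),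
    eventually_of_mem (Ico_mem_nhdsGE (lt_add_of_pos_right s hδ)) hsub⟩

theorem finite_zeroSlice (ht : t ∈ Ioo t₀ t₁) : (zeroSlice (Icc x₁ x₂) v t).Finite := by
  refine isCompact_Icc.induction_on (p := fun I => (zeroSlice I v t).Finite) ?_
    (fun _ _ hIJ hJ => hJ.subset (zeroSlice_mono hIJ)) (fun I J hI hJ => ?_) fun x hx => ?_
  · simp [zeroSlice]
  · exact (hI.union hJ).subset fun x hx => hx.1.imp (⟨·, hx.2⟩) (⟨·, hx.2⟩)
  · obtain ⟨U, hU, hsub⟩ := h.eventually_zeroSlice_subsingleton h₁₂ hbc₁ hbc₂ hv hx ht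
    exact ⟨U, hU, (hsub.self_of_nhdsWithin self_mem_Ici).finite⟩

theorem eventually_ncard_zeroSlice_le (hs : s ∈ Ioo t₀ t₁) : ∀ᶠ t in 𝓝[≥] s,
    (zeroSlice (Icc x₁ x₂) v t).ncard ≤ (zeroSlice (Icc x₁ x₂) v s).ncard := by
  refine eventually_ncard_le_of_isCompact isCompact_Icc
    (h.finite_zeroSlice h₁₂ hbc₁ hbc₂ hv hs) (.of_forall fun t x hx => hx.1) fun x hx => ?_
  by_cases hxs : v (x, s) = 0
  · obtain ⟨U, hU, hsub⟩ := h.eventually_zeroSlice_subsingleton h₁₂ hbc₁ hbc₂ hv hx hs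
    exact ⟨U, hU, hsub.mono fun t ht =>
      ⟨ht.anti fun y hy => ⟨hy.2, hy.1.2⟩, fun _ => ⟨hx, hxs⟩⟩⟩
  · obtain ⟨U, hU, hempty⟩ := eventually_zeroSlice_eq_empty h.contDiffOn.continuousOn hx hs hxs
    refine ⟨U, hU, (hempty.filter_mono nhdsWithin_le_nhds).mono fun t ht => ?_⟩
    have : zeroSlice (Icc x₁ x₂) v t ∩ U = ∅ :=
      subset_empty_iff.1 (ht ▸ fun y hy => ⟨hy.2, hy.1.2⟩)
    simp [this]

theorem eventually_zeroSlice_inter_nonempty (hs : s ∈ Ioo t₀ t₁)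
    (hx : x ∈ zeroSlice (Icc x₁ x₂) v s) {U : Set ℝ} (hU : U ∈ 𝓝 x) :
    ∀ᶠ t in 𝓝[<] s, (zeroSlice (Icc x₁ x₂) v t ∩ U).Nonempty := by
  have hpersist (hzero : ∀ t ∈ Ioo t₀ t₁, v (x, t) = 0) :
      ∀ᶠ t in 𝓝[<] s, (zeroSlice (Icc x₁ x₂) v t ∩ U).Nonempty := by
    filter_upwards [nhdsWithin_le_nhds (Ioo_mem_nhds hs.1 hs.2)] with t ht
    exact ⟨x, ⟨hx.1, hzero t ht⟩, mem_of_mem_nhds hU⟩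
  rcases eq_endpoints_or_mem_Ioo_of_mem_Icc hx.1 with rfl | rfl | hxI
  · exact hpersist (hbc₁.resolve_right fun hne => hne s hs hx.2)
  · exact hpersist (hbc₂.resolve_right fun hne => hne s hs hx.2)
  obtain ⟨δ, hδ, hball⟩ := Metric.mem_nhds_iff.1 hU
  obtain ⟨k, hX, hk⟩ := h.exists_iterate_dX_ne_zero h₁₂ hbc₁ hbc₂ hv (p := (x, s)) ⟨hx.1, hs⟩
  obtain ⟨k, rfl⟩ := Nat.exists_eq_succ_of_ne_zero fun hk0 : k = 0 => hk (hk0 ▸ hx.2)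
  filter_upwards [h.eventually_zeroSlice_nonempty h₁₂
    (prod_mem_nhds (Icc_mem_nhds hxI.1 hxI.2) (Ioo_mem_nhds hs.1 hs.2)) hX hk hδ] with t ht
  rw [zeroSlice_inter] at ht
  exact ht.mono (inter_subset_inter_right _ hball)

theorem eventually_zeroSlice_inter_nontrivial (hs : s ∈ Ioo t₀ t₁) (hx : x ∈ Ioo x₁ x₂)
    (hzero : v (x, s) = 0) (hX : dX Q v (x, s) = 0) {U : Set ℝ} (hU : U ∈ 𝓝 x) :
    ∀ᶠ t in 𝓝[<] s, (zeroSlice (Icc x₁ x₂) v t ∩ U).Nontrivial := by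
  obtain ⟨δ, hδ, hball⟩ := Metric.mem_nhds_iff.1 hU
  obtain ⟨k, hlow, hk⟩ := h.exists_iterate_dX_ne_zero h₁₂ hbc₁ hbc₂ hv (p := (x, s))
    ⟨Ioo_subset_Icc_self hx, hs⟩
  obtain ⟨k, rfl⟩ : ∃ j, k = j + 2 := match k with
    | 0 => (hk hzero).elim
    | 1 => (hk hX).elim
    | j + 2 => ⟨j, rfl⟩
  filter_upwards [h.eventually_zeroSlice_nontrivial h₁₂
    (prod_mem_nhds (Icc_mem_nhds hx.1 hx.2) (Ioo_mem_nhds hs.1 hs.2)) hlow hk hδ] with t ht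
  rw [zeroSlice_inter] at ht
  exact ht.mono (inter_subset_inter_right _ hball)

theorem antitoneOn_ncard_zeroSlice :
    AntitoneOn (fun t => (zeroSlice (Icc x₁ x₂) v t).ncard) (Ioo t₀ t₁) := by
  refine antitoneOn_of_eventually_le ordConnected_Ioo (fun s hs => ?_) fun s hs => ?_
  · exact (h.eventually_ncard_zeroSlice_le h₁₂ hbc₁ hbc₂ hv hs).filter_mono
      (nhdsWithin_mono s Ioi_subset_Ici_self)
  · refine eventually_le_ncard (h.finite_zeroSlice h₁₂ hbc₁ hbc₂ hv hs) ?_ fun x hx U hU =>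
      h.eventually_zeroSlice_inter_nonempty h₁₂ hbc₁ hbc₂ hv hs hx hU
    filter_upwards [nhdsWithin_le_nhds (Ioo_mem_nhds hs.1 hs.2)] with t ht
    exact h.finite_zeroSlice h₁₂ hbc₁ hbc₂ hv ht

theorem ncard_zeroSlice_lt {r : ℝ} (hr : t₀ < r) (hrs : r < s) (hst : s < t) (ht : t < t₁)
    (hx : x ∈ Ioo x₁ x₂) (hzero : v (x, s) = 0) (hX : dX Q v (x, s) = 0) :
    (zeroSlice (Icc x₁ x₂) v t).ncard < (zeroSlice (Icc x₁ x₂) v r).ncard := by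
  have hanti := h.antitoneOn_ncard_zeroSlice h₁₂ hbc₁ hbc₂ hv
  have hfin {u : ℝ} (hu : u ∈ Ioo t₀ t₁) := h.finite_zeroSlice h₁₂ hbc₁ hbc₂ hv hu
  have hrI : r ∈ Ioo t₀ t₁ := ⟨hr, hrs.trans (hst.trans ht)⟩
  have hsI : s ∈ Ioo t₀ t₁ := ⟨hr.trans hrs, hst.trans ht⟩
  have htI : t ∈ Ioo t₀ t₁ := ⟨hsI.1.trans hst, ht⟩
  have hdrop : ∀ᶠ u in 𝓝[<] s,
      (zeroSlice (Icc x₁ x₂) v s).ncard < (zeroSlice (Icc x₁ x₂) v u).ncard := by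
    refine eventually_lt_ncard (hfin hsI) ?_
      (fun y hy U hU => h.eventually_zeroSlice_inter_nonempty h₁₂ hbc₁ hbc₂ hv hsI hy hU)
      ⟨Ioo_subset_Icc_self hx, hzero⟩
      fun U hU => h.eventually_zeroSlice_inter_nontrivial h₁₂ hbc₁ hbc₂ hv hsI hx hzero hX hU
    filter_upwards [nhdsWithin_le_nhds (Ioo_mem_nhds hsI.1 hsI.2)] with u hu using hfin hu
  obtain ⟨u, hu, hur⟩ := (hdrop.and (Ioo_mem_nhdsLT hrs)).exists
  have huI : u ∈ Ioo t₀ t₁ := ⟨hr.trans hur.1, hur.2.trans hsI.2⟩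
  calc (zeroSlice (Icc x₁ x₂) v t).ncard ≤ (zeroSlice (Icc x₁ x₂) v s).ncard :=
        hanti hsI htI hst.le
    _ < (zeroSlice (Icc x₁ x₂) v u).ncard := hu
    _ ≤ (zeroSlice (Icc x₁ x₂) v r).ncard := hanti hrI huI hur.1.le

end IsParabolicSolution

end ZeroCount

end ZeroNumber

theorem angenent_zero_number_lemma_general
    (x1 x2 t0 t1 : ℝ) (hx : x1 < x2) (a b c v : ℝ → ℝ → ℝ)
    (ha_smooth : ContDiffOn ℝ (⊤ : ℕ∞) (fun p : ℝ × ℝ => a p.1 p.2) (Icc x1 x2 ×ˢ Ioo t0 t1))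
    (hb_smooth : ContDiffOn ℝ (⊤ : ℕ∞) (fun p : ℝ × ℝ => b p.1 p.2) (Icc x1 x2 ×ˢ Ioo t0 t1))
    (hc_smooth : ContDiffOn ℝ (⊤ : ℕ∞) (fun p : ℝ × ℝ => c p.1 p.2) (Icc x1 x2 ×ˢ Ioo t0 t1))
    (ha_pos : ∀ x ∈ Icc x1 x2, ∀ t ∈ Ioo t0 t1, 0 < a x t)
    (hv_smooth : ContDiffOn ℝ (⊤ : ℕ∞) (fun p : ℝ × ℝ => v p.1 p.2) (Icc x1 x2 ×ˢ Ioo t0 t1))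
    (hpde : ∀ x ∈ Ioo x1 x2, ∀ t ∈ Ioo t0 t1,
      deriv (fun s => v x s) t =
        a x t * deriv (deriv (fun y => v y t)) x + b x t * deriv (fun y => v y t) x
          + c x t * v x t)
    (hbc1 : (∀ t ∈ Ioo t0 t1, v x1 t = 0) ∨ (∀ t ∈ Ioo t0 t1, v x1 t ≠ 0))
    (hbc2 : (∀ t ∈ Ioo t0 t1, v x2 t = 0) ∨ (∀ t ∈ Ioo t0 t1, v x2 t ≠ 0))
    (hnz : ¬ ∀ x ∈ Icc x1 x2, ∀ t ∈ Ioo t0 t1, v x t = 0) :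
    (∀ t ∈ Ioo t0 t1, {x ∈ Icc x1 x2 | v x t = 0}.Finite) ∧
    (∀ s ∈ Ioo t0 t1, ∀ t ∈ Ioo t0 t1, s ≤ t →
      {x ∈ Icc x1 x2 | v x t = 0}.ncard ≤ {x ∈ Icc x1 x2 | v x s = 0}.ncard) ∧
    (∀ x0 ∈ Ioo x1 x2, ∀ tstar ∈ Ioo t0 t1,
      v x0 tstar = 0 → deriv (fun y => v y tstar) x0 = 0 →
      ∀ s t : ℝ, t0 < s → s < tstar → tstar < t → t < t1 →
        {x ∈ Icc x1 x2 | v x t = 0}.ncard < {x ∈ Icc x1 x2 | v x s = 0}.ncard) := by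
  have h := ZeroNumber.isParabolicSolution_of_interior hx ha_smooth hb_smooth hc_smooth hv_smooth
    (fun q hq => ha_pos q.1 hq.1 q.2 hq.2) hpde
  refine ⟨fun t ht => h.finite_zeroSlice hx hbc1 hbc2 hnz ht,
    fun s hs t ht hst => h.antitoneOn_ncard_zeroSlice hx hbc1 hbc2 hnz hs ht hst, ?_⟩
  intro x0 hx0 tstar htstar hzero hderiv s t hs hst htt ht
  have hX := (ZeroNumber.hasDerivAt_dX hv_smooth htstar hx0).deriv.symm.trans hderiv
  exact h.ncard_zeroSlice_lt hx hbc1 hbc2 hnz hs hst htt ht hx0 hzero hX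

theorem angenent_zero_number_lemma
    (x1 x2 t0 t1 : ℝ) (hx : x1 < x2) (ht : t0 < t1)
    (a b c v : ℝ → ℝ → ℝ) (lam : ℝ) (hlam : 0 < lam)
    (ha_smooth : ContDiffOn ℝ (⊤ : ℕ∞) (fun p : ℝ × ℝ => a p.1 p.2) (Icc x1 x2 ×ˢ Ioo t0 t1))
    (hb_smooth : ContDiffOn ℝ (⊤ : ℕ∞) (fun p : ℝ × ℝ => b p.1 p.2) (Icc x1 x2 ×ˢ Ioo t0 t1))
    (hc_smooth : ContDiffOn ℝ (⊤ : ℕ∞) (fun p : ℝ × ℝ => c p.1 p.2) (Icc x1 x2 ×ˢ Ioo t0 t1))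
    (hbdd : ∃ C : ℝ, ∀ x ∈ Icc x1 x2, ∀ t ∈ Ioo t0 t1, |a x t| ≤ C ∧ |b x t| ≤ C ∧ |c x t| ≤ C)
    (hell : ∀ x ∈ Icc x1 x2, ∀ t ∈ Ioo t0 t1, lam ≤ a x t)
    (hv_smooth : ContDiffOn ℝ (⊤ : ℕ∞) (fun p : ℝ × ℝ => v p.1 p.2) (Icc x1 x2 ×ˢ Ioo t0 t1))
    (hpde : ∀ x ∈ Ioo x1 x2, ∀ t ∈ Ioo t0 t1,
      deriv (fun s => v x s) t =
        a x t * deriv (deriv (fun y => v y t)) x + b x t * deriv (fun y => v y t) x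
          + c x t * v x t)
    (hbc1 : (∀ t ∈ Ioo t0 t1, v x1 t = 0) ∨ (∀ t ∈ Ioo t0 t1, v x1 t ≠ 0))
    (hbc2 : (∀ t ∈ Ioo t0 t1, v x2 t = 0) ∨ (∀ t ∈ Ioo t0 t1, v x2 t ≠ 0))
    (hnz : ¬ ∀ x ∈ Icc x1 x2, ∀ t ∈ Ioo t0 t1, v x t = 0) :
    (∀ t ∈ Ioo t0 t1, {x ∈ Icc x1 x2 | v x t = 0}.Finite) ∧
    (∀ s ∈ Ioo t0 t1, ∀ t ∈ Ioo t0 t1, s ≤ t →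
      {x ∈ Icc x1 x2 | v x t = 0}.ncard ≤ {x ∈ Icc x1 x2 | v x s = 0}.ncard) ∧
    (∀ x0 ∈ Ioo x1 x2, ∀ tstar ∈ Ioo t0 t1,
      v x0 tstar = 0 → deriv (fun y => v y tstar) x0 = 0 →
      ∀ s t : ℝ, t0 < s → s < tstar → tstar < t → t < t1 →
        {x ∈ Icc x1 x2 | v x t = 0}.ncard < {x ∈ Icc x1 x2 | v x s = 0}.ncard) :=
  angenent_zero_number_lemma_general x1 x2 t0 t1 hx a b c v ha_smooth hb_smooth hc_smooth
    (fun x hx t ht => hlam.trans_le (hell x hx t ht)) hv_smooth hpde hbc1 hbc2 hnz
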